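/- arXiv:2311.10008 — 4 statements merged into one kernel-verified Lean document; each statement's English description precedes it below -/
import Mathlib

section
/- Let a, b be positive integers with gcd(a,b) = 1, a ≡ 17 (mod 18), b ≡ 11 (mod 18), and such that every prime dividing ab is congruent to 2 modulo 3. Then the equation a·u₁³ + a·u₂³ − 2b·u₃³ = b has a solution (u₁,u₂,u₃) ∈ ℤ_p³ for every prime p, but it has no solution (u₁,u₂,u₃) ∈ ℤ³. -/
/-!
Over `ℤ`, a solution factors as `a (x + y) N(α) = b (1 + 2 z ^ 3)`, where
`N(α) = x ^ 2 - x y + y ^ 2` is the norm of the Eisenstein integer `α = x + y ω`. A prime divisor of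
`N(α)` either divides `b`, hence is `2` mod `3` and inert in `ℤ[ω]`, or has `2` as a cube modulo it.
In the latter case, if it is `1` mod `3`, then by Gauss it is the norm of an element of the order
`ℤ + 6ℤ[ω]`, namely of a cubic Jacobi sum. So `α` is a unit times an element of that order, which
means that `6` divides `x`, `y` or `x - y`. The congruences on `a` and `b` rule this out.

Over `ℤ_p`, Hensel's lemma reduces the problem to the residue field. When `p` is `2` mod `3` every
element of it is a cube, and when `p` is `1` mod `3` the Cauchy–Davenport theorem shows that a
diagonal cubic form in three variables takes every value.
-/

theorem bijective_pow_of_coprime_natCard_units {G₀ : Type*} [GroupWithZero G₀] {n : ℕ} (hn : n ≠ 0)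
    (h : (Nat.card G₀ˣ).Coprime n) : Function.Bijective fun x : G₀ ↦ x ^ n := by
  have hunits : Function.Bijective fun u : G₀ˣ ↦ u ^ n := h.pow_left_bijective
  constructor
  · intro x y (hxy : x ^ n = y ^ n)
    by_cases hx : x = 0
    · subst hx
      exact ((pow_eq_zero_iff hn).mp (hxy.symm.trans (zero_pow hn))).symm
    · have hy : y ≠ 0 := fun hy ↦ hx (by simpa [hy, hn] using hxy)
      exact congrArg Units.val <| @hunits.1 (Units.mk0 x hx) (Units.mk0 y hy) (Units.ext hxy)
  · intro y
    by_cases hy : y = 0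
    · exact ⟨0, by simp [hy, hn]⟩
    · obtain ⟨u, hu⟩ := hunits.2 (Units.mk0 y hy)
      exact ⟨u, congrArg Units.val hu⟩

theorem bijective_cube_zmod {p : ℕ} [Fact p.Prime] (hp : p % 3 = 2) :
    Function.Bijective fun x : ZMod p ↦ x ^ 3 := by
  refine bijective_pow_of_coprime_natCard_units three_ne_zero ?_
  rw [Nat.card_eq_fintype_card, ZMod.card_units, Nat.coprime_comm,
    Nat.prime_three.coprime_iff_not_dvd]
  omega

theorem sum_eq_apply_of_involutive {ι M : Type*} [Fintype ι] [AddCommMonoid M] {f : ι → M}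
    (hf : ∀ x, f x + f x = 0) {g : ι → ι} (hg : Function.Involutive g)
    (hfg : ∀ x, f (g x) = f x) {a : ι} (ha : ∀ x, g x = x ↔ x = a) : ∑ x, f x = f a := by
  classical
  suffices ∑ x ∈ Finset.univ.erase a, f x = 0 by
    rw [← Finset.add_sum_erase _ _ (Finset.mem_univ a), this, add_zero]
  refine Finset.sum_involution (fun x _ ↦ g x) (fun x _ ↦ by rw [hfg, hf])
    (fun x hx _ ↦ (ha x).not.mpr (Finset.ne_of_mem_erase hx)) (fun x hx ↦ ?_) (fun x _ ↦ hg x)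
  refine Finset.mem_erase.mpr ⟨fun h ↦ Finset.ne_of_mem_erase hx ?_, Finset.mem_univ _⟩
  rw [← hg x, h, (ha a).mpr rfl]

section JacobiSum

variable {F R : Type*} [Field F] [Fintype F] [CommRing R]

theorem jacobiSum_self_of_two_eq_zero (hF : (2 : F) ≠ 0) (hR : (2 : R) = 0) (χ : MulChar F R) :
    jacobiSum χ χ = χ 2⁻¹ ^ 2 := by
  have hhalf : (1 : F) - 2⁻¹ = 2⁻¹ := by field_simp; norm_num
  rw [jacobiSum, sum_eq_apply_of_involutive (a := 2⁻¹) (fun x ↦ by rw [← two_mul, hR, zero_mul])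
    (sub_sub_cancel (1 : F)) (fun x ↦ by rw [sub_sub_cancel, mul_comm])
    (fun x ↦ by rw [sub_eq_iff_eq_add, ← mul_two, eq_comm, mul_eq_one_iff_eq_inv₀ hF]),
    hhalf, sq]

theorem two_dvd_jacobiSum_self_sub (hF : (2 : F) ≠ 0) (χ : MulChar F R) :
    2 ∣ jacobiSum χ χ - χ 2⁻¹ ^ 2 := by
  let φ := Ideal.Quotient.mk (Ideal.span {(2 : R)})
  have hφ : φ 2 = 0 := Ideal.Quotient.eq_zero_iff_mem.mpr (Ideal.mem_span_singleton_self 2)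
  rw [← Ideal.mem_span_singleton, ← Ideal.Quotient.eq_zero_iff_mem, map_sub, sub_eq_zero, map_pow,
    ← jacobiSum_ringHomComp,
    jacobiSum_self_of_two_eq_zero hF (by rwa [map_ofNat] at hφ)]
  rfl

theorem jacobiSum_mul_jacobiSum_inv_of_isDomain [IsDomain R] (h : ringChar R ≠ ringChar F)
    {χ φ : MulChar F R} (hχ : χ ≠ 1) (hφ : φ ≠ 1) (hχφ : χ * φ ≠ 1) :
    jacobiSum χ φ * jacobiSum χ⁻¹ φ⁻¹ = Fintype.card F := by
  let f := algebraMap R (FractionRing R)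
  have hf : Function.Injective f := IsFractionRing.injective R _
  have hchar : ringChar (FractionRing R) ≠ ringChar F := by
    have := charP_of_injective_ringHom hf (ringChar R)
    rwa [ringChar.eq (FractionRing R) (ringChar R)]
  have hne {ψ : MulChar F R} (hψ : ψ ≠ 1) : ψ.ringHomComp f ≠ 1 :=
    (MulChar.ringHomComp_ne_one_iff hf).mpr hψ
  apply hf
  rw [map_mul, map_natCast, ← jacobiSum_ringHomComp, ← jacobiSum_ringHomComp,
    ← MulChar.ringHomComp_inv, ← MulChar.ringHomComp_inv]
  exact jacobiSum_mul_jacobiSum_inv hchar (hne hχ) (hne hφ)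
    (by rw [← MulChar.ringHomComp_mul]; exact hne hχφ)

end JacobiSum

/-- The ring `ℤ[ω]` of Eisenstein integers, presented by `ω ^ 2 = -1 - ω`, so that `⟨x, y⟩` is
`x + yω` and `ω` is a primitive cube root of unity. -/
abbrev EisensteinInt := QuadraticAlgebra ℤ (-1) (-1)

namespace EisensteinInt

open QuadraticAlgebra

theorem four_mul_norm (α : EisensteinInt) :
    4 * norm α = (2 * α.re - α.im) ^ 2 + 3 * α.im ^ 2 := by
  rw [norm_def]
  ring

theorem norm_nonneg (α : EisensteinInt) : 0 ≤ norm α := by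
  nlinarith [four_mul_norm α]

theorem norm_eq_zero {α : EisensteinInt} : norm α = 0 ↔ α = 0 := by
  refine ⟨fun h ↦ ?_, fun h ↦ by rw [h, QuadraticAlgebra.norm_zero]⟩
  have hsum : (2 * α.re - α.im) ^ 2 + 3 * α.im ^ 2 = 0 := by rw [← four_mul_norm, h, mul_zero]
  have him : α.im = 0 := by nlinarith
  have hre : α.re = 0 := by nlinarith
  ext <;> assumption

instance : NoZeroDivisors EisensteinInt where
  eq_zero_or_eq_zero_of_mul_eq_zero {α β} h := by
    simpa only [map_mul, mul_eq_zero, norm_eq_zero] using norm_eq_zero.mpr h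

instance : IsDomain EisensteinInt := NoZeroDivisors.to_isDomain _

theorem isUnit_iff_norm_eq_one {α : EisensteinInt} : IsUnit α ↔ norm α = 1 := by
  rw [isUnit_iff_norm_isUnit, Int.isUnit_iff, or_iff_left]
  linarith [norm_nonneg α]

theorem re_mul_im_mul_sub_eq_zero_of_isUnit {α : EisensteinInt} (hα : IsUnit α) :
    α.re * α.im * (α.re - α.im) = 0 := by
  have hsum := four_mul_norm α
  rw [isUnit_iff_norm_eq_one.mp hα] at hsum
  have hlt : (α.im) ^ 2 < 2 := by nlinarith
  have hre : (α.re) ^ 2 < 2 := by nlinarith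
  have h1 : -1 ≤ α.im ∧ α.im ≤ 1 := ⟨by nlinarith, by nlinarith⟩
  obtain h | h | h : α.im = -1 ∨ α.im = 0 ∨ α.im = 1 := by lia
  all_goals rw [h] at hsum ⊢; nlinarith

theorem natCast_dvd_iff {n : ℕ} {α : EisensteinInt} :
    (n : EisensteinInt) ∣ α ↔ (n : ℤ) ∣ α.re ∧ (n : ℤ) ∣ α.im := by
  rw [← algebraMap_dvd_iff, map_natCast]

/-- The order `ℤ + fℤ[ω]` of conductor `f`, which measures the divisibility by `f` of the
`ω`-coordinate. -/
def order (f : ℤ) : Subring EisensteinInt where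
  carrier := {α | f ∣ α.im}
  mul_mem' {α β} hα hβ := by
    simp only [Set.mem_ofPred_eq, im_mul] at *
    exact dvd_add (dvd_add (hβ.mul_left _) (hα.mul_right _)) ((hα.mul_left _).mul_right _)
  one_mem' := by simp
  add_mem' hα hβ := dvd_add hα hβ
  zero_mem' := dvd_zero f
  neg_mem' := dvd_neg.mpr

theorem mem_order {f : ℤ} {α : EisensteinInt} : α ∈ order f ↔ f ∣ α.im := Iff.rfl

theorem star_mem_order {f : ℤ} {α : EisensteinInt} (hα : α ∈ order f) : star α ∈ order f := by
  rw [mem_order, im_star]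
  exact dvd_neg.mpr hα

theorem dvd_re_or_dvd_im_or_dvd_re_sub_im {f : ℤ} {α : EisensteinInt}
    (hα : α ∈ (order f).toSubmonoid ⊔ IsUnit.submonoid EisensteinInt) :
    f ∣ α.re ∨ f ∣ α.im ∨ f ∣ α.re - α.im := by
  obtain ⟨β, hβ : f ∣ β.im, ε, hε, rfl⟩ := Submonoid.mem_sup.mp hα
  have := re_mul_im_mul_sub_eq_zero_of_isUnit hε
  simp only [mul_eq_zero, or_assoc, sub_eq_zero] at this
  obtain ⟨k, hk⟩ := hβ
  rcases this with h | h | h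
  · exact .inl ⟨-k * ε.im, by rw [re_mul, h, hk]; ring⟩
  · exact .inr <| .inl ⟨k * ε.re, by rw [im_mul, h, hk]; ring⟩
  · exact .inr <| .inr ⟨-k * ε.im, by rw [re_mul, im_mul, h, hk]; ring⟩

theorem natCast_dvd_of_dvd_norm_of_dvd_im {p : ℕ} (hp : p.Prime) {α : EisensteinInt}
    (hnorm : (p : ℤ) ∣ norm α) (him : (p : ℤ) ∣ α.im) : (p : EisensteinInt) ∣ α := by
  refine natCast_dvd_iff.mpr ⟨?_, him⟩
  have hsq : α.re ^ 2 = norm α - α.im * (α.im - α.re) := by rw [norm_def]; ring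
  exact Prime.dvd_of_dvd_pow (n := 2) (Nat.prime_iff_prime_int.mp hp)
    (hsq ▸ dvd_sub hnorm (him.mul_right _))

theorem natCast_dvd_of_dvd_norm {p : ℕ} (hp : p.Prime) (hmod : p % 3 = 2) {α : EisensteinInt}
    (h : (p : ℤ) ∣ norm α) : (p : EisensteinInt) ∣ α := by
  have : Fact p.Prime := ⟨hp⟩
  refine natCast_dvd_of_dvd_norm_of_dvd_im hp h ?_
  rw [← ZMod.intCast_zmod_eq_zero_iff_dvd]
  rw [← ZMod.intCast_zmod_eq_zero_iff_dvd, norm_def] at h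
  push_cast at h
  set c : ZMod p := (α.re : ZMod p)
  set d : ZMod p := (α.im : ZMod p)
  have hcd : -c = d := (bijective_cube_zmod hmod).1 (by linear_combination -(c + d) * h)
  have hd : 3 * d ^ 2 = 0 := by rw [← hcd] at h ⊢; linear_combination h
  have h3 : (3 : ZMod p) ≠ 0 := by
    rw [show (3 : ZMod p) = (3 : ℕ) by norm_num, Ne, ZMod.natCast_eq_zero_iff,
      Nat.prime_dvd_prime_iff_eq hp Nat.prime_three]
    lia
  simpa [h3] using hd

theorem dvd_of_dvd_im_mul_star {p : ℕ} (hp : p.Prime) {π α : EisensteinInt} (hπ : norm π = p)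
    (hα : (p : ℤ) ∣ norm α) (him : (p : ℤ) ∣ (α * star π).im) : π ∣ α := by
  have hπ0 : π ≠ 0 := by
    rintro rfl
    exact hp.ne_zero (by simpa using hπ.symm)
  have hdvd : (p : EisensteinInt) ∣ α * star π :=
    natCast_dvd_of_dvd_norm_of_dvd_im hp (by rw [map_mul]; exact hα.mul_right _) him
  rw [← Int.cast_natCast, ← hπ, ← eq_intCast (algebraMap ℤ EisensteinInt),
    algebraMap_norm_eq_mul_star] at hdvd
  exact (mul_dvd_mul_iff_right (star_ne_zero.mpr hπ0)).mp hdvd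

theorem dvd_or_star_dvd {p : ℕ} (hp : p.Prime) {π α : EisensteinInt} (hπ : norm π = p)
    (hα : (p : ℤ) ∣ norm α) : π ∣ α ∨ star π ∣ α := by
  have him : (p : ℤ) ∣ (α * star π).im * (α * star (star π)).im := by
    have : (α * star π).im * (α * star (star π)).im =
        α.im ^ 2 * norm π - π.im ^ 2 * norm α := by
      simp only [star_star, im_mul, re_star, im_star, norm_def]
      ring
    rw [this, hπ]
    exact dvd_sub (dvd_mul_left _ _) (hα.mul_left _)
  exact ((Nat.prime_iff_prime_int.mp hp).dvd_or_dvd him).imp (dvd_of_dvd_im_mul_star hp hπ hα)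
    (dvd_of_dvd_im_mul_star hp ((QuadraticAlgebra.norm_star π).trans hπ) hα)

theorem exists_mem_order_dvd {f : ℤ} {p : ℕ} (hp : p.Prime)
    (hf : p % 3 = 2 ∨ ∃ π ∈ order f, norm π = p) {α : EisensteinInt} (h : (p : ℤ) ∣ norm α) :
    ∃ γ ∈ order f, γ ∣ α ∧ 1 < norm γ := by
  have hp1 : (1 : ℤ) < p := mod_cast hp.one_lt
  rcases hf with hmod | ⟨π, hπf, hπ⟩
  · refine ⟨p, natCast_mem _ p, natCast_dvd_of_dvd_norm hp hmod h, ?_⟩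
    rw [QuadraticAlgebra.norm_natCast]
    exact one_lt_pow₀ hp1 two_ne_zero
  · rcases dvd_or_star_dvd hp hπ h with hdvd | hdvd
    · exact ⟨π, hπf, hdvd, hπ ▸ hp1⟩
    · exact ⟨star π, star_mem_order hπf, hdvd, by rwa [QuadraticAlgebra.norm_star, hπ]⟩

-- Unique factorization is avoided: factors lying in the order are split off from `α` one prime
-- divisor of its norm at a time.
theorem mem_order_sup_isUnit {f : ℤ} {α : EisensteinInt}
    (hα : ∀ p : ℕ, p.Prime → (p : ℤ) ∣ norm α → p % 3 = 2 ∨ ∃ π ∈ order f, norm π = p) :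
    α ∈ (order f).toSubmonoid ⊔ IsUnit.submonoid EisensteinInt := by
  induction hn : (norm α).natAbs using Nat.strong_induction_on generalizing α with
  | h n ih =>
    by_cases hα0 : α = 0
    · exact Submonoid.mem_sup_left (hα0 ▸ zero_mem (order f))
    by_cases hα1 : n = 1
    · exact Submonoid.mem_sup_right <| isUnit_iff_norm_isUnit.mpr <| Int.isUnit_iff_natAbs_eq.mpr <|
        hn.trans hα1
    obtain ⟨p, hp, hpn⟩ := Nat.exists_prime_and_dvd hα1
    have hpα : (p : ℤ) ∣ norm α := Int.natCast_dvd.mpr (hn ▸ hpn)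
    obtain ⟨γ, hγ, ⟨β, rfl⟩, hγ1⟩ := exists_mem_order_dvd hp (hα p hp hpα) hpα
    refine mul_mem (Submonoid.mem_sup_left hγ)
      (ih _ ?_ (fun q hq hqβ ↦ hα q hq (hqβ.trans (map_dvd _ (dvd_mul_left β γ)))) rfl)
    rw [← hn, map_mul, Int.natAbs_mul]
    exact lt_mul_left (Int.natAbs_pos.mpr (norm_eq_zero.not.mpr (right_ne_zero_of_mul hα0)))
      (by lia)

theorem isPrimitiveRoot_omega : IsPrimitiveRoot (ω : EisensteinInt) 3 := by
  rw [IsPrimitiveRoot.iff_orderOf]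
  refine orderOf_eq_prime ?_ fun h ↦ ?_
  · ext <;> simp [pow_succ]
  · simpa using congrArg im h

theorem ringHomComp_starRingEnd {M : Type*} [CommMonoid M] (χ : MulChar M EisensteinInt) :
    χ.ringHomComp (starRingEnd EisensteinInt) = χ⁻¹ := by
  refine eq_inv_of_mul_eq_one_right (MulChar.ext fun u ↦ ?_)
  rw [MulChar.mul_apply, MulChar.ringHomComp_apply, starRingEnd_apply,
    ← algebraMap_norm_eq_mul_star, isUnit_iff_norm_eq_one.mp (u.isUnit.map χ), map_one,
    MulChar.one_apply_coe]

section JacobiSum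

variable {F : Type*} [Field F] [Fintype F] {χ φ : MulChar F EisensteinInt}

theorem norm_jacobiSum (hχ : χ ≠ 1) (hφ : φ ≠ 1) (hχφ : χ * φ ≠ 1) :
    norm (jacobiSum χ φ) = Fintype.card F := by
  have hchar : ringChar EisensteinInt ≠ ringChar F := by
    rw [ringChar.eq_zero]
    exact (CharP.ringChar_ne_zero_of_finite F).symm
  apply algebraMap_injective (R := ℤ) (a := -1) (b := -1)
  rw [algebraMap_norm_eq_mul_star, ← starRingEnd_apply, ← jacobiSum_ringHomComp,
    ringHomComp_starRingEnd, ringHomComp_starRingEnd,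
    jacobiSum_mul_jacobiSum_inv_of_isDomain hchar hχ hφ hχφ, map_natCast]

theorem three_dvd_im_jacobiSum (hF : 3 ∣ Fintype.card F - 1) (hχ : χ ^ 3 = 1) (hφ : φ ^ 3 = 1) :
    3 ∣ (jacobiSum χ φ).im := by
  obtain ⟨z, -, hz⟩ :=
    exists_jacobiSum_eq_neg_one_add (by norm_num) hχ hφ hF isPrimitiveRoot_omega
  have hsq : (ω - 1 : EisensteinInt) ^ 2 = -3 * ω := by
    ext <;> simp [sq]
  rw [hz, hsq]
  simp

theorem two_dvd_im_jacobiSum_self (hF : (2 : F) ≠ 0) (hχ : χ ^ 3 = 1) {y : F} (hy : y ^ 3 = 2) :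
    2 ∣ (jacobiSum χ χ).im := by
  have hy0 : y ≠ 0 := by
    rintro rfl
    exact hF (by simpa using hy.symm)
  have hχ2 : χ 2⁻¹ = 1 := by
    rw [← hy, ← inv_pow, map_pow, ← MulChar.pow_apply' _ three_ne_zero, hχ,
      MulChar.one_apply (isUnit_iff_ne_zero.mpr (inv_ne_zero hy0))]
  have h := two_dvd_jacobiSum_self_sub hF χ
  rw [hχ2, one_pow, ← map_ofNat (algebraMap ℤ EisensteinInt), algebraMap_dvd_iff] at h
  simpa using h.2

-- For `#F = p`, as `4 N(x + 6yω) = (2x - 6y) ^ 2 + 108 y ^ 2`, this says that `p` has the form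
-- `u ^ 2 + 27 v ^ 2`. The factor `3` of the conductor comes from `J(χ, χ) ≡ -1 mod (ω - 1) ^ 2`,
-- the factor `2` from the involution `x ↦ 1 - x` on the terms of the sum, with fixed point `1 / 2`.
theorem exists_mem_order_six_norm_eq_card (hcard : Fintype.card F % 3 = 1) (hF : (2 : F) ≠ 0)
    {y : F} (hy : y ^ 3 = 2) : ∃ π ∈ order 6, norm π = Fintype.card F := by
  have hdvd : 3 ∣ Fintype.card F - 1 := by lia
  obtain ⟨χ, hχ⟩ := MulChar.exists_mulChar_orderOf F hdvd isPrimitiveRoot_omega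
  have hχ1 : χ ≠ 1 := by rintro rfl; simp at hχ
  have hχχ : χ * χ ≠ 1 := by
    rw [← sq]
    exact pow_ne_one_of_lt_orderOf two_ne_zero (by lia)
  have hχ3 : χ ^ 3 = 1 := hχ ▸ pow_orderOf_eq_one χ
  have h6 : (6 : ℤ) ∣ (jacobiSum χ χ).im := by
    have := two_dvd_im_jacobiSum_self hF hχ3 hy
    have := three_dvd_im_jacobiSum hdvd hχ3 hχ3
    lia
  exact ⟨_, h6, norm_jacobiSum hχ1 hχ1 hχχ⟩

end JacobiSum

end EisensteinInt

/-- Solubility over `R` of the affine cubic equation `a * x ^ 3 + a * y ^ 3 - 2 * b * z ^ 3 = b`. -/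
def IsSoluble {R : Type*} [CommRing R] (a b : R) : Prop :=
  ∃ x y z : R, a * x ^ 3 + a * y ^ 3 - 2 * b * z ^ 3 = b

section IntegralObstruction

theorem three_dvd_sub_and_not_three_dvd {x y z : ℤ} (h : 9 ∣ x ^ 3 + y ^ 3 + 4 * z ^ 3 + 2) :
    3 ∣ x - y ∧ ¬ 3 ∣ x := by
  have hcube (t : ℤ) : 9 ∣ t ^ 3 - (t % 3) ^ 3 := by
    have := dvd_sub_pow_of_dvd_sub (p := 3) (Int.dvd_self_sub_emod (m := 3) (x := t)) 1
    simpa using this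
  have hmod (t : ℤ) : t % 3 = 0 ∨ t % 3 = 1 ∨ t % 3 = 2 := by lia
  have hx := hcube x
  have hy := hcube y
  have hz := hcube z
  rcases hmod x with h₁ | h₁ | h₁ <;> rcases hmod y with h₂ | h₂ | h₂ <;>
    rcases hmod z with h₃ | h₃ | h₃ <;> rw [h₁] at hx <;> rw [h₂] at hy <;> rw [h₃] at hz <;> lia

theorem nine_dvd_of_mul_eq_mul {a b x y z : ℤ} (ha : ¬ 3 ∣ a) (hab : 9 ∣ 2 * a + b)
    (h : a * (x ^ 3 + y ^ 3) = b * (1 + 2 * z ^ 3)) :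
    9 ∣ x ^ 3 + y ^ 3 + 4 * z ^ 3 + 2 := by
  have hcop : IsCoprime (9 : ℤ) a := by
    simpa using ((Int.prime_three.coprime_iff_not_dvd).mpr ha).pow_left (m := 2)
  refine hcop.dvd_of_dvd_mul_left ?_
  have : a * (x ^ 3 + y ^ 3 + 4 * z ^ 3 + 2) = (2 * a + b) * (1 + 2 * z ^ 3) := by
    linear_combination h
  exact this ▸ hab.mul_right _

open QuadraticAlgebra EisensteinInt

theorem mod_three_eq_two_or_exists_mem_order_six {p : ℕ} (hp : p.Prime) (hp3 : p ≠ 3) {z : ℤ}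
    (h : (p : ℤ) ∣ 1 + 2 * z ^ 3) : p % 3 = 2 ∨ ∃ π ∈ order 6, norm π = p := by
  have : Fact p.Prime := ⟨hp⟩
  have hmod : p % 3 = 1 ∨ p % 3 = 2 := by
    have := (Nat.prime_dvd_prime_iff_eq Nat.prime_three hp).not.mpr hp3.symm
    lia
  refine hmod.symm.imp_right fun hp1 ↦ ?_
  rw [← ZMod.intCast_zmod_eq_zero_iff_dvd] at h
  push_cast at h
  have h2 : (2 : ZMod p) ≠ 0 := by
    rintro h2
    simp [h2] at h
  have hcube : (-(z : ZMod p)⁻¹) ^ 3 = 2 := by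
    have hz : (z : ZMod p) ≠ 0 := by
      rintro hz
      simp [hz] at h
    field_simp
    linear_combination -h
  simpa only [ZMod.card] using
    exists_mem_order_six_norm_eq_card (F := ZMod p) (by rwa [ZMod.card]) h2 hcube

theorem mk_mem_order_six_sup_isUnit {a b x y z : ℤ}
    (hprime : ∀ p : ℕ, p.Prime → (p : ℤ) ∣ b → p % 3 = 2) (hxy : 3 ∣ x - y) (hx : ¬ 3 ∣ x)
    (h : a * (x ^ 3 + y ^ 3) = b * (1 + 2 * z ^ 3)) :
    (⟨x, y⟩ : EisensteinInt) ∈ (order 6).toSubmonoid ⊔ IsUnit.submonoid EisensteinInt := by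
  have hnorm : norm (⟨x, y⟩ : EisensteinInt) = x ^ 2 - y * (x - y) := by rw [norm_def]; ring
  have hfactor : a * (x + y) * norm (⟨x, y⟩ : EisensteinInt) = b * (1 + 2 * z ^ 3) := by
    rw [hnorm, ← h]
    ring
  have h3 : ¬ 3 ∣ norm (⟨x, y⟩ : EisensteinInt) := by
    rw [hnorm, dvd_sub_left (hxy.mul_left y)]
    exact fun h ↦ hx (Int.prime_three.dvd_of_dvd_pow h)
  refine mem_order_sup_isUnit fun p hp hpα ↦ ?_
  have hpb : (p : ℤ) ∣ b * (1 + 2 * z ^ 3) := hfactor ▸ hpα.mul_left _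
  rcases (Nat.prime_iff_prime_int.mp hp).dvd_or_dvd hpb with hpb | hpz
  · exact .inl (hprime p hp hpb)
  · exact mod_three_eq_two_or_exists_mem_order_six hp (by rintro rfl; exact h3 hpα) hpz

theorem not_isSoluble_int {a b : ℤ} (hb : Odd b) (hab : 9 ∣ 2 * a + b)
    (hprime : ∀ p : ℕ, p.Prime → (p : ℤ) ∣ b → p % 3 = 2) : ¬ IsSoluble a b := by
  rintro ⟨x, y, z, h⟩
  replace h : a * (x ^ 3 + y ^ 3) = b * (1 + 2 * z ^ 3) := by linear_combination h
  have ha : ¬ 3 ∣ a := fun ha ↦ absurd (hprime 3 Nat.prime_three (by lia)) (by norm_num)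
  obtain ⟨hxy, hx⟩ := three_dvd_sub_and_not_three_dvd (nine_dvd_of_mul_eq_mul ha hab h)
  have hodd : Odd (x + y) := by
    have : Odd (a * (x ^ 3 + y ^ 3)) := h ▸ hb.mul (odd_one.add_even (even_two_mul _))
    have := (Int.odd_mul.mp this).2
    simpa [Int.odd_add, Int.odd_pow, Int.even_pow] using this
  rw [Int.odd_iff] at hodd
  obtain h6 | h6 | h6 :=
    dvd_re_or_dvd_im_or_dvd_re_sub_im (mk_mem_order_six_sup_isUnit hprime hxy hx h) <;>
    dsimp only at h6 <;> lia

end IntegralObstruction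

section DiagonalForms

open Pointwise Finset

theorem card_sub_one_le_mul_card_image_mul_pow_sub_one {F : Type*} [Field F] [Fintype F]
    [DecidableEq F] {n : ℕ} (hn : n ≠ 0) {e : F} (he : e ≠ 0) :
    Fintype.card F - 1 ≤ n * (#(univ.image fun x : F ↦ e * x ^ n) - 1) := by
  have h0 : 0 ∈ univ.image fun x : F ↦ e * x ^ n := mem_image.mpr ⟨0, mem_univ 0, by simp [hn]⟩
  rw [← card_univ, ← card_erase_of_mem (mem_univ 0), ← card_erase_of_mem h0]
  refine card_le_mul_card_image_of_maps_to (f := fun x ↦ e * x ^ n) (fun x hx ↦ ?_) n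
    fun b _ ↦ ?_
  · exact mem_erase.mpr ⟨mul_ne_zero he (pow_ne_zero n (ne_of_mem_erase hx)),
      mem_image_of_mem _ (mem_univ x)⟩
  · refine le_trans ?_ ((Multiset.toFinset_card_le _).trans (Polynomial.card_nthRoots n (b / e)))
    refine card_le_card fun x hx ↦ ?_
    rw [Multiset.mem_toFinset, Polynomial.mem_nthRoots (Nat.pos_of_ne_zero hn), eq_div_iff he,
      mul_comm]
    exact (mem_filter.mp hx).2

theorem min_sum_card_sub_one_add_one_le_card_sum {p : ℕ} (hp : p.Prime) {ι : Type*}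
    {A : ι → Finset (ZMod p)} (hA : ∀ i, (A i).Nonempty) (s : Finset ι) :
    min p (∑ i ∈ s, (#(A i) - 1) + 1) ≤ #(∑ i ∈ s, A i) := by
  classical
  induction s using Finset.induction_on with
  | empty => simp
  | insert i s hi ih =>
    have hs : (∑ i ∈ s, A i).Nonempty := by
      have := hp.pos
      exact card_pos.mp (by lia)
    have hcd := ZMod.cauchy_davenport hp (hA i) hs
    have := (hA i).card_pos
    rw [sum_insert hi, sum_insert hi]
    lia

theorem exists_sum_mul_pow_eq_zmod {p : ℕ} [Fact p.Prime] {ι : Type*} [Fintype ι] {n : ℕ}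
    (hn : n ≠ 0) (hι : n ≤ Fintype.card ι) {e : ι → ZMod p} (he : ∀ i, e i ≠ 0) (c : ZMod p) :
    ∃ x : ι → ZMod p, ∑ i, e i * x i ^ n = c := by
  let A (i : ι) : Finset (ZMod p) := univ.image fun x ↦ e i * x ^ n
  have hp : p.Prime := Fact.out
  have hsum : p - 1 ≤ ∑ i, (#(A i) - 1) := by
    refine Nat.le_of_mul_le_mul_left ?_ (Nat.pos_of_ne_zero hn)
    calc n * (p - 1) ≤ Fintype.card ι * (p - 1) := Nat.mul_le_mul_right _ hι
      _ = ∑ _i : ι, (p - 1) := by rw [sum_const, card_univ, smul_eq_mul]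
      _ ≤ ∑ i, n * (#(A i) - 1) := sum_le_sum fun i _ ↦ by
        simpa only [ZMod.card] using card_sub_one_le_mul_card_image_mul_pow_sub_one hn (he i)
      _ = n * ∑ i, (#(A i) - 1) := (mul_sum _ _ _).symm
  have hcard := min_sum_card_sub_one_add_one_le_card_sum hp (A := A)
    (fun i ↦ univ_nonempty.image _) univ
  have huniv : ∑ i, A i = univ := by
    refine eq_univ_of_card _ (le_antisymm (card_le_univ _) ?_)
    rw [ZMod.card]
    have := hp.pos
    lia
  have hc : c ∈ ∑ i, (A i : Set (ZMod p)) := by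
    rw [← coe_sum, huniv]
    exact mem_coe.mpr (mem_univ c)
  obtain ⟨g, hg, hgc⟩ := (Set.mem_fintype_sum _ _).mp hc
  choose x hx using fun i ↦ mem_image.mp (hg i)
  exact ⟨x, by simp only [(hx _).2, hgc]⟩

end DiagonalForms

section Padic

variable {p : ℕ} [Fact p.Prime]

theorem toZMod_ne_zero_iff_isUnit {x : ℤ_[p]} : PadicInt.toZMod x ≠ 0 ↔ IsUnit x := by
  have : IsLocalHom (PadicInt.toZMod (p := p)) :=
    .of_surjective _ (ZMod.ringHom_surjective _)
  rw [← isUnit_iff_ne_zero, isUnit_map_iff]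

theorem isUnit_intCast_iff_not_dvd {k : ℤ} : IsUnit (k : ℤ_[p]) ↔ ¬ (p : ℤ) ∣ k := by
  rw [← PadicInt.norm_int_lt_one_iff_dvd, ← PadicInt.not_isUnit_iff, not_not]

theorem exists_mul_pow_eq_of_norm_lt {n : ℕ} {e c x₀ : ℤ_[p]}
    (h : ‖e * x₀ ^ n - c‖ < ‖e * (n * x₀ ^ (n - 1))‖ ^ 2) : ∃ x, e * x ^ n = c := by
  open Polynomial in
  obtain ⟨x, hx, -⟩ := hensels_lemma (F := C e * X ^ n - C c) (a := x₀)
    (by simpa [derivative_X_pow] using h)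
  exact ⟨x, by simpa [sub_eq_zero] using hx⟩

theorem exists_mul_pow_eq_of_toZMod {n : ℕ} (hn : (n : ZMod p) ≠ 0) {e c : ℤ_[p]} (he : IsUnit e)
    {x₀ : ZMod p} (hx₀ : x₀ ≠ 0) (h : PadicInt.toZMod e * x₀ ^ n = PadicInt.toZMod c) :
    ∃ x, e * x ^ n = c := by
  obtain ⟨x₀, rfl⟩ := ZMod.ringHom_surjective (PadicInt.toZMod (p := p)) x₀
  refine exists_mul_pow_eq_of_norm_lt (x₀ := x₀) ?_
  have hunit : IsUnit (e * (n * x₀ ^ (n - 1))) := by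
    refine he.mul (.mul ?_ ((toZMod_ne_zero_iff_isUnit.mp hx₀).pow _))
    rwa [← toZMod_ne_zero_iff_isUnit, map_natCast]
  rw [PadicInt.isUnit_iff.mp hunit, one_pow, ← PadicInt.not_isUnit_iff,
    ← toZMod_ne_zero_iff_isUnit, not_not, map_sub, map_mul, map_pow, h, sub_self]

theorem exists_mul_cube_eq_of_mod_three_eq_two (hp : p % 3 = 2) {e c : ℤ_[p]} (he : IsUnit e)
    (hc : IsUnit c) : ∃ x, e * x ^ 3 = c := by
  have he' := toZMod_ne_zero_iff_isUnit.mpr he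
  obtain ⟨x₀, hx₀ : x₀ ^ 3 = _⟩ :=
    (bijective_cube_zmod hp).2 (PadicInt.toZMod c / PadicInt.toZMod e)
  have h3 : ((3 : ℕ) : ZMod p) ≠ 0 := by
    rw [Ne, ZMod.natCast_eq_zero_iff, Nat.prime_dvd_prime_iff_eq Fact.out Nat.prime_three]
    lia
  refine exists_mul_pow_eq_of_toZMod h3 he (x₀ := x₀) ?_ (by rw [hx₀, mul_div_cancel₀ _ he'])
  rintro rfl
  exact div_ne_zero (toZMod_ne_zero_iff_isUnit.mpr hc) he' (by simpa using hx₀.symm)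

theorem exists_mul_cube_eq_of_nine_dvd_sub {e c : ℤ_[3]} (he : IsUnit e) (h : 9 ∣ c - e) :
    ∃ x, e * x ^ 3 = c := by
  obtain ⟨t, ht⟩ := h
  obtain ⟨s, rfl⟩ := he.dvd (a := t)
  have hnorm3 : ‖(3 : ℤ_[3])‖ = 3⁻¹ := by simpa using PadicInt.norm_p (p := 3)
  have hunit : IsUnit (1 + 3 * s) := by
    rw [← toZMod_ne_zero_iff_isUnit, map_add, map_mul, map_one, map_ofNat,
      show (3 : ZMod 3) = 0 from rfl]
    simp
  have herror : e * (1 + 3 * s) ^ 3 - c = 3 ^ 3 * (e * (s ^ 2 + s ^ 3)) := by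
    linear_combination -ht
  have hderiv : ‖e * ((3 : ℕ) * (1 + 3 * s) ^ (3 - 1))‖ = 3⁻¹ := by
    rw [norm_mul, norm_mul, PadicInt.isUnit_iff.mp he, PadicInt.isUnit_iff.mp (hunit.pow _),
      Nat.cast_ofNat, hnorm3, one_mul, mul_one]
  refine exists_mul_pow_eq_of_norm_lt (x₀ := 1 + 3 * s) ?_
  rw [herror, hderiv, norm_mul, norm_pow, hnorm3]
  calc (3⁻¹ : ℝ) ^ 3 * ‖e * (s ^ 2 + s ^ 3)‖
    _ ≤ 3⁻¹ ^ 3 * 1 := by gcongr; exact PadicInt.norm_le_one _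
    _ < 3⁻¹ ^ 2 := by norm_num

theorem exists_sum_mul_pow_eq_of_isUnit {ι : Type*} [Fintype ι] {n : ℕ} (hn : (n : ZMod p) ≠ 0)
    (hι : n ≤ Fintype.card ι) {e : ι → ℤ_[p]} (he : ∀ i, IsUnit (e i)) {c : ℤ_[p]}
    (hc : IsUnit c) : ∃ u : ι → ℤ_[p], ∑ i, e i * u i ^ n = c := by
  classical
  have hn0 : n ≠ 0 := by rintro rfl; simp at hn
  obtain ⟨x, hx⟩ := exists_sum_mul_pow_eq_zmod hn0 hι (fun i ↦ toZMod_ne_zero_iff_isUnit.mpr (he i))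
    (PadicInt.toZMod c)
  obtain ⟨i, hi⟩ : ∃ i, x i ≠ 0 := by
    by_contra! hx0
    exact toZMod_ne_zero_iff_isUnit.mpr hc (by simp [← hx, hx0, hn0])
  choose v hv using fun j ↦ ZMod.ringHom_surjective (PadicInt.toZMod (p := p)) (x j)
  obtain ⟨w, hw⟩ := exists_mul_pow_eq_of_toZMod (c := c - ∑ j ∈ Finset.univ.erase i, e j * v j ^ n)
    hn (he i) hi <| by
      rw [map_sub, ← hx, ← Finset.add_sum_erase _ _ (Finset.mem_univ i), map_sum]
      simp [hv]
  refine ⟨Function.update v i w, ?_⟩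
  rw [← Finset.add_sum_erase _ _ (Finset.mem_univ i), Function.update_self, hw,
    sub_add_eq_add_sub, sub_eq_iff_eq_add, add_right_inj]
  exact Finset.sum_congr rfl fun j hj ↦ by rw [Function.update_of_ne (Finset.ne_of_mem_erase hj)]

end Padic

section LocalSolubility

variable {p : ℕ} [Fact p.Prime]

theorem IsSoluble.of_isUnit_of_mod_three_eq_two {a b : ℤ_[p]} (hp : p % 3 = 2) (ha : IsUnit a)
    (hb : IsUnit b) : IsSoluble a b := by
  obtain ⟨x, hx⟩ := exists_mul_cube_eq_of_mod_three_eq_two hp ha hb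
  exact ⟨x, 0, 0, by linear_combination hx⟩

theorem IsSoluble.of_isUnit_two_of_mod_three_eq_two (hp : p % 3 = 2) (h2 : IsUnit (2 : ℤ_[p]))
    (a b : ℤ_[p]) : IsSoluble a b := by
  obtain ⟨z, hz⟩ := exists_mul_cube_eq_of_mod_three_eq_two hp h2 isUnit_one.neg
  exact ⟨1, -1, z, by linear_combination -b * hz⟩

theorem IsSoluble.of_nine_dvd {a b : ℤ_[3]} (ha : IsUnit a) (h : 9 ∣ 2 * a + b) :
    IsSoluble a b := by
  obtain ⟨x, hx⟩ := exists_mul_cube_eq_of_nine_dvd_sub (c := a + b) ha.neg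
    (by rwa [sub_neg_eq_add, add_right_comm, ← two_mul])
  exact ⟨-x, -1, 0, by linear_combination hx⟩

theorem IsSoluble.of_isUnit {a b : ℤ_[p]} (h2 : IsUnit (2 : ℤ_[p])) (h3 : IsUnit (3 : ℤ_[p]))
    (ha : IsUnit a) (hb : IsUnit b) : IsSoluble a b := by
  have hn : ((3 : ℕ) : ZMod p) ≠ 0 := by
    rwa [← map_natCast (PadicInt.toZMod (p := p)), toZMod_ne_zero_iff_isUnit]
  obtain ⟨u, hu⟩ := exists_sum_mul_pow_eq_of_isUnit hn (Fintype.card_fin 3).ge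
    (e := ![a, a, -(2 * b)]) (by simp [Fin.forall_fin_succ, ha, (h2.mul hb).neg]) hb
  refine ⟨u 0, u 1, u 2, ?_⟩
  simp only [Fin.sum_univ_three, Matrix.cons_val] at hu
  linear_combination hu

theorem isSoluble_padicInt {a b : ℤ} (ha : Odd a) (hb : Odd b) (hab : 9 ∣ 2 * a + b)
    (hprime : ∀ q : ℕ, q.Prime → (q : ℤ) ∣ a * b → q % 3 = 2) :
    IsSoluble (a : ℤ_[p]) (b : ℤ_[p]) := by
  have hunit (h : p % 3 ≠ 2) : IsUnit (a : ℤ_[p]) ∧ IsUnit (b : ℤ_[p]) := by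
    rw [isUnit_intCast_iff_not_dvd, isUnit_intCast_iff_not_dvd]
    exact ⟨fun hpa ↦ h (hprime p Fact.out (hpa.mul_right b)),
      fun hpb ↦ h (hprime p Fact.out (hpb.mul_left a))⟩
  have hne {q : ℕ} (hq : q.Prime) (h : p ≠ q) : IsUnit (q : ℤ_[p]) := by
    rw [← Int.cast_natCast, isUnit_intCast_iff_not_dvd, Int.natCast_dvd_natCast,
      Nat.prime_dvd_prime_iff_eq Fact.out hq]
    exact h
  obtain rfl | hp2 := eq_or_ne p 2
  · refine .of_isUnit_of_mod_three_eq_two rfl ?_ ?_ <;>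
      rw [isUnit_intCast_iff_not_dvd] <;> grind
  obtain rfl | hp3 := eq_or_ne p 3
  · refine .of_nine_dvd (hunit (by norm_num)).1 ?_
    exact_mod_cast (Int.castRingHom ℤ_[3]).map_dvd hab
  have h2 : IsUnit (2 : ℤ_[p]) := hne Nat.prime_two hp2
  by_cases hmod : p % 3 = 2
  · exact .of_isUnit_two_of_mod_three_eq_two hmod h2 _ _
  · exact .of_isUnit h2 (hne Nat.prime_three hp3) (hunit hmod).1 (hunit hmod).2

end LocalSolubility

theorem stmt_1_general (a b : ℤ) (ha : Odd a) (hb : Odd b) (hab : 9 ∣ 2 * a + b)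
    (hprime : ∀ p : ℕ, p.Prime → (p : ℤ) ∣ a * b → p % 3 = 2) :
    (∀ (p : ℕ) [Fact p.Prime],
      ∃ u₁ u₂ u₃ : ℤ_[p],
        (a : ℤ_[p]) * u₁ ^ 3 + (a : ℤ_[p]) * u₂ ^ 3 - 2 * (b : ℤ_[p]) * u₃ ^ 3 = (b : ℤ_[p])) ∧
    ¬ ∃ u₁ u₂ u₃ : ℤ, a * u₁ ^ 3 + a * u₂ ^ 3 - 2 * b * u₃ ^ 3 = b :=
  ⟨fun _ _ ↦ isSoluble_padicInt ha hb hab hprime,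
    not_isSoluble_int hb hab fun p hp hpb ↦ hprime p hp (hpb.mul_left a)⟩

/-- For positive coprime integers `a ≡ 17 (mod 18)`, `b ≡ 11 (mod 18)`
such that every prime dividing `ab` is `≡ 2 (mod 3)`, the equation
`a·u₁³ + a·u₂³ − 2b·u₃³ = b` is soluble over `ℤ_p` for every prime `p`,
but has no integral solution. -/
theorem stmt_1 (a b : ℤ) (ha : 0 < a) (hb : 0 < b) (hab : IsCoprime a b)
    (ha18 : a % 18 = 17) (hb18 : b % 18 = 11)
    (hprime : ∀ p : ℕ, p.Prime → (p : ℤ) ∣ a * b → p % 3 = 2) :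
    (∀ (p : ℕ) [Fact p.Prime],
      ∃ u₁ u₂ u₃ : ℤ_[p],
        (a : ℤ_[p]) * u₁ ^ 3 + (a : ℤ_[p]) * u₂ ^ 3 - 2 * (b : ℤ_[p]) * u₃ ^ 3 = (b : ℤ_[p])) ∧
    ¬ ∃ u₁ u₂ u₃ : ℤ, a * u₁ ^ 3 + a * u₂ ^ 3 - 2 * b * u₃ ^ 3 = b :=
  stmt_1_general a b (Int.odd_iff.mpr (by lia)) (Int.odd_iff.mpr (by lia)) (by lia) hprime
end

section
/- There is an absolute constant C > 0 such that for all real numbers X, Y, Z, W ≥ 2, the number of sextuples (k, ℓ, m, n, s, t) of positive integers satisfying k·ℓ·m ≤ X, k·n·s ≤ Y, ℓ·n·t ≤ Z and m·s·t ≤ W is at most C·(X·Y·Z·W)^{1/2}·(log(X·Y·Z·W))². -/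
/-!
Fix `k` and `ℓ`. For given `s` and `t` there are at most `min (Y / (k s)) (Z / (ℓ t))` values of
`n` and at most `min (X / (k ℓ)) (W / (s t))` values of `m`. For suitable scales `a` and `b`, the
product of these two minima is a constant times `min x⁻¹ y⁻¹ * min 1 (x y)⁻¹` at `x = s / a`,
`y = t / b`. Expanding the product gives four upper bounds, whose pairwise geometric means separate
the variables: it is at most `4 ω(x) ω(y)`, where `ω(x) = 1 / (√x (1 + x))` has finite integral over
`(0, ∞)`. The sum over `s` and `t` therefore costs no logarithm and is `O(√(XYZW) / (k ℓ))`; the two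
harmonic sums over `k` and `ℓ` give the factor `log²`.
-/

open Finset Real

lemma ncard_le_sum_mul {α ι : Type*} {S : Set α} {T : Finset ι} {p : α → ι} {u w : α → ℕ}
    {f g : ι → ℝ} (hf : ∀ i ∈ T, 0 ≤ f i) (hg : ∀ i ∈ T, 0 ≤ g i)
    (hinj : S.InjOn fun x => (p x, u x, w x)) (hp : ∀ x ∈ S, p x ∈ T)
    (hu : ∀ x ∈ S, 0 < u x ∧ u x ≤ f (p x)) (hw : ∀ x ∈ S, 0 < w x ∧ w x ≤ g (p x)) :
    (S.ncard : ℝ) ≤ ∑ i ∈ T, f i * g i := by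
  let U : Finset (Σ _ : ι, ℕ × ℕ) := T.sigma fun i => Icc 1 ⌊f i⌋₊ ×ˢ Icc 1 ⌊g i⌋₊
  have hSU : S.ncard ≤ U.card := by
    rw [← Set.ncard_coe_finset]
    refine Set.ncard_le_ncard_of_injOn (fun x => ⟨p x, u x, w x⟩) (fun x hx => ?_)
      (fun x hx y hy h => hinj hx hy (by simpa using h)) U.finite_toSet
    simp only [U, mem_coe, mem_sigma, mem_product, mem_Icc]
    exact ⟨hp x hx, ⟨(hu x hx).1, Nat.le_floor (hu x hx).2⟩, (hw x hx).1, Nat.le_floor (hw x hx).2⟩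
  calc (S.ncard : ℝ) ≤ U.card := mod_cast hSU
    _ = ∑ i ∈ T, (⌊f i⌋₊ : ℝ) * ⌊g i⌋₊ := by simp [U]
    _ ≤ ∑ i ∈ T, f i * g i := by
        gcongr with i hi
        exacts [hf i hi, Nat.floor_le (hf i hi), Nat.floor_le (hg i hi)]

lemma sum_inv_le_one_add_log {X : ℝ} (hX : 1 ≤ X) :
    ∑ k ∈ Icc 1 ⌊X⌋₊, (k : ℝ)⁻¹ ≤ 1 + log X := by
  simpa [harmonic_eq_sum_Icc] using harmonic_floor_le_one_add_log X hX

lemma one_add_log_le_log_mul {x y : ℝ} (hx : 0 < x) (hy : exp 1 ≤ y) :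
    1 + log x ≤ log (x * y) := by
  rw [log_mul hx.ne' ((exp_pos 1).trans_le hy).ne', add_comm, add_le_add_iff_left]
  exact (le_log_iff_exp_le ((exp_pos 1).trans_le hy)).2 hy

lemma mul_mul_sqrt_le_one {p c z α β : ℝ} (hp : 0 ≤ p) (hc : 0 ≤ c) (hz : 0 ≤ z) (hβ : 0 ≤ β)
    (hpα : p * α ≤ 1) (hpβ : p * β ≤ 1) (h : c ^ 2 * z = α * β) : p * c * √z ≤ 1 := by
  rw [← sq_le_one_iff₀ (by positivity), mul_pow, sq_sqrt hz]
  calc (p * c) ^ 2 * z = p ^ 2 * (c ^ 2 * z) := by ring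
    _ = p * α * (p * β) := by rw [h]; ring
    _ ≤ 1 := mul_le_one₀ hpα (by positivity) hpβ

-- At `u = √x`, the bounded function `u / (1 + u)` has derivative comparable to `1 / (√x (1 + x))`.
lemma sq_sub_sq_mul_inv_le_div_one_add_sub {u v : ℝ} (hv : 0 ≤ v) (hvu : v ≤ u) :
    (u ^ 2 - v ^ 2) * (u * (1 + u ^ 2))⁻¹ ≤ 4 * (u / (1 + u) - v / (1 + v)) := by
  obtain rfl | hu := (hv.trans hvu).eq_or_lt
  · simp [le_antisymm hvu hv]
  have hsplit : u / (1 + u) - v / (1 + v) = (u - v) / ((1 + u) * (1 + v)) := by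
    field_simp
    ring
  have hfactor : (u + v) * ((1 + u) * (1 + v)) ≤ 4 * (u * (1 + u ^ 2)) :=
    calc (u + v) * ((1 + u) * (1 + v)) ≤ (u + u) * ((1 + u) * (1 + u)) := by gcongr
      _ ≤ 4 * (u * (1 + u ^ 2)) := by nlinarith [mul_nonneg hu.le (sq_nonneg (u - 1))]
  rw [hsplit, ← div_eq_mul_inv, ← mul_div_assoc, div_le_div_iff₀ (by positivity) (by positivity)]
  calc (u ^ 2 - v ^ 2) * ((1 + u) * (1 + v)) = (u - v) * ((u + v) * ((1 + u) * (1 + v))) := by ring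
    _ ≤ (u - v) * (4 * (u * (1 + u ^ 2))) := by gcongr
    _ = 4 * (u - v) * (u * (1 + u ^ 2)) := by ring

/-- The weight `ω(x) = 1 / (√x (1 + x))`, the integrable factor into which the summand over
`s` and `t` is separated. Its value at `0` is the junk value `0⁻¹ = 0`. -/
noncomputable def sqrtWeight (x : ℝ) : ℝ := (√x * (1 + x))⁻¹

lemma sqrtWeight_nonneg {x : ℝ} (hx : 0 ≤ x) : 0 ≤ sqrtWeight x := by
  unfold sqrtWeight
  positivity

lemma min_inv_mul_min_inv_le_sqrtWeight_mul {x y : ℝ} (hx : 0 < x) (hy : 0 < y) :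
    min x⁻¹ y⁻¹ * min 1 (x * y)⁻¹ ≤ 4 * (sqrtWeight x * sqrtWeight y) := by
  set p := min x⁻¹ y⁻¹ * min 1 (x * y)⁻¹
  have hp : 0 ≤ p := by positivity
  have hpx : p * x ≤ 1 := by
    rw [← le_div_iff₀ hx, one_div]
    exact (mul_le_mul (min_le_left _ _) (min_le_left _ _) (by positivity) (by positivity)).trans_eq
      (mul_one _)
  have hpy : p * y ≤ 1 := by
    rw [← le_div_iff₀ hy, one_div]
    exact (mul_le_mul (min_le_right _ _) (min_le_left _ _) (by positivity) (by positivity)).trans_eq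
      (mul_one _)
  have hpxxy : p * (x * (x * y)) ≤ 1 := by
    rw [← le_div_iff₀ (by positivity), one_div, mul_inv]
    exact mul_le_mul (min_le_left _ _) (min_le_right _ _) (by positivity) (by positivity)
  have hpyxy : p * (y * (x * y)) ≤ 1 := by
    rw [← le_div_iff₀ (by positivity), one_div, mul_inv]
    exact mul_le_mul (min_le_right _ _) (min_le_right _ _) (by positivity) (by positivity)
  have hxy : 0 ≤ x * y := by positivity
  have hp_sqrt := mul_mul_sqrt_le_one hp zero_le_one hxy hy.le hpx hpy (by ring)
  have hpx_sqrt := mul_mul_sqrt_le_one hp hx.le hxy (by positivity) hpx hpxxy (by ring)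
  have hpy_sqrt := mul_mul_sqrt_le_one hp hy.le hxy (by positivity) hpy hpyxy (by ring)
  have hpxy_sqrt := mul_mul_sqrt_le_one hp hxy hxy (by positivity) hpxxy hpyxy (by ring)
  rw [sqrtWeight, sqrtWeight, ← mul_inv, mul_mul_mul_comm, ← sqrt_mul hx.le, ← div_eq_mul_inv,
    le_div_iff₀ (by positivity)]
  linarith

lemma sum_sqrtWeight_div_le {r : ℝ} (hr : 0 < r) (N : ℕ) :
    ∑ s ∈ Icc 1 N, sqrtWeight (s / r) ≤ 4 * r := by
  let g (n : ℕ) : ℝ := √(n / r) / (1 + √(n / r))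
  have increment (n : ℕ) : sqrtWeight ((n + 1 : ℕ) / r) ≤ 4 * r * (g (n + 1) - g n) := by
    have h := sq_sub_sq_mul_inv_le_div_one_add_sub (sqrt_nonneg ((n : ℝ) / r))
      (sqrt_le_sqrt (x := (n : ℝ) / r) (y := (n + 1 : ℕ) / r) (by gcongr; simp))
    rw [sq_sqrt (by positivity), sq_sqrt (by positivity), ← sub_div, Nat.cast_succ,
      add_sub_cancel_left, div_mul_eq_mul_div, one_mul, div_le_iff₀ hr] at h
    simp only [sqrtWeight, g, Nat.cast_succ]
    linarith
  have telescope : ∑ s ∈ Icc 1 N, sqrtWeight (s / r) ≤ 4 * r * g N := by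
    induction N with
    | zero => simp [g]
    | succ n ih =>
      rw [sum_Icc_succ_top (by lia)]
      linarith [increment n]
  have hg : g N ≤ 1 := div_le_one_of_le₀ (by linarith) (by positivity)
  exact telescope.trans (mul_le_of_le_one_right (by positivity) hg)

lemma sum_min_div_mul_min_one_le {a b : ℝ} (ha : 0 < a) (hb : 0 < b) (M N : ℕ) :
    ∑ s ∈ Icc 1 M, ∑ t ∈ Icc 1 N, min (a / s) (b / t) * min 1 (a * b / (s * t)) ≤
      64 * (a * b) := by
  calc ∑ s ∈ Icc 1 M, ∑ t ∈ Icc 1 N, min (a / s) (b / t) * min 1 (a * b / (s * t))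
      ≤ ∑ s ∈ Icc 1 M, ∑ t ∈ Icc 1 N, 4 * (sqrtWeight (s / a) * sqrtWeight (t / b)) := by
        refine sum_le_sum fun s hs => sum_le_sum fun t ht => ?_
        have hs0 : 0 < s := (mem_Icc.1 hs).1
        have ht0 : 0 < t := (mem_Icc.1 ht).1
        simpa only [inv_div, div_mul_div_comm] using
          min_inv_mul_min_inv_le_sqrtWeight_mul (x := s / a) (y := t / b)
            (by positivity) (by positivity)
    _ = 4 * ((∑ s ∈ Icc 1 M, sqrtWeight (s / a)) * ∑ t ∈ Icc 1 N, sqrtWeight (t / b)) := by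
        rw [sum_mul_sum]
        simp only [mul_sum]
    _ ≤ 4 * (4 * a * (4 * b)) := by
        gcongr
        · exact sum_nonneg fun t _ => sqrtWeight_nonneg (by positivity)
        · exact sum_sqrtWeight_div_le ha M
        · exact sum_sqrtWeight_div_le hb N
    _ = 64 * (a * b) := by ring

lemma sum_min_div_mul_min_le_sqrt {A B C W : ℝ} (hA : 0 < A) (hB : 0 < B) (hC : 0 < C)
    (hW : 0 < W) (M N : ℕ) :
    ∑ s ∈ Icc 1 M, ∑ t ∈ Icc 1 N, min (B / s) (C / t) * min A (W / (s * t)) ≤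
      64 * √(A * B * C * W) := by
  obtain ⟨a, b, c, ha, hb, hc, rfl, rfl, rfl⟩ :
      ∃ a b c, 0 < a ∧ 0 < b ∧ 0 < c ∧ B = c * a ∧ C = c * b ∧ W = A * (a * b) := by
    -- Eliminating `a = B / c` and `b = C / c` from `W = A a b` forces `c ^ 2 = A B C / W`.
    have hc2 : √(A * B * C / W) ^ 2 = A * B * C / W := sq_sqrt (by positivity)
    have hc : 0 < √(A * B * C / W) := by positivity
    refine ⟨B / √(A * B * C / W), C / √(A * B * C / W), √(A * B * C / W), by positivity,
      by positivity, hc, by field_simp, by field_simp, ?_⟩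
    rw [div_mul_div_comm, ← sq, hc2]
    field_simp
  have hroot : √(A * (c * a) * (c * b) * (A * (a * b))) = c * A * (a * b) := by
    rw [sqrt_eq_iff_mul_self_eq (by positivity) (by positivity)]
    ring
  calc ∑ s ∈ Icc 1 M, ∑ t ∈ Icc 1 N,
        min (c * a / s) (c * b / t) * min A (A * (a * b) / (s * t))
      = c * A * ∑ s ∈ Icc 1 M, ∑ t ∈ Icc 1 N,
          min (a / s) (b / t) * min 1 (a * b / (s * t)) := by
        simp only [mul_sum]
        refine sum_congr rfl fun s _ => sum_congr rfl fun t _ => ?_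
        rw [mul_mul_mul_comm, mul_min_of_nonneg _ _ hc.le, mul_min_of_nonneg _ _ hA.le, mul_one,
          mul_div_assoc, mul_div_assoc, mul_div_assoc]
    _ ≤ c * A * (64 * (a * b)) := by gcongr; exact sum_min_div_mul_min_one_le ha hb M N
    _ = 64 * √(A * (c * a) * (c * b) * (A * (a * b))) := by rw [hroot]; ring

lemma sum_sum_min_mul_min_le {X Y Z W : ℝ} (hX : 1 ≤ X) (hY : 0 < Y) (hZ : 0 < Z) (hW : 0 < W)
    (M N : ℕ) :
    ∑ k ∈ Icc 1 ⌊X⌋₊, ∑ l ∈ Icc 1 ⌊X⌋₊, ∑ s ∈ Icc 1 M, ∑ t ∈ Icc 1 N,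
      min (Y / k / s) (Z / l / t) * min (X / (k * l)) (W / (s * t)) ≤
      64 * √(X * Y * Z * W) * (1 + log X) ^ 2 := by
  have inner_le {k l : ℕ} (hk : k ∈ Icc 1 ⌊X⌋₊) (hl : l ∈ Icc 1 ⌊X⌋₊) :
      ∑ s ∈ Icc 1 M, ∑ t ∈ Icc 1 N,
        min (Y / k / s) (Z / l / t) * min (X / (k * l)) (W / (s * t)) ≤
        64 * √(X * Y * Z * W) * ((k : ℝ)⁻¹ * (l : ℝ)⁻¹) := by
    have hk0 : 0 < k := (mem_Icc.1 hk).1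
    have hl0 : 0 < l := (mem_Icc.1 hl).1
    have hroot : √(X / (k * l) * (Y / k) * (Z / l) * W) =
        √(X * Y * Z * W) * ((k : ℝ)⁻¹ * (l : ℝ)⁻¹) := by
      rw [← sqrt_sq (show 0 ≤ (k : ℝ)⁻¹ * (l : ℝ)⁻¹ by positivity), ← sqrt_mul (by positivity)]
      congr 1
      field_simp
    rw [mul_assoc, ← hroot]
    exact sum_min_div_mul_min_le_sqrt (by positivity) (by positivity) (by positivity) hW M N
  calc _ ≤ ∑ k ∈ Icc 1 ⌊X⌋₊, ∑ l ∈ Icc 1 ⌊X⌋₊,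
          64 * √(X * Y * Z * W) * ((k : ℝ)⁻¹ * (l : ℝ)⁻¹) :=
        sum_le_sum fun k hk => sum_le_sum fun l hl => inner_le hk hl
    _ = 64 * √(X * Y * Z * W) * (∑ k ∈ Icc 1 ⌊X⌋₊, (k : ℝ)⁻¹) ^ 2 := by
        rw [sq, sum_mul_sum]
        simp only [mul_sum]
    _ ≤ 64 * √(X * Y * Z * W) * (1 + log X) ^ 2 := by
        gcongr
        exact sum_inv_le_one_add_log hX

/-- The sextuples `(k, ℓ, m, n, s, t)` of positive integers with `kℓm ≤ X`, `kns ≤ Y`, `ℓnt ≤ Z` and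
`mst ≤ W`. Products are taken in `ℕ` and then compared with the real bounds. -/
def boundedSextuples (X Y Z W : ℝ) : Set (ℕ × ℕ × ℕ × ℕ × ℕ × ℕ) :=
  {(k, l, m, n, s, t) | 0 < k ∧ 0 < l ∧ 0 < m ∧ 0 < n ∧ 0 < s ∧ 0 < t ∧
    ((k * l * m : ℕ) : ℝ) ≤ X ∧ ((k * n * s : ℕ) : ℝ) ≤ Y ∧
    ((l * n * t : ℕ) : ℝ) ≤ Z ∧ ((m * s * t : ℕ) : ℝ) ≤ W}

lemma ncard_boundedSextuples_le_sum {X Y Z W : ℝ} (hX : 0 ≤ X) (hY : 0 ≤ Y) (hZ : 0 ≤ Z)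
    (hW : 0 ≤ W) :
    ((boundedSextuples X Y Z W).ncard : ℝ) ≤
      ∑ k ∈ Icc 1 ⌊X⌋₊, ∑ l ∈ Icc 1 ⌊X⌋₊, ∑ s ∈ Icc 1 ⌊W⌋₊, ∑ t ∈ Icc 1 ⌊W⌋₊,
        min (Y / k / s) (Z / l / t) * min (X / (k * l)) (W / (s * t)) := by
  have h := ncard_le_sum_mul (S := boundedSextuples X Y Z W)
    (T := Icc 1 ⌊X⌋₊ ×ˢ Icc 1 ⌊X⌋₊ ×ˢ Icc 1 ⌊W⌋₊ ×ˢ Icc 1 ⌊W⌋₊)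
    (p := fun (k, l, _, _, s, t) => (k, l, s, t))
    (u := fun (_, _, _, n, _, _) => n) (w := fun (_, _, m, _, _, _) => m)
    (f := fun (k, l, s, t) => min (Y / k / s) (Z / l / t))
    (g := fun (k, l, s, t) => min (X / (k * l)) (W / (s * t)))
    (fun _ _ => by positivity) (fun _ _ => by positivity) ?_ ?_ ?_ ?_
  · simpa only [sum_product] using h
  · rintro ⟨k, l, m, n, s, t⟩ _ ⟨k', l', m', n', s', t'⟩ _ h
    simp only [Prod.mk.injEq] at h ⊢
    tauto
  · rintro ⟨k, l, m, n, s, t⟩ ⟨hk, hl, hm, -, hs, ht, hklm, -, -, hmst⟩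
    simp only [mem_product, mem_Icc]
    refine ⟨⟨hk, ?_⟩, ⟨hl, ?_⟩, ⟨hs, ?_⟩, ht, ?_⟩
    · exact (Nat.le_of_dvd (by positivity) ⟨l * m, by ring⟩).trans (Nat.le_floor hklm)
    · exact (Nat.le_of_dvd (by positivity) ⟨k * m, by ring⟩).trans (Nat.le_floor hklm)
    · exact (Nat.le_of_dvd (by positivity) ⟨m * t, by ring⟩).trans (Nat.le_floor hmst)
    · exact (Nat.le_of_dvd (by positivity) ⟨m * s, by ring⟩).trans (Nat.le_floor hmst)
  · rintro ⟨k, l, m, n, s, t⟩ ⟨hk, hl, -, hn, hs, ht, -, hkns, hlnt, -⟩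
    push_cast at hkns hlnt
    refine ⟨hn, le_min ?_ ?_⟩
    · rw [div_div, le_div_iff₀ (by positivity)]
      linarith
    · rw [div_div, le_div_iff₀ (by positivity)]
      linarith
  · rintro ⟨k, l, m, n, s, t⟩ ⟨hk, hl, hm, -, hs, ht, hklm, -, -, hmst⟩
    push_cast at hklm hmst
    refine ⟨hm, le_min ?_ ?_⟩
    · rw [le_div_iff₀ (by positivity)]
      linarith
    · rw [le_div_iff₀ (by positivity)]
      linarith

theorem stmt_4_general {X Y Z W : ℝ} (hX : 1 ≤ X) (hY : 0 < Y) (hZ : 0 < Z) (hW : 0 < W) :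
    ((boundedSextuples X Y Z W).ncard : ℝ) ≤ 64 * √(X * Y * Z * W) * (1 + log X) ^ 2 :=
  (ncard_boundedSextuples_le_sum (by positivity) hY.le hZ.le hW.le).trans
    (sum_sum_min_mul_min_le hX hY hZ hW _ _)

/-- There is an absolute constant `C > 0` such that for all reals
`X, Y, Z, W ≥ 2`, the number of sextuples of positive integers `(k, ℓ, m, n, s, t)`
with `kℓm ≤ X`, `kns ≤ Y`, `ℓnt ≤ Z`, `mst ≤ W` is at most
`C·(XYZW)^{1/2}·(log(XYZW))²`. -/
theorem stmt_4 :
    ∃ C : ℝ, 0 < C ∧ ∀ X Y Z W : ℝ, 2 ≤ X → 2 ≤ Y → 2 ≤ Z → 2 ≤ W →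
      (({v : ℕ × ℕ × ℕ × ℕ × ℕ × ℕ |
          0 < v.1 ∧ 0 < v.2.1 ∧ 0 < v.2.2.1 ∧ 0 < v.2.2.2.1 ∧ 0 < v.2.2.2.2.1 ∧
          0 < v.2.2.2.2.2 ∧
          ((v.1 * v.2.1 * v.2.2.1 : ℕ) : ℝ) ≤ X ∧
          ((v.1 * v.2.2.2.1 * v.2.2.2.2.1 : ℕ) : ℝ) ≤ Y ∧
          ((v.2.1 * v.2.2.2.1 * v.2.2.2.2.2 : ℕ) : ℝ) ≤ Z ∧
          ((v.2.2.1 * v.2.2.2.2.1 * v.2.2.2.2.2 : ℕ) : ℝ) ≤ W}.ncard : ℝ)) ≤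
        C * (X * Y * Z * W) ^ ((1 : ℝ) / 2) * Real.log (X * Y * Z * W) ^ 2 := by
  refine ⟨64, by norm_num, fun X Y Z W hX hY hZ hW => ?_⟩
  have hYZW : exp 1 ≤ Y * Z * W :=
    calc exp 1 ≤ 2 * 2 * 2 := by linarith [exp_one_lt_d9]
      _ ≤ Y * Z * W := by gcongr
  have hlog : 1 + log X ≤ log (X * Y * Z * W) := by
    simpa only [mul_assoc] using one_add_log_le_log_mul (x := X) (by linarith) hYZW
  have hlogX : 0 ≤ log X := log_nonneg (by linarith)
  rw [← sqrt_eq_rpow]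
  refine (stmt_4_general (by linarith) (by linarith) (by linarith) (by linarith)).trans ?_
  gcongr
end

section
/- There exist constants c₁, c₂ > 0 and B₀ ≥ 3 such that for all real B ≥ B₀, the number of triples (a₁, a₂, a₃) of nonzero integers with |aᵢ| ≤ B for all i, gcd(a₁,a₂,a₃) = 1, and such that a₁·a₂·a₃ = 2·r³ for some rational number r, lies between c₁·B·(log B)⁶ and c₂·B·(log B)⁶. -/
/-!
Up to signs, the triples are obtained from the primitive triples of positive integers with cube
product by doubling one entry. In such a primitive triple the exponents of a prime are, modulo `3`,
all zero or a permutation of `(0, 1, 2)`, so its entries can be written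
`aᵢ = xᵢ ^ 3 * ∏ σ, y σ ^ σ i` with one parameter `y σ` for each of the six permutations `σ`.
For given `y` the bound `aᵢ ≤ B` says that `xᵢ` is at most the cube root of
`B / ∏ σ, y σ ^ σ i`, and the product over `i` of these three cube roots is `B / ∏ σ, y σ`. Summing
over `y` gives at most `B * (∑ n ≤ B, 1 / n) ^ 6`, which is the upper bound.

For the lower bound, double the first entry and restrict to `y σ ≤ N`, with `N` a small power of `B`
so that rounding down the cube roots loses only 3%, and to `y σ` prime to all primes up to `420`;
this costs only a constant factor in the sum over `y`. Apart from those parameters for which some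
prime `p` divides both `x 1` and `x 2`, or `p ^ 2` divides `∏ σ, y σ`, or `p` divides both `y σ` and
`x (σ⁻¹ 0)`, the parametrisation is injective and yields primitive triples. Each of these conditions
has density at most `1 / p ^ 2`. The first one removes at most `1 / 4 + ∑ d > 2, 1 / d ^ 2 ≤ 3 / 4`
of the parameters; the other two split into `42` conditions on primes `p > 420` and remove at most
`42 / 420` of them.
-/

namespace DiagonalCubic

open Finset Equiv

/-- The parameters `(y, x)` of a triple: a natural number `y σ` for each of the six permutations
`σ` of the coordinates and a natural number `x i` for each coordinate `i`. -/
abbrev Parameter : Type := (Perm (Fin 3) → ℕ) × (Fin 3 → ℕ)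

/-- The triple of cofactors of the cubes in the parametrisation: the permutation `σ` is read as the
exponent vector of `y σ`, a rearrangement of `(0, 1, 2)`. -/
def cofactor (y : Perm (Fin 3) → ℕ) (i : Fin 3) : ℕ := ∏ σ, y σ ^ (σ i : ℕ)

/-- The triple of natural numbers with given parameters; the product of its entries is a cube. -/
def tripleHom : Parameter →* (Fin 3 → ℕ) where
  toFun w i := w.2 i ^ 3 * cofactor w.1 i
  map_one' := by ext i; simp [cofactor]
  map_mul' v w := by
    ext i
    simp only [cofactor, Prod.fst_mul, Prod.snd_mul, Pi.mul_apply, mul_pow, prod_mul_distrib]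
    ring

lemma tripleHom_apply (w : Parameter) (i : Fin 3) :
    tripleHom w i = w.2 i ^ 3 * cofactor w.1 i := rfl

lemma prod_cofactor (y : Perm (Fin 3) → ℕ) : ∏ i, cofactor y i = (∏ σ, y σ) ^ 3 := by
  have sum_perm (σ : Perm (Fin 3)) : ∑ i, (σ i : ℕ) = 3 :=
    (Equiv.sum_comp σ fun i => (i : ℕ)).trans (by simp [Fin.sum_univ_three])
  simp only [cofactor]
  rw [prod_comm, ← prod_pow]
  simp only [prod_pow_eq_pow_sum, sum_perm]

/-- The product of all the parameters, which is the cube root of the product of the triple. -/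
def normHom : Parameter →* ℕ where
  toFun w := (∏ σ, w.1 σ) * ∏ i, w.2 i
  map_one' := by simp
  map_mul' v w := by simp [prod_mul_distrib, mul_mul_mul_comm]

lemma normHom_apply (w : Parameter) : normHom w = (∏ σ, w.1 σ) * ∏ i, w.2 i := rfl

lemma prod_tripleHom (w : Parameter) : ∏ i, tripleHom w i = normHom w ^ 3 := by
  simp only [tripleHom_apply, normHom_apply, prod_mul_distrib, prod_cofactor, prod_pow, mul_pow,
    mul_comm]

lemma cofactor_pos {y : Perm (Fin 3) → ℕ} (hy : ∀ σ, 0 < y σ) (i : Fin 3) : 0 < cofactor y i :=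
  prod_pos fun σ _ => pow_pos (hy σ) _

lemma le_tripleHom {w : Parameter} (hy : ∀ σ, 0 < w.1 σ) (i : Fin 3) : w.2 i ≤ tripleHom w i :=
  (Nat.le_self_pow three_ne_zero _).trans (Nat.le_mul_of_pos_right _ (cofactor_pos hy i))

lemma cofactor_le_pow {y : Perm (Fin 3) → ℕ} {N : ℕ} (hy : ∀ σ, y σ ≤ N) (i : Fin 3) :
    cofactor y i ≤ N ^ 6 :=
  calc cofactor y i ≤ ∏ σ : Perm (Fin 3), N ^ (σ i : ℕ) :=
        prod_le_prod' fun σ _ => Nat.pow_le_pow_left (hy σ) _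
    _ = N ^ 6 := by
        rw [prod_pow_eq_pow_sum]
        congr 1
        revert i
        decide

lemma cofactor_mulSingle (σ : Perm (Fin 3)) (n : ℕ) (i : Fin 3) :
    cofactor (Pi.mulSingle σ n) i = n ^ (σ i : ℕ) := by
  rw [cofactor, prod_eq_single σ (fun τ _ h => by simp [h]) (by simp), Pi.mulSingle_eq_same]

lemma dvd_tripleHom_of_apply_ne_zero (w : Parameter) {σ : Perm (Fin 3)} {i : Fin 3}
    (h : σ i ≠ 0) : w.1 σ ∣ tripleHom w i :=
  ((dvd_pow_self _ (Fin.val_ne_zero_iff.2 h)).trans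
    (dvd_prod_of_mem (fun σ : Perm (Fin 3) => w.1 σ ^ (σ i : ℕ)) (mem_univ σ))).mul_left _

/-! ### Surjectivity of the parametrisation -/

lemma mod_three_eq_perm_of_dvd_sum {v : Fin 3 → ℕ} (hsum : 3 ∣ ∑ i, v i) (hzero : ∃ i, v i = 0) :
    (∀ i, v i % 3 = 0) ∨ ∃ σ : Perm (Fin 3), ∀ i, v i % 3 = σ i := by
  have classify : ∀ u : Fin 3 → Fin 3, 3 ∣ ∑ i, (u i : ℕ) → (∃ i, u i = 0) →
      (∀ i, u i = 0) ∨ Function.Injective u := by decide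
  let u : Fin 3 → Fin 3 := fun i => ⟨v i % 3, Nat.mod_lt _ three_pos⟩
  have hu : 3 ∣ ∑ i, (u i : ℕ) := by
    simp only [Fin.sum_univ_three, u] at hsum ⊢
    omega
  rcases classify u hu (hzero.imp fun i hi => by simp [u, hi]) with h | h
  · exact .inl fun i => Fin.val_eq_of_eq (h i)
  · exact .inr ⟨.ofBijective u (Finite.injective_iff_bijective.1 h), fun i => rfl⟩

lemma pow_mem_mrange_tripleHom (p : ℕ) {v : Fin 3 → ℕ} (hsum : 3 ∣ ∑ i, v i)
    (hzero : ∃ i, v i = 0) : (fun i => p ^ v i) ∈ MonoidHom.mrange tripleHom := by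
  have split (i : Fin 3) : p ^ v i = (p ^ (v i / 3)) ^ 3 * p ^ (v i % 3) := by
    rw [← pow_mul, ← pow_add, mul_comm, Nat.div_add_mod]
  rcases mod_three_eq_perm_of_dvd_sum hsum hzero with h | ⟨σ, h⟩
  · refine ⟨(1, fun i => p ^ (v i / 3)), funext fun i => ?_⟩
    simp [tripleHom_apply, split, h, cofactor]
  · refine ⟨(Pi.mulSingle σ p, fun i => p ^ (v i / 3)), funext fun i => ?_⟩
    simp only [tripleHom_apply, cofactor_mulSingle, split, h]

theorem mem_mrange_tripleHom {a : Fin 3 → ℕ} {r : ℕ} (ha : ∀ i, a i ≠ 0) (hr : ∏ i, a i = r ^ 3)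
    (hprim : ∀ p, p.Prime → ∃ i, ¬ p ∣ a i) : a ∈ MonoidHom.mrange tripleHom := by
  have eq_prod : a = ∏ p ∈ (∏ i, a i).primeFactors, fun i => p ^ (a i).factorization p := by
    ext i
    rw [prod_apply]
    conv_lhs => rw [← Nat.prod_factorization_pow_eq_self (ha i)]
    refine Finsupp.prod_of_support_subset _ ?_ _ fun _ _ => pow_zero _
    exact Nat.primeFactors_mono (dvd_prod_of_mem a (mem_univ i))
      (prod_ne_zero_iff.2 fun i _ => ha i)
  rw [eq_prod]
  refine prod_mem fun p hp => pow_mem_mrange_tripleHom p ?_ ?_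
  · have := congrArg (·.factorization p) hr
    rw [Nat.factorization_prod fun i _ => ha i, Nat.factorization_pow] at this
    exact ⟨r.factorization p, by simpa using this⟩
  · exact (hprim p (Nat.prime_of_mem_primeFactors hp)).imp fun i =>
      Nat.factorization_eq_zero_of_not_dvd

/-! ### Injectivity and coprimality on the admissible parameters -/

/-- The conditions under which a positive `w` is recovered from its triple and, if moreover every
`w.1 σ` is odd, doubling the first entry of the triple leaves the entries without common prime
factor. -/
structure IsAdmissible (w : Parameter) : Prop where
  squarefree_prod : Squarefree (∏ σ, w.1 σ)
  coprime_apply (σ : Perm (Fin 3)) : (w.1 σ).Coprime (w.2 (σ.symm 0))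
  coprime_one_two : (w.2 1).Coprime (w.2 2)

lemma eq_of_three_mul_add_sum_eq {a b : Fin 3 → ℕ} {f g : Perm (Fin 3) → ℕ}
    (hf : ∑ σ, f σ ≤ 1) (hg : ∑ σ, g σ ≤ 1)
    (h : ∀ i, 3 * a i + ∑ σ, f σ * (σ i : ℕ) = 3 * b i + ∑ σ, g σ * (σ i : ℕ)) :
    f = g ∧ a = b := by
  suffices f = g from ⟨this, funext fun i => by have := h i; subst f; omega⟩
  have zero_or_single {f : Perm (Fin 3) → ℕ} (hf : ∑ σ, f σ ≤ 1) :
      f = 0 ∨ ∃ σ, f = Pi.single σ 1 := by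
    rw [sum_le_one_iff] at hf
    refine (em (f = 0)).imp_right fun hne => ?_
    obtain ⟨σ, hσ⟩ := Function.ne_iff.1 hne
    have hσ : f σ ≠ 0 := hσ
    exact ⟨σ, funext fun τ => by grind⟩
  have sum_single (σ : Perm (Fin 3)) (i : Fin 3) :
      ∑ τ, (Pi.single σ 1 : Perm (Fin 3) → ℕ) τ * (τ i : ℕ) = σ i := by
    simp [Pi.single_apply]
  rcases zero_or_single hf with rfl | ⟨σ, rfl⟩ <;> rcases zero_or_single hg with rfl | ⟨τ, rfl⟩
  · rfl
  · have := h (τ.symm 1)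
    simp [sum_single] at this
    omega
  · have := h (σ.symm 1)
    simp [sum_single] at this
    omega
  · congr 1
    ext i
    have := h i
    simp only [sum_single] at this
    omega

lemma factorization_tripleHom {w : Parameter} (hy : ∀ σ, w.1 σ ≠ 0) (hx : ∀ i, w.2 i ≠ 0)
    (i : Fin 3) (p : ℕ) : (tripleHom w i).factorization p =
      3 * (w.2 i).factorization p + ∑ σ, (w.1 σ).factorization p * (σ i : ℕ) := by
  rw [tripleHom_apply, cofactor,
    Nat.factorization_mul (pow_ne_zero _ (hx i))
      (prod_ne_zero_iff.2 fun σ _ => pow_ne_zero _ (hy σ)),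
    Nat.factorization_prod fun σ _ => pow_ne_zero _ (hy σ)]
  simp [mul_comm]

theorem tripleHom_injOn : Set.InjOn tripleHom
    {w | (∀ i, w.2 i ≠ 0) ∧ Squarefree (∏ σ, w.1 σ)} := by
  rintro w ⟨hx, hsq⟩ w' ⟨hx', hsq'⟩ h
  have hy := fun σ => prod_ne_zero_iff.1 hsq.ne_zero σ (mem_univ σ)
  have hy' := fun σ => prod_ne_zero_iff.1 hsq'.ne_zero σ (mem_univ σ)
  have sum_le {y : Perm (Fin 3) → ℕ} (hsq : Squarefree (∏ σ, y σ)) (p : ℕ) :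
      ∑ σ, (y σ).factorization p ≤ 1 := by
    rw [← Finset.sum_apply', ← Nat.factorization_prod fun σ _ =>
      prod_ne_zero_iff.1 hsq.ne_zero σ (mem_univ σ)]
    exact hsq.natFactorization_le_one p
  have factorization_eq (p : ℕ) :
      (fun σ => (w.1 σ).factorization p) = (fun σ => (w'.1 σ).factorization p) ∧
        (fun i => (w.2 i).factorization p) = fun i => (w'.2 i).factorization p :=
    eq_of_three_mul_add_sum_eq (sum_le hsq p) (sum_le hsq' p) fun i => by
      rw [← factorization_tripleHom hy hx, ← factorization_tripleHom hy' hx', h]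
  ext k
  · exact Nat.eq_of_factorization_eq (hy k) (hy' k) fun p => congrFun (factorization_eq p).1 k
  · exact Nat.eq_of_factorization_eq (hx k) (hx' k) fun p => congrFun (factorization_eq p).2 k

lemma exists_eq_mulSingle_mul_of_dvd_prod {ι M : Type*} [Fintype ι] [DecidableEq ι]
    [CommMonoidWithZero M] {p : M} (hp : Prime p) {a : ι → M} (h : p ∣ ∏ i, a i) :
    ∃ (i : ι) (b : ι → M), a = Pi.mulSingle i p * b := by
  obtain ⟨i, -, b, hb⟩ := (hp.dvd_finsetProd_iff a).1 h
  refine ⟨i, Function.update a i b, funext fun j => ?_⟩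
  rcases eq_or_ne j i with rfl | hj <;> simp [*]

lemma exists_mulSingle_mul_mulSingle_dvd_of_not_squarefree_prod {ι : Type*} [Fintype ι]
    [DecidableEq ι] {y : ι → ℕ} (h : ¬ Squarefree (∏ i, y i)) :
    ∃ i j p, p.Prime ∧ Pi.mulSingle i p * Pi.mulSingle j p ∣ y := by
  simp only [Nat.squarefree_iff_prime_squarefree, not_forall, not_not] at h
  obtain ⟨p, hp, hdvd⟩ := h
  obtain ⟨i, b, rfl⟩ := exists_eq_mulSingle_mul_of_dvd_prod hp.prime (dvd_of_mul_left_dvd hdvd)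
  have hb : p ∣ ∏ i, b i := by
    simp only [Pi.mul_apply, prod_mul_distrib, Fintype.prod_pi_mulSingle'] at hdvd
    exact Nat.dvd_of_mul_dvd_mul_left hp.pos hdvd
  obtain ⟨j, c, rfl⟩ := exists_eq_mulSingle_mul_of_dvd_prod hp.prime hb
  exact ⟨i, j, p, hp, c, (mul_assoc _ _ c).symm⟩

lemma IsAdmissible.exists_not_dvd {w : Parameter} (hw : IsAdmissible w) (hodd : ∀ σ, Odd (w.1 σ))
    {p : ℕ} (hp : p.Prime) :
    ∃ i, ¬ p ∣ (Pi.mulSingle 0 2 * tripleHom w : Fin 3 → ℕ) i := by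
  by_contra! h
  have dvd_or (i : Fin 3) (hi : ¬ p ∣ (Pi.mulSingle 0 2 : Fin 3 → ℕ) i) :
      p ∣ w.2 i ∨ ∃ σ : Perm (Fin 3), σ i ≠ 0 ∧ p ∣ w.1 σ := by
    have : p ∣ w.2 i ^ 3 * cofactor w.1 i := (hp.dvd_mul.1 (h i)).resolve_left hi
    refine (hp.dvd_mul.1 this).imp hp.dvd_of_dvd_pow fun hc => ?_
    obtain ⟨σ, -, hσ⟩ := (hp.prime.dvd_finsetProd_iff _).1 hc
    refine ⟨σ, fun h0 => hp.one_lt.ne' ?_, hp.dvd_of_dvd_pow hσ⟩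
    simpa [h0] using hσ
  by_cases hy : ∃ σ, p ∣ w.1 σ
  · obtain ⟨σ, hσ⟩ := hy
    have hi : ¬ p ∣ (Pi.mulSingle 0 2 : Fin 3 → ℕ) (σ.symm 0) := fun h2 => by
      have h2 : p ∣ 2 := h2.trans (by rw [Pi.mulSingle_apply]; split_ifs <;> simp)
      rw [(Nat.prime_dvd_prime_iff_eq hp Nat.prime_two).1 h2] at hσ
      exact Nat.not_even_iff_odd.2 (hodd σ) (even_iff_two_dvd.2 hσ)
    rcases dvd_or _ hi with hx | ⟨τ, hτ, hpτ⟩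
    · exact Nat.not_coprime_of_dvd_of_dvd hp.one_lt hσ hx (hw.coprime_apply σ)
    · have hne : σ ≠ τ := fun h => hτ (by simp [← h])
      refine Nat.squarefree_iff_prime_squarefree.1 hw.squarefree_prod p hp ?_
      exact (mul_dvd_mul hσ hpτ).trans <|
        prod_pair (f := w.1) hne ▸ prod_dvd_prod_of_subset {σ, τ} univ w.1 (subset_univ _)
  · push Not at hy
    have hx (i : Fin 3) (hi : i ≠ 0) : p ∣ w.2 i :=
      (dvd_or i (by simpa [hi] using hp.one_lt.ne')).resolve_right fun ⟨σ, _, hσ⟩ => hy σ hσ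
    exact Nat.not_coprime_of_dvd_of_dvd hp.one_lt (hx 1 (by decide)) (hx 2 (by decide))
      hw.coprime_one_two

/-! ### Reciprocal sums over integers coprime to `Q` -/

/-- The positive integers up to `N` that are coprime to `Q`. -/
def coprimesUpTo (Q N : ℕ) : Finset ℕ := {n ∈ Icc 1 N | n.Coprime Q}

/-- The part of the `N`-th harmonic number supported on the integers coprime to `Q`. -/
noncomputable def coprimeHarmonic (Q N : ℕ) : ℝ := ∑ n ∈ coprimesUpTo Q N, (n : ℝ)⁻¹

lemma mem_coprimesUpTo {Q N n : ℕ} :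
    n ∈ coprimesUpTo Q N ↔ (1 ≤ n ∧ n ≤ N) ∧ n.Coprime Q := by
  simp [coprimesUpTo]

lemma coprimeHarmonic_nonneg (Q N : ℕ) : 0 ≤ coprimeHarmonic Q N :=
  sum_nonneg fun _ _ => by positivity

lemma sum_inv_filter_dvd_coprimesUpTo_le (Q N d : ℕ) :
    ∑ n ∈ coprimesUpTo Q N with d ∣ n, (n : ℝ)⁻¹ ≤ coprimeHarmonic Q N * (d : ℝ)⁻¹ := by
  have subset : {n ∈ coprimesUpTo Q N | d ∣ n} ⊆ (coprimesUpTo Q N).image (d * ·) := by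
    intro n hn
    simp only [mem_filter, mem_coprimesUpTo] at hn
    obtain ⟨⟨⟨hpos, hle⟩, hcop⟩, m, rfl⟩ := hn
    have hd := Nat.pos_of_mul_pos_right hpos
    refine mem_image_of_mem _ (mem_coprimesUpTo.2 ⟨⟨Nat.pos_of_mul_pos_left hpos, ?_⟩, ?_⟩)
    · exact (Nat.le_mul_of_pos_left m hd).trans hle
    · exact hcop.coprime_mul_left
  calc ∑ n ∈ coprimesUpTo Q N with d ∣ n, (n : ℝ)⁻¹
      ≤ ∑ n ∈ (coprimesUpTo Q N).image (d * ·), (n : ℝ)⁻¹ :=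
        sum_le_sum_of_subset_of_nonneg subset fun _ _ _ => by positivity
    _ ≤ ∑ m ∈ coprimesUpTo Q N, ((d * m : ℕ) : ℝ)⁻¹ :=
        sum_image_le_of_nonneg fun _ _ => by positivity
    _ = coprimeHarmonic Q N * (d : ℝ)⁻¹ := by
        simp [coprimeHarmonic, sum_mul]

lemma coprimeHarmonic_one (N : ℕ) : coprimeHarmonic 1 N = harmonic N := by
  simp [coprimeHarmonic, coprimesUpTo, harmonic_eq_sum_Icc]

-- Only the terms `n ≡ 1` modulo `Q` are kept.
lemma log_div_le_coprimeHarmonic {Q : ℕ} (hQ : 0 < Q) (N : ℕ) :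
    Real.log ((N + 1) / Q) / Q ≤ coprimeHarmonic Q N := by
  have hQ' : (0 : ℝ) < Q := Nat.cast_pos.2 hQ
  have le_harmonic : Real.log ((N + 1) / Q) ≤ harmonic (N / Q) := by
    refine (Real.log_le_log (by positivity) ?_).trans (log_add_one_le_harmonic _)
    rw [div_le_iff₀ hQ']
    exact_mod_cast Nat.lt_iff_add_one_le.1 (Nat.lt_div_mul_add hQ) |>.trans_eq (by ring)
  have subset : (range (N / Q)).image (1 + Q * ·) ⊆ coprimesUpTo Q N := by
    refine image_subset_iff.2 fun k hk => mem_coprimesUpTo.2 ⟨⟨by simp, ?_⟩, by simp⟩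
    calc 1 + Q * k ≤ Q * (k + 1) := by rw [mul_add, mul_one, add_comm]; gcongr; exact hQ
      _ ≤ Q * (N / Q) := by gcongr; exact mem_range.1 hk
      _ ≤ N := Nat.mul_div_le N Q
  have injective : Function.Injective (1 + Q * ·) := fun k l h => by simpa [hQ.ne'] using h
  calc Real.log ((N + 1) / Q) / Q ≤ harmonic (N / Q) / Q := by gcongr
    _ = ∑ k ∈ range (N / Q), ((Q : ℝ) * (k + 1))⁻¹ := by
        simp [harmonic, mul_sum, div_eq_inv_mul, mul_comm]
    _ ≤ ∑ k ∈ range (N / Q), ((1 + Q * k : ℕ) : ℝ)⁻¹ := by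
        gcongr with k
        push_cast
        have : (1 : ℝ) ≤ Q := by exact_mod_cast hQ
        linarith
    _ = ∑ n ∈ (range (N / Q)).image (1 + Q * ·), (n : ℝ)⁻¹ :=
        (sum_image (f := fun n : ℕ => (n : ℝ)⁻¹) injective.injOn).symm
    _ ≤ coprimeHarmonic Q N :=
        sum_le_sum_of_subset_of_nonneg subset fun _ _ _ => by positivity

/-! ### Counting parameters -/

/-- The largest real number `t` with `t ^ 3 * m ≤ B`, for `0 ≤ B` and `0 < m`. -/
noncomputable def cutoff (B : ℝ) (m : ℕ) : ℝ := (B / m) ^ (3⁻¹ : ℝ)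

lemma cutoff_nonneg {B : ℝ} (hB : 0 ≤ B) (m : ℕ) : 0 ≤ cutoff B m := by
  unfold cutoff; positivity

lemma le_cutoff_iff {B t : ℝ} {m : ℕ} (hB : 0 ≤ B) (ht : 0 ≤ t) (hm : 0 < m) :
    t ≤ cutoff B m ↔ t ^ 3 * m ≤ B := by
  rw [cutoff, Real.le_rpow_inv_iff_of_pos ht (by positivity) three_pos, le_div_iff₀ (by positivity)]
  norm_cast

lemma prod_cutoff_cofactor {B : ℝ} (hB : 0 ≤ B) (y : Perm (Fin 3) → ℕ) :
    ∏ i, cutoff B (cofactor y i) = B * ∏ σ, (y σ : ℝ)⁻¹ := by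
  have prod_eq : ∏ i, B / cofactor y i = (B * ∏ σ, (y σ : ℝ)⁻¹) ^ 3 := by
    rw [prod_div_distrib, ← Nat.cast_prod, prod_cofactor]
    simp [mul_pow, div_eq_mul_inv]
  simp only [cutoff]
  rw [Real.finsetProd_rpow _ _ fun i _ => by positivity, prod_eq]
  exact_mod_cast Real.pow_rpow_inv_natCast (by positivity) three_ne_zero

open Classical in
/-- The parameters of the triples with entries at most `B` in which every `y σ` is at most `N` and
coprime to `Q`. -/
noncomputable def parameterBox (Q N : ℕ) (B : ℝ) : Finset Parameter :=
  {w ∈ Fintype.piFinset (fun _ => coprimesUpTo Q N) ×ˢ Fintype.piFinset (fun _ => Icc 1 ⌊B⌋₊) |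
    ∀ i, (tripleHom w i : ℝ) ≤ B}

lemma mem_parameterBox {Q N : ℕ} {B : ℝ} {w : Parameter} : w ∈ parameterBox Q N B ↔
    (∀ σ, w.1 σ ∈ coprimesUpTo Q N) ∧ (∀ i, 0 < w.2 i) ∧ ∀ i, (tripleHom w i : ℝ) ≤ B := by
  simp only [parameterBox, mem_filter, mem_product, Fintype.mem_piFinset, mem_Icc]
  refine ⟨fun ⟨⟨hy, hx⟩, h⟩ => ⟨hy, fun i => (hx i).1, h⟩, fun ⟨hy, hx, h⟩ =>
    ⟨⟨hy, fun i => ⟨hx i, Nat.le_floor ((Nat.cast_le.2 ?_).trans (h i))⟩⟩, h⟩⟩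
  exact le_tripleHom (fun σ => (mem_coprimesUpTo.1 (hy σ)).1.1) i

open Classical in
lemma card_filter_dvd_parameterBox (Q N : ℕ) {B : ℝ} (hB : 0 ≤ B) (c : Parameter) :
    #{w ∈ parameterBox Q N B | c ∣ w} =
      ∑ y ∈ Fintype.piFinset fun σ => {n ∈ coprimesUpTo Q N | c.1 σ ∣ n},
        ∏ i, ⌊cutoff B (cofactor y i)⌋₊ / c.2 i := by
  simp only [← Nat.Ioc_filter_dvd_card_eq_div, ← Fintype.card_piFinset]
  rw [← card_sigma, ← card_map (Equiv.sigmaEquivProd _ _).toEmbedding]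
  congr 1
  ext ⟨y, x⟩
  have le_iff (hy : ∀ σ, 0 < y σ) (i : Fin 3) :
      x i ≤ ⌊cutoff B (cofactor y i)⌋₊ ↔ (tripleHom (y, x) i : ℝ) ≤ B := by
    rw [Nat.le_floor_iff (cutoff_nonneg hB _), le_cutoff_iff hB (by positivity) (cofactor_pos hy i)]
    norm_cast
  have pos_of_mem (hy : ∀ σ, y σ ∈ coprimesUpTo Q N) (σ) : 0 < y σ :=
    (mem_coprimesUpTo.1 (hy σ)).1.1
  simp only [mem_filter, mem_parameterBox, prod_dvd_iff, pi_dvd_iff, mem_map_equiv, mem_sigma,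
    sigmaEquivProd_symm_apply, Fintype.mem_piFinset, mem_Ioc, forall_and]
  by_cases hy : ∀ σ, y σ ∈ coprimesUpTo Q N
  · simp only [le_iff (pos_of_mem hy), hy]
    tauto
  · simp [hy]

lemma sum_piFinset_prod_inv {ι : Type*} [Fintype ι] [DecidableEq ι] (s : ι → Finset ℕ) :
    ∑ y ∈ Fintype.piFinset s, ∏ i, (y i : ℝ)⁻¹ = ∏ i, ∑ n ∈ s i, (n : ℝ)⁻¹ :=
  (prod_univ_sum s fun _ n => (n : ℝ)⁻¹).symm

open Classical in
lemma card_filter_dvd_parameterBox_le (Q N : ℕ) {B : ℝ} (hB : 0 ≤ B) (c : Parameter) :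
    (#{w ∈ parameterBox Q N B | c ∣ w} : ℝ) ≤ B * coprimeHarmonic Q N ^ 6 / normHom c := by
  have prod_floor_le (y : Perm (Fin 3) → ℕ) :
      ∏ i, ((⌊cutoff B (cofactor y i)⌋₊ / c.2 i : ℕ) : ℝ) ≤
        B / (∏ i, (c.2 i : ℝ)) * ∏ σ, (y σ : ℝ)⁻¹ :=
    calc ∏ i, ((⌊cutoff B (cofactor y i)⌋₊ / c.2 i : ℕ) : ℝ)
        ≤ ∏ i, cutoff B (cofactor y i) / c.2 i := by
          gcongr with i
          exact Nat.cast_div_le.trans (by gcongr; exact Nat.floor_le (cutoff_nonneg hB _))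
      _ = B / (∏ i, (c.2 i : ℝ)) * ∏ σ, (y σ : ℝ)⁻¹ := by
          rw [prod_div_distrib, prod_cutoff_cofactor hB]
          ring
  rw [card_filter_dvd_parameterBox Q N hB]
  push_cast only [Nat.cast_sum, Nat.cast_prod]
  calc _ ≤ ∑ y ∈ Fintype.piFinset fun σ => {n ∈ coprimesUpTo Q N | c.1 σ ∣ n},
          B / (∏ i, (c.2 i : ℝ)) * ∏ σ, (y σ : ℝ)⁻¹ := sum_le_sum fun y _ => prod_floor_le y
    _ = B / (∏ i, (c.2 i : ℝ)) * ∏ σ, ∑ n ∈ coprimesUpTo Q N with c.1 σ ∣ n, (n : ℝ)⁻¹ := by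
        rw [← mul_sum, sum_piFinset_prod_inv]
    _ ≤ B / (∏ i, (c.2 i : ℝ)) * ∏ σ, coprimeHarmonic Q N * (c.1 σ : ℝ)⁻¹ := by
        gcongr with σ
        exact sum_inv_filter_dvd_coprimesUpTo_le Q N (c.1 σ)
    _ = B * coprimeHarmonic Q N ^ 6 / normHom c := by
        simp [normHom_apply, prod_mul_distrib, Fintype.card_perm, Nat.factorial]
        ring

lemma le_card_parameterBox (Q : ℕ) {N : ℕ} {B : ℝ} (hB : 10 ^ 6 * (N : ℝ) ^ 6 ≤ B) :
    97 / 100 * B * coprimeHarmonic Q N ^ 6 ≤ #(parameterBox Q N B) := by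
  classical
  have hB0 : 0 ≤ B := hB.trans' (by positivity)
  have le_floor {y : Perm (Fin 3) → ℕ} (hy : ∀ σ, y σ ∈ coprimesUpTo Q N) (i : Fin 3) :
      99 / 100 * cutoff B (cofactor y i) ≤ ⌊cutoff B (cofactor y i)⌋₊ := by
    simp only [mem_coprimesUpTo] at hy
    have le_cutoff : 100 ≤ cutoff B (cofactor y i) := by
      rw [le_cutoff_iff hB0 (by norm_num) (cofactor_pos (fun σ => (hy σ).1.1) i)]
      refine hB.trans' ?_
      norm_num only
      gcongr
      exact_mod_cast cofactor_le_pow (fun σ => (hy σ).1.2) i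
    linarith [Nat.sub_one_lt_floor (cutoff B (cofactor y i))]
  calc 97 / 100 * B * coprimeHarmonic Q N ^ 6
      ≤ (99 / 100) ^ 3 * B * coprimeHarmonic Q N ^ 6 := by
        have := coprimeHarmonic_nonneg Q N
        gcongr
        norm_num
    _ = ∑ y ∈ Fintype.piFinset fun _ : Perm (Fin 3) => coprimesUpTo Q N,
          ∏ i, 99 / 100 * cutoff B (cofactor y i) := by
        simp only [prod_mul_distrib, prod_cutoff_cofactor hB0, ← mul_sum, sum_piFinset_prod_inv]
        simp [coprimeHarmonic, Fintype.card_perm, Nat.factorial]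
        ring
    _ ≤ ∑ y ∈ Fintype.piFinset fun _ : Perm (Fin 3) => coprimesUpTo Q N,
          ∏ i, (⌊cutoff B (cofactor y i)⌋₊ : ℝ) := by
        gcongr with y hy i
        · exact fun i _ => mul_nonneg (by norm_num) (cutoff_nonneg hB0 _)
        · exact le_floor (Fintype.mem_piFinset.1 hy) i
    _ = #(parameterBox Q N B) := by
        exact_mod_cast (by simpa using card_filter_dvd_parameterBox Q N hB0 1 :
          #(parameterBox Q N B) = _).symm

/-! ### The sieve for admissible parameters -/

lemma normHom_pos_of_mem_parameterBox {Q N : ℕ} {B : ℝ} {w : Parameter}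
    (hw : w ∈ parameterBox Q N B) : 0 < normHom w := by
  simp only [mem_parameterBox, mem_coprimesUpTo] at hw
  exact Nat.mul_pos (prod_pos fun σ _ => (hw.1 σ).1.1) (prod_pos fun i _ => hw.2.1 i)

open Classical in
lemma card_filter_exists_lt_dvd_parameterBox_le (Q N : ℕ) {B : ℝ} (hB : 0 ≤ B)
    {c : ℕ → Parameter} (hc : ∀ d, normHom (c d) = d ^ 2) {P : ℕ} (hP : P ≠ 0) :
    (#{w ∈ parameterBox Q N B | ∃ d > P, c d ∣ w} : ℝ) ≤ B * coprimeHarmonic Q N ^ 6 / P := by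
  set M := (parameterBox Q N B).sup normHom
  have subset : {w ∈ parameterBox Q N B | ∃ d > P, c d ∣ w} ⊆
      (Ioc P M).biUnion fun d => {w ∈ parameterBox Q N B | c d ∣ w} := by
    intro w hw
    obtain ⟨hw, d, hd, hdvd⟩ := mem_filter.1 hw
    have d_le : d ≤ M :=
      calc d ≤ d ^ 2 := Nat.le_self_pow two_ne_zero d
        _ ≤ normHom w :=
            Nat.le_of_dvd (normHom_pos_of_mem_parameterBox hw) (hc d ▸ map_dvd normHom hdvd)
        _ ≤ M := le_sup hw
    exact mem_biUnion.2 ⟨d, mem_Ioc.2 ⟨hd, d_le⟩, mem_filter.2 ⟨hw, hdvd⟩⟩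
  have sum_inv_sq_le : ∑ d ∈ Ioc P M, ((d : ℝ) ^ 2)⁻¹ ≤ (P : ℝ)⁻¹ := by
    rcases le_or_gt P M with h | h
    · exact (sum_Ioc_inv_sq_le_sub hP h).trans (sub_le_self _ (by positivity))
    · simp [Ioc_eq_empty_of_le h.le]
  have := coprimeHarmonic_nonneg Q N
  calc (#{w ∈ parameterBox Q N B | ∃ d > P, c d ∣ w} : ℝ)
      ≤ ∑ d ∈ Ioc P M, (#{w ∈ parameterBox Q N B | c d ∣ w} : ℝ) :=
        mod_cast (card_le_card subset).trans card_biUnion_le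
    _ ≤ ∑ d ∈ Ioc P M, B * coprimeHarmonic Q N ^ 6 * ((d : ℝ) ^ 2)⁻¹ := by
        gcongr with d
        simpa [hc, div_eq_mul_inv] using card_filter_dvd_parameterBox_le Q N hB (c d)
    _ ≤ B * coprimeHarmonic Q N ^ 6 / P := by
        rw [← mul_sum, div_eq_mul_inv]
        gcongr

/-- The parameter dividing exactly those `w` such that `d` divides both `w.2 1` and `w.2 2`. -/
def cubeObstruction (d : ℕ) : Parameter := (1, Pi.mulSingle 1 d * Pi.mulSingle 2 d)

/-- The parameter dividing exactly those `w` such that `d` divides both `w.1 σ` and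
`w.2 (σ.symm 0)` (index `σ`), respectively both `w.1 σ` and `w.1 τ`, with `d ^ 2 ∣ w.1 σ` if
`σ = τ` (index `(σ, τ)`). -/
def cofactorObstruction : Perm (Fin 3) ⊕ Perm (Fin 3) × Perm (Fin 3) → ℕ → Parameter
  | .inl σ, d => (Pi.mulSingle σ d, Pi.mulSingle (σ.symm 0) d)
  | .inr (σ, τ), d => (Pi.mulSingle σ d * Pi.mulSingle τ d, 1)

lemma normHom_cubeObstruction (d : ℕ) : normHom (cubeObstruction d) = d ^ 2 := by
  simp [normHom_apply, cubeObstruction, prod_mul_distrib, sq]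

lemma normHom_cofactorObstruction (k) (d : ℕ) : normHom (cofactorObstruction k d) = d ^ 2 := by
  rcases k with σ | ⟨σ, τ⟩ <;>
    simp [normHom_apply, cofactorObstruction, prod_mul_distrib, sq]

lemma mulSingle_dvd_iff {ι M : Type*} [DecidableEq ι] [CommMonoid M] {i : ι} {d : M} {f : ι → M} :
    Pi.mulSingle i d ∣ f ↔ d ∣ f i := by
  refine ⟨fun h => by simpa using pi_dvd_iff.1 h i, fun h => pi_dvd_iff.2 fun j => ?_⟩
  rcases eq_or_ne j i with rfl | hj <;> simp [*]

lemma exists_obstruction_dvd {w : Parameter} {P : ℕ}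
    (hP : ∀ p σ, p.Prime → p ∣ w.1 σ → P < p) (hw : ¬ IsAdmissible w) :
    (∃ p, p.Prime ∧ cubeObstruction p ∣ w) ∨ ∃ k, ∃ p > P, cofactorObstruction k p ∣ w := by
  by_contra! ⟨hcube, hcof⟩
  refine hw ⟨?_, ?_, ?_⟩
  · by_contra hsq
    obtain ⟨σ, τ, p, hp, hdvd⟩ := exists_mulSingle_mul_mulSingle_dvd_of_not_squarefree_prod hsq
    refine hcof (.inr (σ, τ)) p (hP p σ hp ?_) (prod_dvd_iff.2 ⟨hdvd, one_dvd _⟩)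
    exact mulSingle_dvd_iff.1 (dvd_of_mul_right_dvd hdvd)
  · refine fun σ => Nat.coprime_of_dvd fun p hp hy hx => ?_
    exact hcof (.inl σ) p (hP p σ hp hy)
      (prod_dvd_iff.2 ⟨mulSingle_dvd_iff.2 hy, mulSingle_dvd_iff.2 hx⟩)
  · refine Nat.coprime_of_dvd fun p hp h1 h2 => hcube p hp (prod_dvd_iff.2 ⟨one_dvd _, ?_⟩)
    simp [cubeObstruction, pi_dvd_iff, Fin.forall_fin_succ, h1, h2, Pi.mulSingle_apply]

lemma lt_of_prime_dvd_of_mem_parameterBox {Q P N : ℕ} (hQ : ∀ p, p.Prime → p ≤ P → p ∣ Q) {B : ℝ}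
    {w : Parameter} (hw : w ∈ parameterBox Q N B) {p : ℕ} {σ : Perm (Fin 3)} (hp : p.Prime)
    (hdvd : p ∣ w.1 σ) : P < p := by
  by_contra! hle
  have hcop := (mem_coprimesUpTo.1 ((mem_parameterBox.1 hw).1 σ)).2
  exact Nat.not_coprime_of_dvd_of_dvd hp.one_lt hdvd (hQ p hp hle) hcop

open Classical in
lemma card_filter_not_isAdmissible_le {Q P : ℕ} (hQ : ∀ p, p.Prime → p ≤ P → p ∣ Q) (hP : P ≠ 0)
    (N : ℕ) {B : ℝ} (hB : 0 ≤ B) : (#{w ∈ parameterBox Q N B | ¬ IsAdmissible w} : ℝ) ≤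
      (3 / 4 + 42 / P) * (B * coprimeHarmonic Q N ^ 6) := by
  let box := parameterBox Q N B
  have subset : {w ∈ box | ¬ IsAdmissible w} ⊆
      ({w ∈ box | cubeObstruction 2 ∣ w} ∪ {w ∈ box | ∃ d > 2, cubeObstruction d ∣ w}) ∪
        univ.biUnion fun k => {w ∈ box | ∃ d > P, cofactorObstruction k d ∣ w} := by
    intro w hw
    obtain ⟨hw, hadm⟩ := mem_filter.1 hw
    simp only [mem_union, mem_biUnion, mem_univ, true_and, mem_filter, hw]
    have := exists_obstruction_dvd (fun p σ => lt_of_prime_dvd_of_mem_parameterBox hQ hw) hadm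
    refine this.imp_left fun ⟨p, hp, hdvd⟩ => ?_
    rcases hp.two_le.eq_or_lt with rfl | hlt
    exacts [.inl hdvd, .inr ⟨p, hlt, hdvd⟩]
  have card_cube_two := card_filter_dvd_parameterBox_le Q N hB (cubeObstruction 2)
  have card_cube := card_filter_exists_lt_dvd_parameterBox_le Q N hB normHom_cubeObstruction
    two_ne_zero
  have card_cofactor (k) := card_filter_exists_lt_dvd_parameterBox_le Q N hB
    (normHom_cofactorObstruction k) hP
  calc (#{w ∈ box | ¬ IsAdmissible w} : ℝ)
      ≤ #{w ∈ box | cubeObstruction 2 ∣ w} + #{w ∈ box | ∃ d > 2, cubeObstruction d ∣ w} +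
          ∑ k, (#{w ∈ box | ∃ d > P, cofactorObstruction k d ∣ w} : ℝ) := by
        refine mod_cast (card_le_card subset).trans ((card_union_le _ _).trans ?_)
        exact add_le_add (card_union_le _ _) card_biUnion_le
    _ ≤ B * coprimeHarmonic Q N ^ 6 / (normHom (cubeObstruction 2) : ℝ) +
          B * coprimeHarmonic Q N ^ 6 / (2 : ℕ) +
          ∑ _k : Perm (Fin 3) ⊕ Perm (Fin 3) × Perm (Fin 3), B * coprimeHarmonic Q N ^ 6 / P :=
        add_le_add (add_le_add card_cube_two card_cube) (sum_le_sum fun _ _ => card_cofactor _)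
    _ = (3 / 4 + 42 / P) * (B * coprimeHarmonic Q N ^ 6) := by
        rw [normHom_cubeObstruction]
        simp [Fintype.card_perm, Nat.factorial]
        ring

open Classical in
lemma le_card_filter_isAdmissible {Q : ℕ} (hQ : ∀ p, p.Prime → p ≤ 420 → p ∣ Q) {N : ℕ} {B : ℝ}
    (hB : 10 ^ 6 * (N : ℝ) ^ 6 ≤ B) :
    B * coprimeHarmonic Q N ^ 6 / 10 ≤ #{w ∈ parameterBox Q N B | IsAdmissible w} := by
  have hB0 : 0 ≤ B := hB.trans' (by positivity)
  have card_all := le_card_parameterBox Q hB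
  have card_not := card_filter_not_isAdmissible_le hQ (by norm_num) N hB0
  have card_add : (#{w ∈ parameterBox Q N B | IsAdmissible w} : ℝ) +
      #{w ∈ parameterBox Q N B | ¬ IsAdmissible w} = #(parameterBox Q N B) :=
    mod_cast card_filter_add_card_filter_not _
  have : 0 ≤ B * coprimeHarmonic Q N ^ 6 := by
    have := coprimeHarmonic_nonneg Q N
    positivity
  norm_num at card_not
  linarith

/-! ### Counting triples -/

/-- The triples counted by the theorem, as functions on `Fin 3`, with coprimality of the entries
expressed through primes. -/
def cubicTriples (B : ℝ) : Set (Fin 3 → ℤ) :=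
  {a | (∀ i, a i ≠ 0) ∧ (∀ i, |(a i : ℝ)| ≤ B) ∧
    (∀ p, p.Prime → ∃ i, ¬ p ∣ (a i).natAbs) ∧ ∃ r : ℚ, ∏ i, (a i : ℚ) = 2 * r ^ 3}

lemma gcd_gcd_eq_one_iff {a b c : ℤ} : Int.gcd (Int.gcd a b) c = 1 ↔
    ∀ p, p.Prime → ¬ p ∣ a.natAbs ∨ ¬ p ∣ b.natAbs ∨ ¬ p ∣ c.natAbs := by
  simp only [Nat.eq_one_iff_not_exists_prime_dvd, Int.gcd_def, Int.natAbs_natCast, Nat.dvd_gcd_iff,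
    not_and_or, or_assoc]

lemma ncard_setOf_eq_ncard_cubicTriples (B : ℝ) :
    {t : ℤ × ℤ × ℤ | t.1 ≠ 0 ∧ t.2.1 ≠ 0 ∧ t.2.2 ≠ 0 ∧
      |(t.1 : ℝ)| ≤ B ∧ |(t.2.1 : ℝ)| ≤ B ∧ |(t.2.2 : ℝ)| ≤ B ∧
      Int.gcd (Int.gcd t.1 t.2.1) t.2.2 = 1 ∧
      ∃ r : ℚ, ((t.1 : ℚ) * (t.2.1 : ℚ) * (t.2.2 : ℚ)) = 2 * r ^ 3}.ncard =
      (cubicTriples B).ncard := by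
  let e : ℤ × ℤ × ℤ → Fin 3 → ℤ := fun t => ![t.1, t.2.1, t.2.2]
  have he : Function.Bijective e := Function.bijective_iff_has_inverse.2
    ⟨fun a => (a 0, a 1, a 2), fun _ => rfl, fun a => by ext i; fin_cases i <;> rfl⟩
  rw [← Set.ncard_preimage_of_injective_subset_range he.1 (by simp [he.2.range_eq])]
  congr 1
  ext t
  simp [cubicTriples, e, Fin.forall_fin_succ, Fin.exists_fin_succ, Fin.prod_univ_three,
    gcd_gcd_eq_one_iff, and_assoc]

lemma exists_eq_two_mul_cube {n : ℤ} {r : ℚ} (h : (n : ℚ) = 2 * r ^ 3) :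
    ∃ m : ℤ, n = 2 * m ^ 3 := by
  have den_pow_mul : n * (r.den : ℤ) ^ 3 = 2 * r.num ^ 3 := by
    have hd : (r.den : ℚ) ≠ 0 := by simp
    rw [← r.num_div_den] at h
    field_simp at h
    exact_mod_cast h
  have den_pow_dvd : r.den ^ 3 ∣ 2 := by
    exact_mod_cast r.isCoprime_num_den.symm.pow.dvd_of_dvd_mul_right (Dvd.intro_left n den_pow_mul)
  have den_sq_dvd : r.den * r.den ∣ 2 := by
    rw [← sq]
    exact (pow_dvd_pow _ (by norm_num)).trans den_pow_dvd
  have den_eq : r.den = 1 := Nat.isUnit_iff.1 (Nat.prime_two.prime.squarefree _ den_sq_dvd)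
  exact ⟨r.num, by simpa [den_eq] using den_pow_mul⟩

lemma exists_natAbs_eq_of_mem_cubicTriples {B : ℝ} {a : Fin 3 → ℤ} (ha : a ∈ cubicTriples B) :
    ∃ j w, ∀ i, (a i).natAbs = (Pi.mulSingle j 2 : Fin 3 → ℕ) i * tripleHom w i := by
  obtain ⟨hne, -, hprim, r, hr⟩ := ha
  obtain ⟨m, hm⟩ := exists_eq_two_mul_cube (n := ∏ i, a i) (mod_cast hr)
  have prod_natAbs : ∏ i, (a i).natAbs = 2 * m.natAbs ^ 3 := by
    simpa [Int.natAbs_mul, Int.natAbs_pow, Fin.prod_univ_three] using congrArg Int.natAbs hm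
  obtain ⟨j, b, hb⟩ := exists_eq_mulSingle_mul_of_dvd_prod Nat.prime_two.prime
    (Dvd.intro _ prod_natAbs.symm)
  have hb (i) : (a i).natAbs = (Pi.mulSingle j 2 : Fin 3 → ℕ) i * b i := congrFun hb i
  have prod_b : ∏ i, b i = m.natAbs ^ 3 := by
    simpa [hb, prod_mul_distrib] using prod_natAbs
  obtain ⟨w, rfl⟩ := mem_mrange_tripleHom
    (fun i h0 => hne i (by simpa [h0] using hb i)) prod_b
    fun p hp => (hprim p hp).imp fun i hi hdvd => hi (hb i ▸ hdvd.mul_left _)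
  exact ⟨j, w, hb⟩

lemma mem_parameterBox_one {B : ℝ} {w : Parameter} (hne : ∀ i, tripleHom w i ≠ 0)
    (hle : ∀ i, (tripleHom w i : ℝ) ≤ B) : w ∈ parameterBox 1 ⌊B⌋₊ B := by
  have pos_and_le {n : ℕ} {i : Fin 3} (h : n ∣ tripleHom w i) : 0 < n ∧ n ≤ ⌊B⌋₊ := by
    have := Nat.pos_of_ne_zero (hne i)
    exact ⟨Nat.pos_of_dvd_of_pos h this, (Nat.le_of_dvd this h).trans (Nat.le_floor (hle i))⟩
  refine mem_parameterBox.2 ⟨fun σ => ?_, fun i => ?_, hle⟩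
  · exact mem_coprimesUpTo.2
      ⟨pos_and_le (dvd_tripleHom_of_apply_ne_zero w (i := σ.symm 1) (by simp)), by simp⟩
  · exact (pos_and_le (i := i) ((dvd_pow_self _ three_ne_zero).mul_right _)).1

lemma cubicTriples_subset (B : ℝ) : cubicTriples B ⊆
    ((Fintype.piFinset fun _ => {1, -1, 2, -2}) ×ˢ parameterBox 1 ⌊B⌋₊ B).image
      fun (ε, w) i => ε i * (tripleHom w i : ℤ) := by
  intro a ha
  obtain ⟨j, w, hw⟩ := exists_natAbs_eq_of_mem_cubicTriples ha
  have tripleHom_le (i) : tripleHom w i ≤ (a i).natAbs := by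
    rw [hw]
    exact Nat.le_mul_of_pos_left _ (by rw [Pi.mulSingle_apply]; split_ifs <;> simp)
  have hbox : w ∈ parameterBox 1 ⌊B⌋₊ B := by
    refine mem_parameterBox_one (fun i h0 => ha.1 i (by simpa [h0] using hw i)) fun i => ?_
    exact (Nat.cast_le.2 (tripleHom_le i)).trans (by simpa using ha.2.1 i)
  have exists_multiplier (i) : ∃ ε ∈ ({1, -1, 2, -2} : Finset ℤ), ε * tripleHom w i = a i := by
    have hw := hw i
    rw [Pi.mulSingle_apply] at hw
    split_ifs at hw <;> rcases le_total 0 (a i) with h | h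
    exacts [⟨2, by simp, by omega⟩, ⟨-2, by simp, by omega⟩, ⟨1, by simp, by omega⟩,
      ⟨-1, by simp, by omega⟩]
  choose ε hε hεw using exists_multiplier
  exact mem_coe.2 (mem_image.2
    ⟨(ε, w), mem_product.2 ⟨Fintype.mem_piFinset.2 hε, hbox⟩, funext hεw⟩)

lemma card_parameterBox_le (Q N : ℕ) {B : ℝ} (hB : 0 ≤ B) :
    (#(parameterBox Q N B) : ℝ) ≤ B * coprimeHarmonic Q N ^ 6 := by
  classical
  simpa using card_filter_dvd_parameterBox_le Q N hB 1

lemma finite_cubicTriples (B : ℝ) : (cubicTriples B).Finite :=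
  (finite_toSet _).subset (cubicTriples_subset B)

lemma ncard_cubicTriples_le {B : ℝ} (hB : 1 ≤ B) :
    ((cubicTriples B).ncard : ℝ) ≤ 64 * (B * (1 + Real.log B) ^ 6) := by
  have W_le : coprimeHarmonic 1 ⌊B⌋₊ ≤ 1 + Real.log B := by
    rw [coprimeHarmonic_one]
    exact harmonic_floor_le_one_add_log B hB
  calc ((cubicTriples B).ncard : ℝ) ≤ 64 * #(parameterBox 1 ⌊B⌋₊ B) := by
        refine mod_cast (Set.ncard_le_ncard (cubicTriples_subset B)).trans ?_
        rw [Set.ncard_coe_finset]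
        refine card_image_le.trans_eq ?_
        simp [card_product, Fintype.card_piFinset]
    _ ≤ 64 * (B * coprimeHarmonic 1 ⌊B⌋₊ ^ 6) := by
        gcongr
        exact card_parameterBox_le 1 _ (by linarith)
    _ ≤ 64 * (B * (1 + Real.log B) ^ 6) := by
        have := coprimeHarmonic_nonneg 1 ⌊B⌋₊
        gcongr

/-- The triple of parameters `w` with its first entry doubled. -/
def doubledTriple (w : Parameter) (i : Fin 3) : ℤ :=
  ((Pi.mulSingle 0 2 * tripleHom w : Fin 3 → ℕ) i : ℕ)

lemma natAbs_doubledTriple (w : Parameter) (i : Fin 3) :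
    (doubledTriple w i).natAbs = (Pi.mulSingle 0 2 * tripleHom w : Fin 3 → ℕ) i :=
  Int.natAbs_natCast _

lemma prod_doubledTriple (w : Parameter) :
    ∏ i, doubledTriple w i = 2 * (normHom w : ℤ) ^ 3 := by
  simp only [doubledTriple, ← Nat.cast_prod, Pi.mul_apply, prod_mul_distrib, prod_tripleHom]
  simp

lemma doubledTriple_injOn : Set.InjOn doubledTriple
    {w | (∀ i, w.2 i ≠ 0) ∧ Squarefree (∏ σ, w.1 σ)} := by
  refine fun w hw w' hw' h => tripleHom_injOn hw hw' (funext fun i => ?_)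
  have hi := Nat.cast_injective (congrFun h i)
  exact Nat.eq_of_mul_eq_mul_left (by rw [Pi.mulSingle_apply]; split_ifs <;> simp) hi

lemma doubledTriple_mem_cubicTriples {Q N : ℕ} {B : ℝ} {w : Parameter} (hQ : Even Q)
    (hbox : w ∈ parameterBox Q N B) (hw : IsAdmissible w) :
    doubledTriple w ∈ cubicTriples (2 * B) := by
  obtain ⟨hy, -, hle⟩ := mem_parameterBox.1 hbox
  have hodd (σ) : Odd (w.1 σ) := by
    have := (mem_coprimesUpTo.1 (hy σ)).2
    exact Nat.Coprime.odd_of_right (this.coprime_dvd_right hQ.two_dvd)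
  have mulSingle_le (i) : ((Pi.mulSingle 0 2 : Fin 3 → ℕ) i : ℝ) ≤ 2 := by
    rw [Pi.mulSingle_apply]; split_ifs <;> simp
  refine ⟨?_, fun i => ?_, fun p hp => ?_, (normHom w : ℚ), ?_⟩
  · have : ∏ i, doubledTriple w i ≠ 0 := by
      rw [prod_doubledTriple]
      exact_mod_cast (mul_pos two_pos (pow_pos (normHom_pos_of_mem_parameterBox hbox) 3)).ne'
    simpa only [prod_ne_zero_iff, mem_univ, true_imp_iff] using this
  · simp only [doubledTriple, Pi.mul_apply, Nat.cast_mul, Int.cast_mul, Int.cast_natCast]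
    rw [abs_of_nonneg (by positivity)]
    exact mul_le_mul (mulSingle_le i) (hle i) (by positivity) zero_le_two
  · simpa only [natAbs_doubledTriple] using hw.exists_not_dvd hodd hp
  · exact_mod_cast congrArg (Int.cast : ℤ → ℚ) (prod_doubledTriple w)

lemma le_ncard_cubicTriples {Q : ℕ} (hQ : ∀ p, p.Prime → p ≤ 420 → p ∣ Q) {N : ℕ} {B : ℝ}
    (hB : 10 ^ 6 * (N : ℝ) ^ 6 ≤ B) :
    B * coprimeHarmonic Q N ^ 6 / 10 ≤ (cubicTriples (2 * B)).ncard := by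
  have hQ2 : Even Q := even_iff_two_dvd.2 (hQ 2 Nat.prime_two (by norm_num))
  have mapsTo : Set.MapsTo doubledTriple {w ∈ parameterBox Q N B | IsAdmissible w}
      (cubicTriples (2 * B)) := fun w hw => doubledTriple_mem_cubicTriples hQ2 hw.1 hw.2
  have injOn : Set.InjOn doubledTriple {w ∈ parameterBox Q N B | IsAdmissible w} := by
    refine doubledTriple_injOn.mono ?_
    rintro w ⟨hbox, hadm⟩
    exact ⟨fun i => ((mem_parameterBox.1 hbox).2.1 i).ne', hadm.squarefree_prod⟩
  have card_le := Set.ncard_le_ncard_of_injOn doubledTriple mapsTo injOn (finite_cubicTriples _)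
  refine (le_card_filter_isAdmissible hQ hB).trans (Nat.cast_le.2 ?_)
  simpa [← Set.ncard_coe_finset] using card_le

lemma pow_mul_log_pow_le_ncard_cubicTriples {Q : ℕ} (hQ : ∀ p, p.Prime → p ≤ 420 → p ∣ Q)
    (hQ0 : 0 < Q) {s : ℝ} (hs : 10 * Q ≤ s) :
    s ^ 12 * (Real.log s / Q) ^ 6 / 10 ≤ (cubicTriples (2 * s ^ 12)).ncard := by
  have one_le : (1 : ℝ) ≤ Q := by exact_mod_cast hQ0
  have hs1 : 1 ≤ s := by linarith
  let N := ⌊s ^ 2 / 10⌋₊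
  have N_le : (N : ℝ) ≤ s ^ 2 / 10 := Nat.floor_le (by positivity)
  have hN : 10 ^ 6 * (N : ℝ) ^ 6 ≤ s ^ 12 :=
    calc 10 ^ 6 * (N : ℝ) ^ 6 ≤ 10 ^ 6 * (s ^ 2 / 10) ^ 6 := by gcongr
      _ = s ^ 12 := by ring
  have le_div : s ≤ (N + 1) / Q := by
    rw [le_div_iff₀ (by positivity)]
    nlinarith [Nat.lt_floor_add_one (s ^ 2 / 10)]
  have log_le : Real.log s / Q ≤ coprimeHarmonic Q N :=
    le_trans (by gcongr) (log_div_le_coprimeHarmonic hQ0 N)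
  have log_nonneg := Real.log_nonneg hs1
  exact le_trans (by gcongr) (le_ncard_cubicTriples hQ hN)

lemma eventually_le_ncard_cubicTriples :
    ∃ c > 0, ∀ᶠ B in Filter.atTop, c * B * Real.log B ^ 6 ≤ (cubicTriples B).ncard := by
  obtain ⟨Q, hQ0, hQ⟩ : ∃ Q > 0, ∀ p, p.Prime → p ≤ 420 → p ∣ Q :=
    ⟨_, Nat.factorial_pos 420, fun p hp => Nat.dvd_factorial hp.pos⟩
  refine ⟨(24 * Q : ℝ)⁻¹ ^ 6 / 20, by positivity, ?_⟩
  have tendsto_root : Filter.Tendsto (fun B : ℝ => (B / 2) ^ ((12 : ℕ) : ℝ)⁻¹) .atTop .atTop :=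
    (tendsto_rpow_atTop (by positivity)).comp (Filter.tendsto_id.atTop_div_const two_pos)
  filter_upwards [tendsto_root.eventually_ge_atTop (10 * Q : ℝ), Filter.eventually_ge_atTop 4]
    with B hs hB
  have pow_eq : ((B / 2) ^ ((12 : ℕ) : ℝ)⁻¹) ^ 12 = B / 2 :=
    Real.rpow_inv_natCast_pow (by positivity) (by norm_num)
  have log_le : Real.log B / 24 ≤ Real.log ((B / 2) ^ ((12 : ℕ) : ℝ)⁻¹) := by
    have log_four : 2 * Real.log 2 = Real.log 4 := by
      rw [← Real.log_rpow two_pos]; norm_num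
    rw [Real.log_rpow (by positivity), Real.log_div (by positivity) two_ne_zero]
    push_cast
    linarith [Real.log_le_log (by norm_num) hB]
  calc (24 * Q : ℝ)⁻¹ ^ 6 / 20 * B * Real.log B ^ 6
      = B / 2 * (Real.log B / 24 / Q) ^ 6 / 10 := by ring
    _ ≤ B / 2 * (Real.log ((B / 2) ^ ((12 : ℕ) : ℝ)⁻¹) / Q) ^ 6 / 10 := by
        have := Real.log_nonneg (by linarith : 1 ≤ B)
        gcongr
    _ ≤ (cubicTriples B).ncard := by
        simpa only [pow_eq, mul_div_cancel₀ B two_ne_zero] using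
          pow_mul_log_pow_le_ncard_cubicTriples hQ hQ0 hs

lemma eventually_ncard_cubicTriples_le :
    ∃ c > 0, ∀ᶠ B in Filter.atTop, ((cubicTriples B).ncard : ℝ) ≤ c * B * Real.log B ^ 6 := by
  refine ⟨4096, by norm_num, ?_⟩
  filter_upwards [Filter.eventually_ge_atTop (Real.exp 1)] with B hB
  have one_le_log : 1 ≤ Real.log B := (Real.le_log_iff_exp_le ((Real.exp_pos 1).trans_le hB)).2 hB
  have one_le : 1 ≤ B := (Real.one_le_exp zero_le_one).trans hB
  calc ((cubicTriples B).ncard : ℝ) ≤ 64 * (B * (1 + Real.log B) ^ 6) :=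
        ncard_cubicTriples_le one_le
    _ ≤ 64 * (B * (Real.log B + Real.log B) ^ 6) := by gcongr
    _ = 4096 * B * Real.log B ^ 6 := by ring

end DiagonalCubic

/-- The number of triples `(a₁,a₂,a₃)` of nonzero integers with
`|aᵢ| ≤ B`, `gcd(a₁,a₂,a₃) = 1` and `a₁a₂a₃ = 2r³` for some rational `r` has exact
order of magnitude `B·(log B)⁶`. -/
theorem stmt_5 :
    ∃ c₁ c₂ B₀ : ℝ, 0 < c₁ ∧ 0 < c₂ ∧ 3 ≤ B₀ ∧ ∀ B : ℝ, B₀ ≤ B →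
      c₁ * B * Real.log B ^ 6 ≤
        ({t : ℤ × ℤ × ℤ | t.1 ≠ 0 ∧ t.2.1 ≠ 0 ∧ t.2.2 ≠ 0 ∧
          |(t.1 : ℝ)| ≤ B ∧ |(t.2.1 : ℝ)| ≤ B ∧ |(t.2.2 : ℝ)| ≤ B ∧
          Int.gcd (Int.gcd t.1 t.2.1) t.2.2 = 1 ∧
          ∃ r : ℚ, ((t.1 : ℚ) * (t.2.1 : ℚ) * (t.2.2 : ℚ)) = 2 * r ^ 3}.ncard : ℝ) ∧
      ({t : ℤ × ℤ × ℤ | t.1 ≠ 0 ∧ t.2.1 ≠ 0 ∧ t.2.2 ≠ 0 ∧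
          |(t.1 : ℝ)| ≤ B ∧ |(t.2.1 : ℝ)| ≤ B ∧ |(t.2.2 : ℝ)| ≤ B ∧
          Int.gcd (Int.gcd t.1 t.2.1) t.2.2 = 1 ∧
          ∃ r : ℚ, ((t.1 : ℚ) * (t.2.1 : ℚ) * (t.2.2 : ℚ)) = 2 * r ^ 3}.ncard : ℝ) ≤
        c₂ * B * Real.log B ^ 6 := by
  obtain ⟨c₁, hc₁, lower⟩ := DiagonalCubic.eventually_le_ncard_cubicTriples
  obtain ⟨c₂, hc₂, upper⟩ := DiagonalCubic.eventually_ncard_cubicTriples_le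
  obtain ⟨B₀, h⟩ := Filter.eventually_atTop.1 (lower.and upper)
  refine ⟨c₁, c₂, max B₀ 3, hc₁, hc₂, le_max_right .., fun B hB => ?_⟩
  rw [DiagonalCubic.ncard_setOf_eq_ncard_cubicTriples]
  exact h B ((le_max_left ..).trans hB)
end

section
/- There exist constants c₁, c₂ > 0 and B₀ ≥ 3 such that for all real B ≥ B₀, the number of quadruples (a₀, a₁, a₂, a₃) of nonzero integers with |aᵢ| ≤ B for all i, gcd(a₁,a₂,a₃) = 1, and such that a₁·a₂·a₃ = 2·r³ for some rational number r, lies between c₁·B²·(log B)⁶ and c₂·B²·(log B)⁶. -/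
/-!
If `a` is a coprime triple whose product is `q` times a cube, then at every prime not dividing `q`
the valuations of the `a i` are modulo `3` either all zero or a permutation of `(0, 1, 2)`. Hence
`a i = c i * x i ^ 3 * ∏ σ, y σ ^ (σ i)`, where `σ` runs over the six permutations and `c` over
finitely many triples. For fixed `y` the number of `x` with `a i ≤ B` is at most the product of the
three cube roots, and as `∑ i, σ i = 3` this product is a constant times `B / ∏ σ, y σ`. Summing
over `y` gives `B * (log B) ^ 6` as an upper bound. For the lower bound, `x` and `y` are restricted
to small boxes and sieved so that the parametrisation is injective on them and the common factor of
the `a i` stays bounded; a positive proportion of the box survives.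
-/

open Finset Asymptotics Filter
open scoped Nat

section ReciprocalSums

/-- The harmonic sum over a finite set of natural numbers. -/
noncomputable def reciprocalSum (S : Finset ℕ) : ℝ := ∑ s ∈ S, (s : ℝ)⁻¹

lemma reciprocalSum_nonneg (S : Finset ℕ) : 0 ≤ reciprocalSum S :=
  sum_nonneg fun _ _ => by positivity

lemma sum_piFinset_prod_inv {κ : Type*} [Fintype κ] [DecidableEq κ] (S : κ → Finset ℕ) :
    ∑ y ∈ Fintype.piFinset S, ∏ k, (y k : ℝ)⁻¹ = ∏ k, reciprocalSum (S k) := by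
  simp only [reciprocalSum, prod_univ_sum]

/-- A set of natural numbers that contains all divisors of its elements. -/
def DivisorClosed (S : Finset ℕ) : Prop := ∀ ⦃a b⦄, a ∣ b → b ∈ S → a ∈ S

lemma DivisorClosed.zero_notMem {S : Finset ℕ} (hS : DivisorClosed S) : 0 ∉ S := fun h0 =>
  let ⟨a, ha⟩ := Infinite.exists_notMem_finset S
  ha (hS (dvd_zero a) h0)

lemma DivisorClosed.reciprocalSum_filter_dvd_le {S : Finset ℕ} (hS : DivisorClosed S) {e : ℕ}
    (he : 0 < e) : reciprocalSum {s ∈ S | e ∣ s} ≤ reciprocalSum S / e := by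
  have hsub : {s ∈ S | e ∣ s} ⊆ S.image (e * ·) := by
    intro s hs
    obtain ⟨hs, w, rfl⟩ := mem_filter.1 hs
    exact mem_image_of_mem _ (hS (dvd_mul_left w e) hs)
  calc reciprocalSum {s ∈ S | e ∣ s}
      ≤ ∑ s ∈ S.image (e * ·), (s : ℝ)⁻¹ :=
        sum_le_sum_of_subset_of_nonneg hsub fun _ _ _ => by positivity
    _ = ∑ s ∈ S, ((e * s : ℕ) : ℝ)⁻¹ := sum_image (mul_right_injective₀ he.ne').injOn
    _ = reciprocalSum S / e := by
        simp only [reciprocalSum, sum_mul, Nat.cast_mul, mul_inv_rev, div_eq_mul_inv]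

/-- The positive integers up to `Y` that are coprime to `Q`. -/
noncomputable def coprimeUpTo (Q : ℕ) (Y : ℝ) : Finset ℕ := {z ∈ Ioc 0 ⌊Y⌋₊ | z.Coprime Q}

lemma divisorClosed_coprimeUpTo (Q : ℕ) (Y : ℝ) : DivisorClosed (coprimeUpTo Q Y) := by
  intro a b hab hb
  simp only [coprimeUpTo, mem_filter, mem_Ioc] at hb ⊢
  exact ⟨⟨Nat.pos_of_dvd_of_pos hab hb.1.1, (Nat.le_of_dvd hb.1.1 hab).trans hb.1.2⟩,
    hb.2.coprime_dvd_left hab⟩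

lemma reciprocalSum_coprimeUpTo_le (Q : ℕ) {Y : ℝ} (hY : 1 ≤ Y) :
    reciprocalSum (coprimeUpTo Q Y) ≤ 1 + Real.log Y :=
  calc reciprocalSum (coprimeUpTo Q Y)
      ≤ ∑ s ∈ Icc 1 ⌊Y⌋₊, (s : ℝ)⁻¹ :=
        sum_le_sum_of_subset_of_nonneg (filter_subset _ _) fun _ _ _ => by positivity
    _ = harmonic ⌊Y⌋₊ := by push_cast [harmonic_eq_sum_Icc]; rfl
    _ ≤ 1 + Real.log Y := harmonic_floor_le_one_add_log Y hY

-- Only the integers `1 + t * Q` are used.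
lemma log_div_le_reciprocalSum_coprimeUpTo {Q : ℕ} (hQ : 0 < Q) {Y : ℝ} (hY : 0 ≤ Y) :
    Real.log (Y / Q) / Q ≤ reciprocalSum (coprimeUpTo Q Y) := by
  set K := ⌊Y / Q⌋₊
  have hKQ : K * Q ≤ ⌊Y⌋₊ := by
    rw [Nat.le_floor_iff hY, Nat.cast_mul, ← le_div_iff₀ (by positivity)]
    exact Nat.floor_le (by positivity)
  have hsub : (range K).image (fun t => 1 + t * Q) ⊆ coprimeUpTo Q Y := by
    intro z hz
    obtain ⟨t, ht, rfl⟩ := mem_image.1 hz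
    have htK : (t + 1) * Q ≤ K * Q := Nat.mul_le_mul_right Q (mem_range.1 ht)
    rw [Nat.succ_mul] at htK
    exact mem_filter.2 ⟨mem_Ioc.2 ⟨by lia, by lia⟩, by simp⟩
  have hinj : Function.Injective fun t => 1 + t * Q :=
    (add_right_injective 1).comp (mul_left_injective₀ hQ.ne')
  calc Real.log (Y / Q) / Q
      ≤ harmonic K / Q := by gcongr; exact log_le_harmonic_floor _ (by positivity)
    _ = ∑ t ∈ range K, ((t + 1) * Q : ℝ)⁻¹ := by
        simp only [harmonic, Rat.cast_sum, sum_div]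
        exact sum_congr rfl fun t _ => by push_cast; rw [mul_inv, div_eq_mul_inv]
    _ ≤ ∑ t ∈ range K, ((1 + t * Q : ℕ) : ℝ)⁻¹ := by
        have hQ1 : (1 : ℝ) ≤ Q := by exact_mod_cast hQ
        gcongr with t
        push_cast
        linarith
    _ = ∑ z ∈ (range K).image (fun t => 1 + t * Q), (z : ℝ)⁻¹ :=
        (sum_image (f := fun z : ℕ => (z : ℝ)⁻¹) hinj.injOn).symm
    _ ≤ reciprocalSum (coprimeUpTo Q Y) :=
        sum_le_sum_of_subset_of_nonneg hsub fun _ _ _ => by positivity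

end ReciprocalSums

section RootRange

/-- The positive integers whose `n`-th power is at most `X`; see `mem_rootRange`. -/
noncomputable def rootRange (n : ℕ) (X : ℝ) : Finset ℕ := Ioc 0 ⌊X ^ (n : ℝ)⁻¹⌋₊

variable {n : ℕ} {X : ℝ}

lemma mem_rootRange (hn : n ≠ 0) (hX : 0 ≤ X) {x : ℕ} :
    x ∈ rootRange n X ↔ 0 < x ∧ (x : ℝ) ^ n ≤ X := by
  rw [rootRange, mem_Ioc, Nat.le_floor_iff (by positivity),
    Real.le_rpow_inv_iff_of_pos (by positivity) hX (by positivity), Real.rpow_natCast]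

lemma card_filter_dvd_rootRange_le (hX : 0 ≤ X) (f : ℕ) :
    (#{x ∈ rootRange n X | f ∣ x} : ℝ) ≤ X ^ (n : ℝ)⁻¹ / f := by
  rw [rootRange, Nat.Ioc_filter_dvd_card_eq_div]
  refine Nat.cast_div_le.trans ?_
  gcongr
  exact Nat.floor_le (by positivity)

lemma half_root_le_card_rootRange (hX : 1 ≤ X) :
    X ^ (n : ℝ)⁻¹ / 2 ≤ #(rootRange n X) := by
  have hroot : 1 ≤ X ^ (n : ℝ)⁻¹ := Real.one_le_rpow hX (by positivity)
  have hfloor : (1 : ℝ) ≤ ⌊X ^ (n : ℝ)⁻¹⌋₊ := by exact_mod_cast (Nat.one_le_floor_iff _).2 hroot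
  rw [rootRange, Nat.card_Ioc, Nat.sub_zero]
  linarith [Nat.lt_floor_add_one (X ^ (n : ℝ)⁻¹)]

end RootRange

section Parametrisation

variable {ι κ : Type*} [Fintype κ] {n : ℕ} (m : κ → ι → ℕ)

/-- The monomials `∏ k, y k ^ m k i`, one for each `i`, with exponents given by the weights `m`. -/
def weightMonomial (y : κ → ℕ) (i : ι) : ℕ := ∏ k, y k ^ m k i

lemma weightMonomial_pos {y : κ → ℕ} (hy : ∀ k, 0 < y k) (i : ι) : 0 < weightMonomial m y i :=
  prod_pos fun k _ => pow_pos (hy k) _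

/-- The point with coordinates `x i ^ n * weightMonomial m y i` attached to parameters
`t = ⟨y, x⟩`. When all the weights `m k` have sum `n`, the product of the coordinates is an `n`-th
power. -/
def monomialVector (n : ℕ) (t : (_ : κ → ℕ) × (ι → ℕ)) (i : ι) : ℕ :=
  t.2 i ^ n * weightMonomial m t.1 i

variable [Fintype ι]

lemma prod_weightMonomial (hm : ∀ k, ∑ i, m k i = n) (y : κ → ℕ) :
    ∏ i, weightMonomial m y i = (∏ k, y k) ^ n := by
  simp only [weightMonomial]
  rw [Finset.prod_comm]
  simp only [prod_pow_eq_pow_sum, hm, prod_pow]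

lemma prod_monomialVector (hm : ∀ k, ∑ i, m k i = n) (t : (_ : κ → ℕ) × (ι → ℕ)) :
    ∏ i, monomialVector m n t i = ((∏ i, t.2 i) * ∏ k, t.1 k) ^ n := by
  simp only [monomialVector, prod_mul_distrib, prod_pow, prod_weightMonomial m hm, mul_pow]

lemma prod_root_div_weightMonomial (hn : n ≠ 0) (hm : ∀ k, ∑ i, m k i = n) {M : ℝ} (hM : 0 ≤ M)
    (y : κ → ℕ) :
    ∏ i, (M / weightMonomial m y i) ^ (n : ℝ)⁻¹ =
      (M ^ (n : ℝ)⁻¹) ^ Fintype.card ι * ∏ k, (y k : ℝ)⁻¹ := by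
  have hroot : ((∏ i, weightMonomial m y i : ℕ) : ℝ) ^ (n : ℝ)⁻¹ = ∏ k, (y k : ℝ) := by
    rw [prod_weightMonomial m hm, Nat.cast_pow, Real.pow_rpow_inv_natCast (by positivity) hn,
      Nat.cast_prod]
  calc ∏ i, (M / weightMonomial m y i) ^ (n : ℝ)⁻¹
      = ∏ i, M ^ (n : ℝ)⁻¹ / (weightMonomial m y i : ℝ) ^ (n : ℝ)⁻¹ :=
        prod_congr rfl fun i _ => Real.div_rpow hM (by positivity) _
    _ = (M ^ (n : ℝ)⁻¹) ^ Fintype.card ι / ((∏ i, weightMonomial m y i : ℕ) : ℝ) ^ (n : ℝ)⁻¹ := by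
        rw [prod_div_distrib, prod_const, card_univ, Nat.cast_prod,
          Real.finsetProd_rpow _ _ fun i _ => by positivity]
    _ = (M ^ (n : ℝ)⁻¹) ^ Fintype.card ι * ∏ k, (y k : ℝ)⁻¹ := by
        rw [hroot, div_eq_mul_inv, prod_inv_distrib]

variable [DecidableEq ι] [DecidableEq κ]

/-- The parameters `⟨y, x⟩` with all `y k ∈ S` and all `x i` positive whose `monomialVector` has
coordinates at most `M`; see `mem_parameterBox`. -/
noncomputable def parameterBox (n : ℕ) (S : Finset ℕ) (M : ℝ) :
    Finset ((_ : κ → ℕ) × (ι → ℕ)) :=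
  (Fintype.piFinset fun _ => S).sigma fun y =>
    Fintype.piFinset fun i => rootRange n (M / weightMonomial m y i)

variable {m} {S : Finset ℕ} {M : ℝ}

lemma mem_parameterBox (hn : n ≠ 0) (hS : 0 ∉ S) (hM : 0 ≤ M) {t : (_ : κ → ℕ) × (ι → ℕ)} :
    t ∈ parameterBox m n S M ↔
      (∀ k, t.1 k ∈ S) ∧ ∀ i, 0 < t.2 i ∧ (monomialVector m n t i : ℝ) ≤ M := by
  simp only [parameterBox, mem_sigma, Fintype.mem_piFinset]
  refine and_congr_right fun hy => forall_congr' fun i => ?_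
  have hpos : 0 < weightMonomial m t.1 i :=
    weightMonomial_pos m (fun k => Nat.pos_of_ne_zero fun h => hS (h ▸ hy k)) i
  rw [mem_rootRange hn (by positivity), le_div_iff₀ (by exact_mod_cast hpos), monomialVector,
    Nat.cast_mul, Nat.cast_pow]

lemma card_filter_dvd_parameterBox_le (hn : n ≠ 0) (hm : ∀ k, ∑ i, m k i = n)
    (hS : DivisorClosed S) (hM : 0 ≤ M) {e : κ ⊕ ι → ℕ} (he : ∀ j, 0 < e j) :
    (#{t ∈ parameterBox m n S M | ∀ j, e j ∣ (Sum.elim t.1 t.2 : κ ⊕ ι → ℕ) j} : ℝ) ≤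
      (M ^ (n : ℝ)⁻¹) ^ Fintype.card ι * reciprocalSum S ^ Fintype.card κ / ∏ j, (e j : ℝ) := by
  have hfilter : {t ∈ parameterBox m n S M | ∀ j, e j ∣ (Sum.elim t.1 t.2 : κ ⊕ ι → ℕ) j} =
      (Fintype.piFinset fun k => {s ∈ S | e (.inl k) ∣ s}).sigma fun y =>
        Fintype.piFinset fun i =>
          {x ∈ rootRange n (M / weightMonomial m y i) | e (.inr i) ∣ x} := by
    ext ⟨y, x⟩
    simp only [parameterBox, mem_filter, mem_sigma, Fintype.mem_piFinset, Sum.forall,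
      Sum.elim_inl, Sum.elim_inr, forall_and]
    tauto
  rw [hfilter, card_sigma, Nat.cast_sum]
  calc ∑ y ∈ Fintype.piFinset fun k => {s ∈ S | e (.inl k) ∣ s},
        ((#(Fintype.piFinset fun i =>
          {x ∈ rootRange n (M / weightMonomial m y i) | e (.inr i) ∣ x}) : ℕ) : ℝ)
      ≤ ∑ y ∈ Fintype.piFinset fun k => {s ∈ S | e (.inl k) ∣ s},
          ∏ i, (M / weightMonomial m y i) ^ (n : ℝ)⁻¹ / e (.inr i) := by
        gcongr with y
        rw [Fintype.card_piFinset, Nat.cast_prod]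
        gcongr with i
        exact card_filter_dvd_rootRange_le (by positivity) _
    _ = (M ^ (n : ℝ)⁻¹) ^ Fintype.card ι / (∏ i, (e (.inr i) : ℝ)) *
          ∏ k, reciprocalSum {s ∈ S | e (.inl k) ∣ s} := by
        simp only [← sum_piFinset_prod_inv, prod_div_distrib,
          prod_root_div_weightMonomial m hn hm hM, mul_sum]
        exact sum_congr rfl fun y _ => by ring
    _ ≤ (M ^ (n : ℝ)⁻¹) ^ Fintype.card ι / (∏ i, (e (.inr i) : ℝ)) *
          ∏ k, reciprocalSum S / e (.inl k) := by
        gcongr with k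
        · exact fun k _ => reciprocalSum_nonneg _
        · exact hS.reciprocalSum_filter_dvd_le (he _)
    _ = (M ^ (n : ℝ)⁻¹) ^ Fintype.card ι * reciprocalSum S ^ Fintype.card κ /
          ∏ j, (e j : ℝ) := by
        rw [prod_div_distrib, prod_const, card_univ, Fintype.prod_sum_type]
        ring

lemma card_parameterBox_le (hn : n ≠ 0) (hm : ∀ k, ∑ i, m k i = n) (hS : DivisorClosed S)
    (hM : 0 ≤ M) :
    (#(parameterBox m n S M) : ℝ) ≤
      (M ^ (n : ℝ)⁻¹) ^ Fintype.card ι * reciprocalSum S ^ Fintype.card κ := by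
  simpa using card_filter_dvd_parameterBox_le hn hm hS hM (e := 1) fun _ => one_pos

lemma le_card_parameterBox (hn : n ≠ 0) (hm : ∀ k, ∑ i, m k i = n) (hS : 0 ∉ S)
    (hM : ∀ y : κ → ℕ, (∀ k, y k ∈ S) → ∀ i, (weightMonomial m y i : ℝ) ≤ M) (hM₀ : 0 ≤ M) :
    (M ^ (n : ℝ)⁻¹) ^ Fintype.card ι * reciprocalSum S ^ Fintype.card κ / 2 ^ Fintype.card ι ≤
      #(parameterBox m n S M) := by
  rw [parameterBox, card_sigma, Nat.cast_sum]
  calc (M ^ (n : ℝ)⁻¹) ^ Fintype.card ι * reciprocalSum S ^ Fintype.card κ / 2 ^ Fintype.card ι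
      = ∑ y ∈ Fintype.piFinset fun _ : κ => S,
          ∏ i, (M / weightMonomial m y i) ^ (n : ℝ)⁻¹ / 2 := by
        rw [← card_univ (α := κ), ← prod_const (reciprocalSum S), ← sum_piFinset_prod_inv]
        simp only [prod_div_distrib, prod_const, card_univ,
          prod_root_div_weightMonomial m hn hm hM₀, mul_sum, sum_div]
    _ ≤ ∑ y ∈ Fintype.piFinset fun _ : κ => S,
          ((#(Fintype.piFinset fun i => rootRange n (M / weightMonomial m y i)) : ℕ) : ℝ) := by
        gcongr with y hy
        rw [Fintype.card_piFinset, Nat.cast_prod]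
        rw [Fintype.mem_piFinset] at hy
        gcongr with i
        have hpos : 0 < weightMonomial m y i :=
          weightMonomial_pos m (fun k => Nat.pos_of_ne_zero fun h => hS (h ▸ hy k)) i
        exact half_root_le_card_rootRange
          ((one_le_div (by exact_mod_cast hpos)).2 (hM y hy i))

end Parametrisation

section Sieve

/-- No integer larger than `P` divides two entries of `z`, and no square of such an integer divides
a single entry. -/
structure AlmostCoprime {α : Type*} (P : ℕ) (z : α → ℕ) : Prop where
  not_sq_dvd : ∀ d > P, ∀ j, ¬ d ^ 2 ∣ z j
  not_dvd_of_ne : ∀ d > P, ∀ j k, j ≠ k → d ∣ z j → ¬ d ∣ z k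

/-- The vector with a factor `d` at each of the places `j` and `k` (so `d ^ 2` if `j = k`) and `1`
elsewhere. Failure of `AlmostCoprime` means divisibility by such a vector. -/
def pairDivisor {α : Type*} [DecidableEq α] (d : ℕ) (j k : α) : α → ℕ :=
  Pi.mulSingle j d * Pi.mulSingle k d

lemma exists_pairDivisor_dvd_of_not_almostCoprime {α : Type*} [DecidableEq α] {P : ℕ} {z : α → ℕ}
    (hz : ¬ AlmostCoprime P z) :
    ∃ d > P, ∃ j k, ∀ l, pairDivisor d j k l ∣ z l := by
  by_contra! h
  refine hz ⟨fun d hd j hdj => ?_, fun d hd j k hjk hdj hdk => ?_⟩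
  · obtain ⟨l, hl⟩ := h d hd j j
    rcases eq_or_ne l j with rfl | hlj
    · exact hl (by simpa [pairDivisor, sq] using hdj)
    · exact hl (by simp [pairDivisor, hlj])
  · obtain ⟨l, hl⟩ := h d hd j k
    rcases eq_or_ne l j with rfl | hlj
    · exact hl (by simpa [pairDivisor, hjk] using hdj)
    rcases eq_or_ne l k with rfl | hlk
    · exact hl (by simpa [pairDivisor, hlj] using hdk)
    · exact hl (by simp [pairDivisor, hlj, hlk])

variable {ι κ : Type*} [Fintype ι] [Fintype κ] [DecidableEq ι] [DecidableEq κ] {n P : ℕ}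
  {m : κ → ι → ℕ} {S : Finset ℕ} {M : ℝ}

lemma pos_of_mem_parameterBox (hn : n ≠ 0) (hS : 0 ∉ S) (hM : 0 ≤ M) {t : (_ : κ → ℕ) × (ι → ℕ)}
    (ht : t ∈ parameterBox m n S M) (j : κ ⊕ ι) : 0 < (Sum.elim t.1 t.2 : κ ⊕ ι → ℕ) j := by
  rw [mem_parameterBox hn hS hM] at ht
  cases j with
  | inl k => exact Nat.pos_of_ne_zero fun h => hS (h ▸ ht.1 k)
  | inr i => exact (ht.2 i).1

lemma card_filter_pairDivisor_dvd_le (hn : n ≠ 0) (hm : ∀ k, ∑ i, m k i = n)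
    (hS : DivisorClosed S) (hM : 0 ≤ M) {d : ℕ} (hd : 0 < d) (j k : κ ⊕ ι) :
    (#{t ∈ parameterBox m n S M | ∀ l, pairDivisor d j k l ∣ Sum.elim t.1 t.2 l} : ℝ) ≤
      (M ^ (n : ℝ)⁻¹) ^ Fintype.card ι * reciprocalSum S ^ Fintype.card κ / d ^ 2 := by
  have hpos : ∀ l, 0 < pairDivisor d j k l := fun l => by
    simp only [pairDivisor, Pi.mul_apply, Pi.mulSingle_apply]
    split_ifs <;> positivity
  have hprod : ∏ l, (pairDivisor d j k l : ℝ) = d ^ 2 := by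
    simp only [pairDivisor, Pi.mul_apply, Nat.cast_mul, prod_mul_distrib, ← Nat.cast_prod,
      Fintype.prod_pi_mulSingle', sq]
  exact hprod ▸ card_filter_dvd_parameterBox_le hn hm hS hM hpos

open scoped Classical in
lemma card_filter_not_almostCoprime_le (hn : n ≠ 0) (hm : ∀ k, ∑ i, m k i = n)
    (hS : DivisorClosed S) (hM : 0 ≤ M) (hP : P ≠ 0) :
    (#{t ∈ parameterBox m n S M | ¬ AlmostCoprime P (Sum.elim t.1 t.2)} : ℝ) ≤
      Fintype.card (κ ⊕ ι) ^ 2 *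
        ((M ^ (n : ℝ)⁻¹) ^ Fintype.card ι * reciprocalSum S ^ Fintype.card κ) / P := by
  set V := (M ^ (n : ℝ)⁻¹) ^ Fintype.card ι * reciprocalSum S ^ Fintype.card κ
  have hV : 0 ≤ V := mul_nonneg (by positivity) (pow_nonneg (reciprocalSum_nonneg S) _)
  set N := max P ((parameterBox m n S M).sup fun t => univ.sup (Sum.elim t.1 t.2))
  let multiples (q : ℕ × (κ ⊕ ι) × (κ ⊕ ι)) := {t ∈ parameterBox m n S M |
    ∀ l, pairDivisor q.1 q.2.1 q.2.2 l ∣ Sum.elim t.1 t.2 l}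
  have hcover : {t ∈ parameterBox m n S M | ¬ AlmostCoprime P (Sum.elim t.1 t.2)} ⊆
      (Ioc P N ×ˢ univ).biUnion multiples := by
    intro t ht
    obtain ⟨ht, hnot⟩ := mem_filter.1 ht
    obtain ⟨d, hd, j, k, hdvd⟩ := exists_pairDivisor_dvd_of_not_almostCoprime hnot
    have hdN : d ≤ N := calc
      d ≤ (Sum.elim t.1 t.2 : κ ⊕ ι → ℕ) j :=
        Nat.le_of_dvd (pos_of_mem_parameterBox hn hS.zero_notMem hM ht j)
          (.trans (by simp [pairDivisor]) (hdvd j))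
      _ ≤ univ.sup (Sum.elim t.1 t.2) := le_sup (mem_univ j)
      _ ≤ N := (le_sup (f := fun t : (_ : κ → ℕ) × (ι → ℕ) => univ.sup (Sum.elim t.1 t.2))
          ht).trans (le_max_right _ _)
    exact mem_biUnion.2 ⟨(d, j, k), by simp [hd, hdN], mem_filter.2 ⟨ht, hdvd⟩⟩
  have hmultiples : ∀ q ∈ Ioc P N ×ˢ univ, (#(multiples q) : ℝ) ≤ V * ((q.1 : ℝ) ^ 2)⁻¹ := by
    rintro ⟨d, j, k⟩ hq
    have hPd : P < d := (mem_Ioc.1 (mem_product.1 hq).1).1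
    rw [← div_eq_mul_inv]
    exact card_filter_pairDivisor_dvd_le hn hm hS hM (Nat.zero_lt_of_lt hPd) j k
  calc (#{t ∈ parameterBox m n S M | ¬ AlmostCoprime P (Sum.elim t.1 t.2)} : ℝ)
      ≤ ∑ q ∈ Ioc P N ×ˢ univ, (#(multiples q) : ℝ) := by
        exact_mod_cast (card_le_card hcover).trans card_biUnion_le
    _ ≤ ∑ q ∈ Ioc P N ×ˢ univ, V * ((q.1 : ℝ) ^ 2)⁻¹ := sum_le_sum hmultiples
    _ = Fintype.card (κ ⊕ ι) ^ 2 * V * ∑ d ∈ Ioc P N, ((d : ℝ) ^ 2)⁻¹ := by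
        rw [sum_product]
        simp only [sum_const, card_univ, Fintype.card_prod, nsmul_eq_mul, mul_sum, Nat.cast_mul]
        exact sum_congr rfl fun d _ => by ring
    _ ≤ Fintype.card (κ ⊕ ι) ^ 2 * V * (P : ℝ)⁻¹ := by
        gcongr
        exact (sum_Ioc_inv_sq_le_sub hP (le_max_left _ _)).trans (sub_le_self _ (by positivity))
    _ = Fintype.card (κ ⊕ ι) ^ 2 * V / P := (div_eq_mul_inv _ _).symm

open scoped Classical in
lemma le_card_filter_almostCoprime (hn : n ≠ 0) (hm : ∀ k, ∑ i, m k i = n)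
    (hS : DivisorClosed S) (hM : ∀ y : κ → ℕ, (∀ k, y k ∈ S) → ∀ i, (weightMonomial m y i : ℝ) ≤ M)
    (hM₀ : 0 ≤ M) (hP : P ≠ 0)
    (hPbig : Fintype.card (κ ⊕ ι) ^ 2 * 2 ^ (Fintype.card ι + 1) ≤ P) :
    (M ^ (n : ℝ)⁻¹) ^ Fintype.card ι * reciprocalSum S ^ Fintype.card κ /
        2 ^ (Fintype.card ι + 1) ≤
      #{t ∈ parameterBox m n S M | AlmostCoprime P (Sum.elim t.1 t.2)} := by
  have hall := le_card_parameterBox hn hm hS.zero_notMem hM hM₀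
  have hbad := card_filter_not_almostCoprime_le hn hm hS hM₀ hP
  set V := (M ^ (n : ℝ)⁻¹) ^ Fintype.card ι * reciprocalSum S ^ Fintype.card κ
  have hV : 0 ≤ V := mul_nonneg (by positivity) (pow_nonneg (reciprocalSum_nonneg S) _)
  have hloss : Fintype.card (κ ⊕ ι) ^ 2 * V / P ≤ V / 2 ^ (Fintype.card ι + 1) := by
    have hPbig' : (Fintype.card (κ ⊕ ι) ^ 2 * 2 ^ (Fintype.card ι + 1) : ℝ) ≤ P := by
      exact_mod_cast hPbig
    rw [div_le_div_iff₀ (by positivity) (by positivity)]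
    nlinarith [mul_le_mul_of_nonneg_left hPbig' hV]
  have hsplit : (#{t ∈ parameterBox m n S M | AlmostCoprime P (Sum.elim t.1 t.2)} : ℝ) +
      #{t ∈ parameterBox m n S M | ¬ AlmostCoprime P (Sum.elim t.1 t.2)} =
        #(parameterBox m n S M) := by
    exact_mod_cast card_filter_add_card_filter_not _
  have hhalf : V / 2 ^ Fintype.card ι = 2 * (V / 2 ^ (Fintype.card ι + 1)) := by ring
  linarith

end Sieve

section Sieved

variable {ι κ : Type*} {n P : ℕ} {m : κ → ι → ℕ}

/-- Parameters `⟨y, x⟩` from which the vector `monomialVector m n ⟨y, x⟩` can be recovered: away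
from primes `p ≤ P`, which do not divide any `y k`, at most one entry is divisible by `p`, and only
once. -/
structure IsSieved (P : ℕ) (t : (_ : κ → ℕ) × (ι → ℕ)) : Prop where
  pos : ∀ j, 0 < (Sum.elim t.1 t.2 : κ ⊕ ι → ℕ) j
  coprime_factorial : ∀ k, (t.1 k).Coprime P !
  almostCoprime : AlmostCoprime P (Sum.elim t.1 t.2)

variable {t t' : (_ : κ → ℕ) × (ι → ℕ)}

lemma IsSieved.lt_of_prime_of_dvd (ht : IsSieved P t) {p : ℕ} (hp : p.Prime) {k : κ}
    (hk : p ∣ t.1 k) : P < p := by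
  by_contra! hpP
  exact Nat.not_coprime_of_dvd_of_dvd hp.one_lt hk (hp.dvd_factorial.2 hpP)
    (ht.coprime_factorial k)

lemma IsSieved.factorization_eq_zero_or_single [DecidableEq κ] (ht : IsSieved P t) {p : ℕ}
    (hp : p.Prime) :
    (fun k => (t.1 k).factorization p) = 0 ∨
      ∃ k, (fun k => (t.1 k).factorization p) = Pi.single k 1 := by
  by_cases hdvd : ∃ k, p ∣ t.1 k
  · obtain ⟨k, hk⟩ := hdvd
    have hpP := ht.lt_of_prime_of_dvd hp hk
    refine .inr ⟨k, funext fun l => ?_⟩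
    rcases eq_or_ne l k with rfl | hlk
    · have hpos : t.1 l ≠ 0 := (ht.pos (.inl l)).ne'
      have hsq := ht.almostCoprime.not_sq_dvd p hpP (.inl l)
      rw [Sum.elim_inl, hp.pow_dvd_iff_le_factorization hpos] at hsq
      rw [hp.dvd_iff_one_le_factorization hpos] at hk
      rw [Pi.single_eq_same]
      lia
    · rw [Pi.single_eq_of_ne hlk]
      exact Nat.factorization_eq_zero_of_not_dvd fun hl =>
        ht.almostCoprime.not_dvd_of_ne p hpP (.inl l) (.inl k) (by simpa using hlk) hl hk
  · push Not at hdvd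
    exact .inl (funext fun k => Nat.factorization_eq_zero_of_not_dvd (hdvd k))

variable [Fintype κ]

lemma IsSieved.factorization_monomialVector (ht : IsSieved P t) (i : ι) (p : ℕ) :
    (monomialVector m n t i).factorization p =
      n * (t.2 i).factorization p + ∑ k, (t.1 k).factorization p * m k i := by
  have hx : t.2 i ≠ 0 := (ht.pos (.inr i)).ne'
  have hy : ∀ k, t.1 k ≠ 0 := fun k => (ht.pos (.inl k)).ne'
  rw [monomialVector, weightMonomial, Nat.factorization_mul (pow_ne_zero n hx)
    (prod_ne_zero_iff.2 fun k _ => pow_ne_zero _ (hy k)), Finsupp.add_apply,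
    Nat.factorization_prod_apply fun k _ => pow_ne_zero _ (hy k)]
  simp only [Nat.factorization_pow, Finsupp.smul_apply, smul_eq_mul, mul_comm (m _ i)]

lemma eq_of_sum_mul_modEq [DecidableEq κ] (hm₀ : ∀ k, m k ≠ 0) (hlt : ∀ k i, m k i < n)
    (hinj : Function.Injective m) {u u' : κ → ℕ} (hu : u = 0 ∨ ∃ k, u = Pi.single k 1)
    (hu' : u' = 0 ∨ ∃ k, u' = Pi.single k 1)
    (h : ∀ i, ∑ k, u k * m k i ≡ ∑ k, u' k * m k i [MOD n]) : u = u' := by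
  have hsingle : ∀ k i, ∑ l, (Pi.single k 1 : κ → ℕ) l * m l i = m k i := fun k i => by
    simp [Pi.single_apply]
  have hzero : ∀ i, ∑ l, (0 : κ → ℕ) l * m l i = 0 := fun i => by simp
  rcases hu with rfl | ⟨k, rfl⟩ <;> rcases hu' with rfl | ⟨k', rfl⟩
  · rfl
  · refine absurd (funext fun i => ?_) (hm₀ k')
    have hi := h i
    rw [hsingle, hzero] at hi
    exact (hi.eq_of_lt_of_lt (Nat.zero_lt_of_lt (hlt k' i)) (hlt k' i)).symm
  · refine absurd (funext fun i => ?_) (hm₀ k)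
    have hi := h i
    rw [hsingle, hzero] at hi
    exact hi.eq_of_lt_of_lt (hlt k i) (Nat.zero_lt_of_lt (hlt k i))
  · have hkk' : k = k' := hinj (funext fun i => by
      have hi := h i
      rw [hsingle, hsingle] at hi
      exact hi.eq_of_lt_of_lt (hlt k i) (hlt k' i))
    rw [hkk']

lemma IsSieved.monomialVector_pos (ht : IsSieved P t) (i : ι) : 0 < monomialVector m n t i :=
  mul_pos (pow_pos (ht.pos (.inr i)) n) (weightMonomial_pos m (fun k => ht.pos (.inl k)) i)

-- The valuations of the `y k` are read off from those of the vector modulo `n`.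
lemma IsSieved.eq_of_monomialVector_eq (hn : n ≠ 0) (hm₀ : ∀ k, m k ≠ 0)
    (hlt : ∀ k i, m k i < n) (hinj : Function.Injective m) (ht : IsSieved P t)
    (ht' : IsSieved P t') (h : monomialVector m n t = monomialVector m n t') : t = t' := by
  classical
  have hy : t.1 = t'.1 := by
    funext k
    refine Nat.eq_of_factorization_eq (ht.pos (.inl k)).ne' (ht'.pos (.inl k)).ne' fun p => ?_
    by_cases hp : p.Prime
    · refine congr_fun (eq_of_sum_mul_modEq hm₀ hlt hinj (ht.factorization_eq_zero_or_single hp)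
        (ht'.factorization_eq_zero_or_single hp) fun i => ?_) k
      have hi := congr_arg (fun v => (v i).factorization p % n) h
      simpa only [ht.factorization_monomialVector, ht'.factorization_monomialVector,
        Nat.mul_add_mod, Nat.ModEq] using hi
    · simp only [Nat.factorization_eq_zero_of_not_prime _ hp]
  have hx : t.2 = t'.2 := by
    funext i
    have hpos : 0 < weightMonomial m t'.1 i := weightMonomial_pos m (fun k => ht'.pos (.inl k)) i
    have hi := congr_fun h i
    rw [monomialVector, monomialVector, hy] at hi
    exact Nat.pow_left_injective hn (Nat.eq_of_mul_eq_mul_right hpos hi)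
  exact Sigma.ext hy (heq_of_eq hx)

lemma IsSieved.coprime_of_dvd (ht : IsSieved P t) {k : κ} {i : ι} (hi : m k i = 0) {c g : ℕ}
    (hc₀ : 0 < c) (hcP : c ≤ P) (hg : g ∣ c * monomialVector m n t i) : g.Coprime (t.1 k) := by
  refine Nat.coprime_of_dvd fun p hp hpg hpk => ?_
  have hpP := ht.lt_of_prime_of_dvd hp hpk
  rcases hp.dvd_mul.1 (hpg.trans hg) with hpc | hpv
  · exact hcP.not_gt (hpP.trans_le (Nat.le_of_dvd hc₀ hpc))
  rcases hp.dvd_mul.1 hpv with hpx | hpw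
  · exact ht.almostCoprime.not_dvd_of_ne p hpP (.inl k) (.inr i) (by simp) hpk
      (hp.dvd_of_dvd_pow hpx)
  · obtain ⟨l, -, hl⟩ := hp.prime.exists_mem_finset_dvd hpw
    rcases eq_or_ne l k with rfl | hlk
    · exact hp.one_lt.ne' (Nat.dvd_one.1 (by simpa [hi] using hl))
    · exact ht.almostCoprime.not_dvd_of_ne p hpP (.inl l) (.inl k) (by simpa using hlk)
        (hp.dvd_of_dvd_pow hl) hpk

lemma IsSieved.le_pow_of_dvd (hzero : ∀ k, ∃ i, m k i = 0) (ht : IsSieved P t) {c : ι → ℕ}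
    (hc₀ : ∀ i, 0 < c i) (hcP : ∀ i, c i ≤ P) {i j : ι} (hij : i ≠ j) (hci : c i = 1)
    (hcj : c j = 1) {g : ℕ} (hg : ∀ i, g ∣ c i * monomialVector m n t i) : g ≤ P ^ n := by
  have hcoprime : ∀ k, g.Coprime (t.1 k) := fun k =>
    let ⟨l, hl⟩ := hzero k
    ht.coprime_of_dvd hl (hc₀ l) (hcP l) (hg l)
  have hdvd : ∀ l, c l = 1 → g ∣ t.2 l ^ n := fun l hl =>
    (Nat.Coprime.prod_right fun k _ => (hcoprime k).pow_right (m k l)).dvd_of_dvd_mul_right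
      (by simpa only [hl, one_mul, monomialVector, weightMonomial] using hg l)
  have hgcd : (t.2 i).gcd (t.2 j) ≤ P := by
    by_contra! hlt
    exact ht.almostCoprime.not_dvd_of_ne _ hlt (.inr i) (.inr j) (by simpa using hij)
      (Nat.gcd_dvd_left _ _) (Nat.gcd_dvd_right _ _)
  calc g ≤ (t.2 i).gcd (t.2 j) ^ n := by
        refine Nat.le_of_dvd (pow_pos (Nat.gcd_pos_of_pos_left _ (ht.pos (.inr i))) n) ?_
        rw [← Nat.pow_gcd_pow]
        exact Nat.dvd_gcd (hdvd i hci) (hdvd j hcj)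
    _ ≤ P ^ n := Nat.pow_le_pow_left hgcd n

end Sieved

section CubeClass

/-- The weights given by the permutations of `{0, 1, 2}`. These are the nonzero residues modulo `3`
of the valuations of a coprime triple whose product is a cube. -/
def permWeight (σ : Equiv.Perm (Fin 3)) (i : Fin 3) : ℕ := σ i

lemma sum_permWeight (σ : Equiv.Perm (Fin 3)) : ∑ i, permWeight σ i = 3 := by
  revert σ; decide

lemma sum_permWeight_apply (i : Fin 3) : ∑ σ, permWeight σ i = 6 := by
  revert i; decide

lemma exists_permWeight_eq_zero (σ : Equiv.Perm (Fin 3)) : ∃ i, permWeight σ i = 0 :=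
  ⟨σ.symm 0, by simp [permWeight]⟩

lemma permWeight_ne_zero (σ : Equiv.Perm (Fin 3)) : permWeight σ ≠ 0 := fun h => by
  simpa [h] using sum_permWeight σ

lemma permWeight_injective : Function.Injective permWeight := fun _ _ h =>
  Equiv.ext fun i => Fin.ext (congr_fun h i)

/-- The triples of positive integers up to `B` that have no common factor and whose product is `q`
times a rational cube. -/
noncomputable def cubeClassTriples (q : ℚ) (B : ℝ) : Finset (Fin 3 → ℕ) :=
  open scoped Classical in
  {a ∈ Fintype.piFinset fun _ => Ioc 0 ⌊B⌋₊ |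
    univ.gcd a = 1 ∧ ∃ r : ℚ, ∏ i, (a i : ℚ) = q * r ^ 3}

lemma mem_cubeClassTriples {q : ℚ} {B : ℝ} (hB : 0 ≤ B) {a : Fin 3 → ℕ} :
    a ∈ cubeClassTriples q B ↔ (∀ i, 0 < a i ∧ (a i : ℝ) ≤ B) ∧ univ.gcd a = 1 ∧
      ∃ r : ℚ, ∏ i, (a i : ℚ) = q * r ^ 3 := by
  simp only [cubeClassTriples, mem_filter, Fintype.mem_piFinset, mem_Ioc, Nat.le_floor_iff hB]

lemma exists_natCast_mul_cube {q : ℚ} (hq : q ≠ 0) :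
    ∃ k : ℕ, 0 < k ∧ ∃ s : ℚ, s ≠ 0 ∧ q = k * s ^ 3 := by
  have hden : (q.den : ℚ) ≠ 0 := by exact_mod_cast q.den_nz
  have hnum : q = (q.num * q.den ^ 2 : ℤ) * (1 / q.den : ℚ) ^ 3 := by
    nth_rewrite 1 [← Rat.num_div_den q]
    push_cast
    field_simp
  refine ⟨(q.num * q.den ^ 2 : ℤ).natAbs, by simp [Nat.pos_iff_ne_zero, hq], ?_⟩
  rcases Int.natAbs_eq (q.num * q.den ^ 2) with h | h
  · exact ⟨1 / q.den, by simp, by rw [← Int.cast_natCast, ← h, ← hnum]⟩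
  · refine ⟨-(1 / q.den), by simp, ?_⟩
    rw [Odd.neg_pow (by decide), mul_neg, ← neg_mul, ← Int.cast_natCast, ← Int.cast_neg, ← h,
      ← hnum]

lemma cubeClassTriples_mul_cube (q : ℚ) {s : ℚ} (hs : s ≠ 0) (B : ℝ) :
    cubeClassTriples (q * s ^ 3) B = cubeClassTriples q B := by
  have hiff : ∀ x : ℚ, (∃ r, x = q * s ^ 3 * r ^ 3) ↔ ∃ r, x = q * r ^ 3 := fun x =>
    ⟨fun ⟨r, hr⟩ => ⟨s * r, by rw [hr]; ring⟩, fun ⟨r, hr⟩ => ⟨r / s, by rw [hr]; field_simp⟩⟩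
  ext a
  simp only [cubeClassTriples, mem_filter, hiff]

end CubeClass

section CubeResidue

lemma factorization_modEq_of_eq_mul_pow {n N k : ℕ} {r : ℚ} (hN : N ≠ 0) (h : (N : ℚ) = k * r ^ n)
    {p : ℕ} (hp : p.Prime) : N.factorization p ≡ k.factorization p [MOD n] := by
  have : Fact p.Prime := ⟨hp⟩
  have hkr : (k : ℚ) * r ^ n ≠ 0 := h ▸ Nat.cast_ne_zero.2 hN
  have hval : (N.factorization p : ℤ) = k.factorization p + n * padicValRat p r := by
    rw [Nat.factorization_def _ hp, Nat.factorization_def _ hp, ← padicValRat.of_nat,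
      ← padicValRat.of_nat, h, padicValRat.mul (left_ne_zero_of_mul hkr) (right_ne_zero_of_mul hkr),
      padicValRat.pow]
  rw [← Int.natCast_modEq_iff, hval]
  exact Int.modEq_add_fac_self

/-- The valuations of the coordinates of `a` at `p`, reduced modulo `3`. -/
def cubeResidue (a : Fin 3 → ℕ) (p : ℕ) (i : Fin 3) : Fin 3 := Fin.ofNat 3 ((a i).factorization p)

lemma cubeResidue_eq_zero_or_perm {a : Fin 3 → ℕ} {k : ℕ} {r : ℚ} (ha : ∀ i, a i ≠ 0)
    (hgcd : univ.gcd a = 1) (hr : ∏ i, (a i : ℚ) = k * r ^ 3) {p : ℕ} (hp : p.Prime)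
    (hpk : ¬ p ∣ k) :
    cubeResidue a p = 0 ∨ ∃ σ : Equiv.Perm (Fin 3), cubeResidue a p = σ := by
  have hsum : 3 ∣ ∑ i, (cubeResidue a p i : ℕ) := by
    have hmod := factorization_modEq_of_eq_mul_pow (N := ∏ i, a i)
      (prod_ne_zero_iff.2 fun i _ => ha i) (by exact_mod_cast hr) hp
    rw [Nat.factorization_prod_apply fun i _ => ha i, Nat.factorization_eq_zero_of_not_dvd hpk,
      Nat.modEq_zero_iff_dvd] at hmod
    simpa only [cubeResidue, Fin.val_ofNat, Nat.dvd_iff_mod_eq_zero, ← Finset.sum_nat_mod]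
      using hmod
  have hzero : ∃ i, cubeResidue a p i = 0 := by
    by_contra! hne
    refine hp.one_lt.ne' (Nat.dvd_one.1 (hgcd ▸ dvd_gcd fun i _ => ?_))
    by_contra hpi
    exact hne i (by simp [cubeResidue, Nat.factorization_eq_zero_of_not_dvd hpi])
  have hclass : ∀ ρ : Fin 3 → Fin 3, 3 ∣ ∑ i, (ρ i : ℕ) → (∃ i, ρ i = 0) →
      ρ = 0 ∨ ∃ σ : Equiv.Perm (Fin 3), ρ = σ := by decide
  exact hclass _ hsum hzero

lemma prod_pow_eq_weightMonomial {U : Finset ℕ} {ρ : ℕ → Fin 3 → Fin 3}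
    (hρ : ∀ p ∈ U, ρ p = 0 ∨ ∃ σ : Equiv.Perm (Fin 3), ρ p = σ) (i : Fin 3) :
    ∏ p ∈ U, p ^ (ρ p i : ℕ) =
      weightMonomial permWeight (fun σ => ∏ p ∈ U with ρ p = σ, p) i := by
  simp only [weightMonomial, permWeight, prod_filter, ← prod_pow]
  rw [Finset.prod_comm]
  refine prod_congr rfl fun p hp => ?_
  rcases hρ p hp with hzero | ⟨τ, hτ⟩
  · rw [Fintype.prod_eq_one _ fun σ => ?_, hzero, Pi.zero_apply, Fin.val_zero, pow_zero]
    split_ifs with hσ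
    · rw [← hσ, hzero, Pi.zero_apply, Fin.val_zero, pow_zero]
    · exact one_pow _
  · rw [Fintype.prod_eq_single τ fun σ hσ => ?_]
    · rw [if_pos hτ, hτ]
    · rw [if_neg (hτ ▸ fun h => hσ (DFunLike.coe_injective h.symm)), one_pow]

lemma exists_eq_mul_monomialVector {a : Fin 3 → ℕ} {k : ℕ} {r : ℚ} (ha : ∀ i, a i ≠ 0)
    (hgcd : univ.gcd a = 1) (hr : ∏ i, (a i : ℚ) = k * r ^ 3) :
    ∃ c : Fin 3 → ℕ, ∃ t, (∀ i, c i ∣ k ^ 2) ∧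
      ∀ i, a i = c i * monomialVector permWeight 3 t i := by
  let U := (∏ i, a i).primeFactors
  have hU : ∀ p ∈ U, p.Prime := fun p hp => Nat.prime_of_mem_primeFactors hp
  let x i := ∏ p ∈ U, p ^ ((a i).factorization p / 3)
  let y (σ : Equiv.Perm (Fin 3)) := ∏ p ∈ U with ¬ p ∣ k ∧ cubeResidue a p = σ, p
  let c i := ∏ p ∈ U with p ∣ k, p ^ (cubeResidue a p i : ℕ)
  refine ⟨c, ⟨y, x⟩, fun i => ?_, fun i => ?_⟩
  · calc c i ∣ ∏ p ∈ U with p ∣ k, p ^ 2 :=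
          prod_dvd_prod_of_dvd _ _ fun p _ => pow_dvd_pow p (by lia)
      _ = (∏ p ∈ U with p ∣ k, p) ^ 2 := prod_pow _ _ _
      _ ∣ k ^ 2 := pow_dvd_pow_of_dvd (prod_primes_dvd k
          (fun p hp => (hU p (mem_filter.1 hp).1).prime) fun p hp => (mem_filter.1 hp).2) 2
  · calc a i = ∏ p ∈ U, p ^ (a i).factorization p := by
          have hsub : (a i).factorization.support ⊆ U := Nat.primeFactors_mono
            (dvd_prod_of_mem a (mem_univ i)) (prod_ne_zero_iff.2 fun j _ => ha j)
          rw [← Finsupp.prod_of_support_subset _ hsub _ fun p _ => pow_zero p,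
            Nat.prod_factorization_pow_eq_self (ha i)]
      _ = x i ^ 3 * ∏ p ∈ U, p ^ (cubeResidue a p i : ℕ) := by
          rw [← prod_pow, ← prod_mul_distrib]
          refine prod_congr rfl fun p _ => ?_
          rw [← pow_mul, ← pow_add, cubeResidue, Fin.val_ofNat, Nat.div_add_mod']
      _ = x i ^ 3 * (c i * ∏ p ∈ U with ¬ p ∣ k, p ^ (cubeResidue a p i : ℕ)) := by
          rw [prod_filter_mul_prod_filter_not]
      _ = x i ^ 3 * (c i * weightMonomial permWeight y i) := by
          rw [prod_pow_eq_weightMonomial fun p hp => ?_]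
          · simp only [y, filter_filter]
          · obtain ⟨hpU, hpk⟩ := mem_filter.1 hp
            exact cubeResidue_eq_zero_or_perm ha hgcd hr (hU p hpU) hpk
      _ = c i * monomialVector permWeight 3 ⟨y, x⟩ i := by rw [monomialVector]; ring

end CubeResidue

section UpperBound

lemma mem_parameterBox_of_dvd {ι κ : Type*} [Fintype ι] [Fintype κ] [DecidableEq ι]
    [DecidableEq κ] {n : ℕ} (hn : n ≠ 0) {m : κ → ι → ℕ} (hm₀ : ∀ k, m k ≠ 0)
    {t : (_ : κ → ℕ) × (ι → ℕ)} {a : ι → ℕ} {B : ℝ} (hB : 0 ≤ B)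
    (ha : ∀ i, 0 < a i ∧ (a i : ℝ) ≤ B) (hta : ∀ i, monomialVector m n t i ∣ a i) :
    t ∈ parameterBox m n (coprimeUpTo 1 B) B := by
  have hdvd : ∀ {d} i, d ∣ monomialVector m n t i → 0 < d ∧ (d : ℝ) ≤ B := fun i hd =>
    have hda := hd.trans (hta i)
    ⟨Nat.pos_of_dvd_of_pos hda (ha i).1,
      (Nat.cast_le.2 (Nat.le_of_dvd (ha i).1 hda)).trans (ha i).2⟩
  refine (mem_parameterBox hn (divisorClosed_coprimeUpTo 1 B).zero_notMem hB).2
    ⟨fun k => ?_, fun i => ⟨?_, (hdvd i dvd_rfl).2⟩⟩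
  · obtain ⟨i, hi⟩ := Function.ne_iff.1 (hm₀ k)
    have hy := hdvd i (d := t.1 k) (((dvd_pow_self _ hi).trans
      (dvd_prod_of_mem (fun k => t.1 k ^ m k i) (mem_univ k))).mul_left _)
    simp [coprimeUpTo, hy.1, Nat.le_floor hy.2]
  · exact (hdvd i ((dvd_pow_self _ hn).mul_right _)).1

lemma cubeClassTriples_subset_image₂ {k : ℕ} (hk : 0 < k) {B : ℝ} (hB : 0 ≤ B) :
    cubeClassTriples k B ⊆ image₂ (fun c t => c * monomialVector permWeight 3 t)
      (Fintype.piFinset fun _ => (k ^ 2).divisors)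
      (parameterBox permWeight 3 (coprimeUpTo 1 B) B) := by
  intro a ha
  obtain ⟨hbound, hgcd, r, hr⟩ := (mem_cubeClassTriples hB).1 ha
  obtain ⟨c, t, hc, hact⟩ := exists_eq_mul_monomialVector (fun i => (hbound i).1.ne') hgcd hr
  exact mem_image₂.2 ⟨c, by simp [hc, hk.ne'], t, mem_parameterBox_of_dvd three_ne_zero
    permWeight_ne_zero hB hbound fun i => Dvd.intro_left _ (hact i).symm, (funext hact).symm⟩

lemma card_cubeClassTriples_le {k : ℕ} (hk : 0 < k) {B : ℝ} (hB : 1 ≤ B) :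
    (#(cubeClassTriples k B) : ℝ) ≤ #(k ^ 2).divisors ^ 3 * (B * (1 + Real.log B) ^ 6) := by
  have hB₀ : 0 ≤ B := zero_le_one.trans hB
  have hbox := card_parameterBox_le three_ne_zero sum_permWeight (divisorClosed_coprimeUpTo 1 B) hB₀
  rw [Fintype.card_fin, Real.rpow_inv_natCast_pow hB₀ three_ne_zero, Fintype.card_perm,
    Fintype.card_fin] at hbox
  calc (#(cubeClassTriples k B) : ℝ)
      ≤ #(k ^ 2).divisors ^ 3 * #(parameterBox permWeight 3 (coprimeUpTo 1 B) B) := by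
        have hcard := (card_le_card (cubeClassTriples_subset_image₂ hk hB₀)).trans
          (card_image₂_le _ _ _)
        rw [Fintype.card_piFinset_const] at hcard
        exact_mod_cast hcard
    _ ≤ #(k ^ 2).divisors ^ 3 * (B * reciprocalSum (coprimeUpTo 1 B) ^ 6) := by
        gcongr
        exact hbox
    _ ≤ #(k ^ 2).divisors ^ 3 * (B * (1 + Real.log B) ^ 6) := by
        gcongr
        · exact reciprocalSum_nonneg _
        · exact reciprocalSum_coprimeUpTo_le 1 hB

lemma isBigO_card_cubeClassTriples {k : ℕ} (hk : 0 < k) :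
    (fun B : ℝ => (#(cubeClassTriples k B) : ℝ)) =O[atTop] fun B => B * Real.log B ^ 6 := by
  have hlog : (fun B => 1 + Real.log B) =O[atTop] Real.log :=
    (Real.isLittleO_const_log_atTop.isBigO).add (isBigO_refl _ _)
  refine .trans (.of_bound (#(k ^ 2).divisors ^ 3) ?_) ((isBigO_refl _ _).mul (hlog.pow 6))
  filter_upwards [eventually_ge_atTop 1] with B hB
  rw [Real.norm_natCast, Real.norm_of_nonneg (by positivity [Real.log_nonneg hB])]
  exact card_cubeClassTriples_le hk hB

end UpperBound

section LowerBound

/-- The triple parametrised by `t`, with `k` times a cube as product. -/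
def twistedTriple (k : ℕ) (t : (_ : Equiv.Perm (Fin 3) → ℕ) × (Fin 3 → ℕ)) : Fin 3 → ℕ :=
  Pi.mulSingle 0 k * monomialVector permWeight 3 t

lemma prod_twistedTriple (k : ℕ) (t : (_ : Equiv.Perm (Fin 3) → ℕ) × (Fin 3 → ℕ)) :
    ∏ i, twistedTriple k t i = k * ((∏ i, t.2 i) * ∏ σ, t.1 σ) ^ 3 := by
  simp only [twistedTriple, Pi.mul_apply, prod_mul_distrib, Fintype.prod_pi_mulSingle',
    prod_monomialVector _ sum_permWeight]

lemma div_gcd_mem_cubeClassTriples {q r : ℚ} {a : Fin 3 → ℕ} {B : ℝ}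
    (ha : ∀ i, 0 < a i ∧ (a i : ℝ) ≤ B) (hr : ∏ i, (a i : ℚ) = q * r ^ 3) :
    (fun i => a i / univ.gcd a) ∈ cubeClassTriples q B := by
  have hgcd : 0 < univ.gcd a := Nat.pos_of_ne_zero fun h =>
    (ha 0).1.ne' (gcd_eq_zero_iff.1 h 0 (mem_univ 0))
  refine (mem_cubeClassTriples ((Nat.cast_nonneg _).trans (ha 0).2)).2
    ⟨fun i => ⟨Nat.div_pos (Nat.le_of_dvd (ha i).1 (gcd_dvd (mem_univ i))) hgcd,
      (Nat.cast_le.2 (Nat.div_le_self _ _)).trans (ha i).2⟩,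
      gcd_div_eq_one (mem_univ 0) (ha 0).1.ne', r / univ.gcd a, ?_⟩
  calc ∏ i, ((a i / univ.gcd a : ℕ) : ℚ) = ∏ i, (a i : ℚ) / univ.gcd a :=
        prod_congr rfl fun i hi => Nat.cast_div (gcd_dvd hi) (by exact_mod_cast hgcd.ne')
    _ = q * (r / univ.gcd a) ^ 3 := by
        rw [prod_div_distrib, hr, prod_const, card_univ, Fintype.card_fin, div_pow, mul_div_assoc]

lemma mulSingle_pos_and_le {α : Type*} [DecidableEq α] {k : ℕ} (hk : 0 < k) (i j : α) :
    0 < (Pi.mulSingle i k : α → ℕ) j ∧ (Pi.mulSingle i k : α → ℕ) j ≤ k := by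
  rw [Pi.mulSingle_apply]
  split_ifs <;> lia

lemma IsSieved.gcd_twistedTriple_le {k P : ℕ} (hk : 0 < k) (hkP : k ≤ P)
    {t : (_ : Equiv.Perm (Fin 3) → ℕ) × (Fin 3 → ℕ)} (ht : IsSieved P t) :
    univ.gcd (twistedTriple k t) ≤ P ^ 3 :=
  ht.le_pow_of_dvd exists_permWeight_eq_zero (fun i => (mulSingle_pos_and_le hk 0 i).1)
    (fun i => (mulSingle_pos_and_le hk 0 i).2.trans hkP) (i := 1) (j := 2) (by decide) rfl rfl
    fun i => gcd_dvd (mem_univ i)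

lemma IsSieved.eq_of_twistedTriple_eq {k P : ℕ} (hk : 0 < k)
    {t t' : (_ : Equiv.Perm (Fin 3) → ℕ) × (Fin 3 → ℕ)} (ht : IsSieved P t) (ht' : IsSieved P t')
    (h : twistedTriple k t = twistedTriple k t') : t = t' :=
  ht.eq_of_monomialVector_eq three_ne_zero permWeight_ne_zero (fun σ i => (σ i).isLt)
    permWeight_injective ht' (funext fun i =>
      Nat.eq_of_mul_eq_mul_left (mulSingle_pos_and_le hk 0 i).1 (congr_fun h i))

lemma IsSieved.twistedTriple_pos_and_le {k P : ℕ} (hk : 0 < k) {B : ℝ}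
    {t : (_ : Equiv.Perm (Fin 3) → ℕ) × (Fin 3 → ℕ)} (ht : IsSieved P t)
    (htB : ∀ i, (monomialVector permWeight 3 t i : ℝ) ≤ B / k) (i : Fin 3) :
    0 < twistedTriple k t i ∧ (twistedTriple k t i : ℝ) ≤ B := by
  obtain ⟨hc₀, hck⟩ := mulSingle_pos_and_le hk (0 : Fin 3) i
  refine ⟨mul_pos hc₀ (ht.monomialVector_pos i), ?_⟩
  calc (twistedTriple k t i : ℝ)
      = (Pi.mulSingle 0 k : Fin 3 → ℕ) i * monomialVector permWeight 3 t i := Nat.cast_mul _ _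
    _ ≤ k * (B / k) := by gcongr; exact htB i
    _ = B := by field_simp

open scoped Classical in
lemma card_filter_isSieved_le {k P : ℕ} (hk : 0 < k) (hkP : k ≤ P) {S : Finset ℕ} (hS : 0 ∉ S)
    {B : ℝ} (hB : 0 ≤ B) :
    #{t ∈ parameterBox permWeight 3 S (B / k) | IsSieved P t} ≤
      #(cubeClassTriples k B) * P ^ 3 := by
  have hbound : ∀ t ∈ parameterBox permWeight 3 S (B / k), IsSieved P t →
      ∀ i, 0 < twistedTriple k t i ∧ (twistedTriple k t i : ℝ) ≤ B := fun t ht hsieved =>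
    hsieved.twistedTriple_pos_and_le hk fun i =>
      (((mem_parameterBox three_ne_zero hS (by positivity)).1 ht).2 i).2
  rw [← Nat.sub_zero (P ^ 3), ← Nat.card_Ioc, ← card_product]
  refine card_le_card_of_injOn
    (fun t => (fun i => twistedTriple k t i / univ.gcd (twistedTriple k t),
      univ.gcd (twistedTriple k t))) (fun t ht => ?_) fun t ht t' ht' h => ?_
  · obtain ⟨ht, hsieved⟩ := mem_filter.1 ht
    have htriple := div_gcd_mem_cubeClassTriples (hbound t ht hsieved)
      (q := k) (r := ((∏ i, t.2 i) * ∏ σ, t.1 σ : ℕ)) (by exact_mod_cast prod_twistedTriple k t)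
    have hgcd₀ : 0 < univ.gcd (twistedTriple k t) := Nat.pos_of_dvd_of_pos
      (gcd_dvd (mem_univ 0)) (hbound t ht hsieved 0).1
    exact mem_product.2 ⟨htriple, mem_Ioc.2 ⟨hgcd₀, hsieved.gcd_twistedTriple_le hk hkP⟩⟩
  · obtain ⟨hquot, hgcd⟩ := Prod.ext_iff.1 h
    refine (mem_filter.1 ht).2.eq_of_twistedTriple_eq hk (mem_filter.1 ht').2 (funext fun i => ?_)
    calc twistedTriple k t i
        = twistedTriple k t i / univ.gcd (twistedTriple k t) * univ.gcd (twistedTriple k t) :=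
          (Nat.div_mul_cancel (gcd_dvd (mem_univ i))).symm
      _ = twistedTriple k t' i / univ.gcd (twistedTriple k t') * univ.gcd (twistedTriple k t') :=
          congr_arg₂ (· * ·) (congr_fun hquot i) hgcd
      _ = twistedTriple k t' i := Nat.div_mul_cancel (gcd_dvd (mem_univ i))

lemma weightMonomial_permWeight_le {Y : ℝ} {y : Equiv.Perm (Fin 3) → ℕ} (hy : ∀ σ, (y σ : ℝ) ≤ Y)
    (i : Fin 3) : (weightMonomial permWeight y i : ℝ) ≤ Y ^ 6 := by
  rw [← sum_permWeight_apply i, ← prod_pow_eq_pow_sum, weightMonomial, Nat.cast_prod]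
  gcongr with σ
  exact_mod_cast pow_le_pow_left₀ (by positivity) (hy σ) _

-- `1296 = 9 ^ 2 * 2 ^ 4` makes the sieve discard at most half of the box.
open scoped Classical in
lemma le_card_filter_isSieved {P : ℕ} (hP : 1296 ≤ P) {M : ℝ} (hM : 0 ≤ M) :
    M * reciprocalSum (coprimeUpTo P ! (M ^ (6 : ℝ)⁻¹)) ^ 6 / 16 ≤
      #{t ∈ parameterBox permWeight 3 (coprimeUpTo P ! (M ^ (6 : ℝ)⁻¹)) M | IsSieved P t} := by
  set S := coprimeUpTo P ! (M ^ (6 : ℝ)⁻¹)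
  have hS : DivisorClosed S := divisorClosed_coprimeUpTo _ _
  have hmono : ∀ y : Equiv.Perm (Fin 3) → ℕ, (∀ σ, y σ ∈ S) →
      ∀ i, (weightMonomial permWeight y i : ℝ) ≤ M := fun y hy i => by
    have hM6 : (M ^ (6 : ℝ)⁻¹) ^ 6 = M := Real.rpow_inv_natCast_pow hM (by norm_num)
    refine (weightMonomial_permWeight_le (fun σ => ?_) i).trans_eq hM6
    exact (Nat.le_floor_iff (by positivity)).1 (mem_Ioc.1 (mem_filter.1 (hy σ)).1).2
  have hsieve := le_card_filter_almostCoprime three_ne_zero sum_permWeight hS hmono hM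
    (by lia) (P := P) (by simpa [Fintype.card_perm, Nat.factorial] using hP)
  rw [Fintype.card_fin, Real.rpow_inv_natCast_pow hM three_ne_zero, Fintype.card_perm,
    Fintype.card_fin] at hsieve
  refine le_trans (le_of_eq ?_) (hsieve.trans (Nat.cast_le.2 (card_le_card fun t ht => ?_)))
  · norm_num
  · obtain ⟨ht, hcop⟩ := mem_filter.1 ht
    refine mem_filter.2 ⟨ht, pos_of_mem_parameterBox three_ne_zero hS.zero_notMem hM ht,
      fun σ => ?_, hcop⟩
    exact (mem_filter.1 (((mem_parameterBox three_ne_zero hS.zero_notMem hM).1 ht).1 σ)).2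

lemma le_card_cubeClassTriples {k P : ℕ} (hk : 0 < k) (hkP : k ≤ P) (hP : 1296 ≤ P) {B : ℝ}
    (hB : 0 ≤ B) :
    B / k * reciprocalSum (coprimeUpTo P ! ((B / k) ^ (6 : ℝ)⁻¹)) ^ 6 / 16 ≤
      #(cubeClassTriples k B) * P ^ 3 := by
  refine (le_card_filter_isSieved hP (by positivity)).trans ?_
  exact_mod_cast card_filter_isSieved_le hk hkP (divisorClosed_coprimeUpTo _ _).zero_notMem hB

lemma isBigO_log_reciprocalSum {Q k : ℕ} (hQ : 0 < Q) (hk : 0 < k) :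
    Real.log =O[atTop]
      fun B : ℝ => reciprocalSum (coprimeUpTo Q ((B / k) ^ (6 : ℝ)⁻¹)) := by
  refine .of_bound (12 * Q) ?_
  filter_upwards [eventually_gt_atTop 1,
    Real.tendsto_log_atTop.eventually_ge_atTop (2 * Real.log k + 12 * Real.log Q)] with B hB hlog
  have hk' : (k : ℝ) ≠ 0 := by positivity
  have hQ' : (Q : ℝ) ≠ 0 := by positivity
  have hmain := log_div_le_reciprocalSum_coprimeUpTo hQ (Y := (B / k) ^ (6 : ℝ)⁻¹) (by positivity)
  rw [Real.log_div (by positivity) hQ', Real.log_rpow (by positivity),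
    Real.log_div (by positivity) hk', div_le_iff₀ (by positivity)] at hmain
  rw [Real.norm_of_nonneg (Real.log_nonneg hB.le), Real.norm_of_nonneg (reciprocalSum_nonneg _)]
  linarith

lemma isBigO_mul_log_pow_card_cubeClassTriples {k : ℕ} (hk : 0 < k) :
    (fun B => B * Real.log B ^ 6) =O[atTop] fun B : ℝ => (#(cubeClassTriples k B) : ℝ) := by
  set P := max k 1296
  refine ((isBigO_refl (fun B : ℝ => B) atTop).mul
    ((isBigO_log_reciprocalSum P.factorial_pos hk).pow 6)).trans (.of_bound (16 * k * P ^ 3) ?_)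
  filter_upwards [eventually_ge_atTop 0] with B hB
  have hmain := le_card_cubeClassTriples hk (le_max_left _ _) (le_max_right _ _) hB (P := P)
  rw [Real.norm_natCast, Real.norm_of_nonneg
    (mul_nonneg hB (pow_nonneg (reciprocalSum_nonneg _) 6))]
  set H := reciprocalSum (coprimeUpTo P ! ((B / k) ^ (6 : ℝ)⁻¹))
  have hk' : (k : ℝ) ≠ 0 := by positivity
  calc B * H ^ 6
      = (16 * k : ℝ) * (B / k * H ^ 6 / 16) := by field_simp
    _ ≤ (16 * k : ℝ) * (#(cubeClassTriples k B) * P ^ 3) := by gcongr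
    _ = (16 * k * P ^ 3 : ℝ) * #(cubeClassTriples k B) := by ring

end LowerBound

theorem isTheta_card_cubeClassTriples {q : ℚ} (hq : q ≠ 0) :
    (fun B : ℝ => (#(cubeClassTriples q B) : ℝ)) =Θ[atTop] fun B => B * Real.log B ^ 6 := by
  obtain ⟨k, hk, s, hs, rfl⟩ := exists_natCast_mul_cube hq
  simp only [cubeClassTriples_mul_cube _ hs]
  exact ⟨isBigO_card_cubeClassTriples hk, isBigO_mul_log_pow_card_cubeClassTriples hk⟩

section Quadruples

/-- The quadruples `(a₀, a₁, a₂, a₃)` of nonzero integers of absolute value at most `B`, with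
`gcd(a₁, a₂, a₃) = 1` and `a₁ * a₂ * a₃` equal to `q` times a rational cube. -/
def cubeClassQuadruples (q : ℚ) (B : ℝ) : Set (ℤ × ℤ × ℤ × ℤ) :=
  {t | t.1 ≠ 0 ∧ t.2.1 ≠ 0 ∧ t.2.2.1 ≠ 0 ∧ t.2.2.2 ≠ 0 ∧
    |(t.1 : ℝ)| ≤ B ∧ |(t.2.1 : ℝ)| ≤ B ∧ |(t.2.2.1 : ℝ)| ≤ B ∧ |(t.2.2.2 : ℝ)| ≤ B ∧
    Int.gcd (Int.gcd t.2.1 t.2.2.1) t.2.2.2 = 1 ∧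
    ∃ r : ℚ, ((t.2.1 : ℚ) * (t.2.2.1 : ℚ) * (t.2.2.2 : ℚ)) = q * r ^ 3}

/-- The absolute values of the entries of a quadruple, with the last three packed into a vector. -/
def absQuadruple (t : ℤ × ℤ × ℤ × ℤ) : ℕ × (Fin 3 → ℕ) :=
  (t.1.natAbs, ![t.2.1.natAbs, t.2.2.1.natAbs, t.2.2.2.natAbs])

lemma exists_abs_eq_mul_cube {x q : ℚ} :
    (∃ r : ℚ, |x| = q * r ^ 3) ↔ ∃ r : ℚ, x = q * r ^ 3 := by
  rcases abs_choice x with h | h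
  · rw [h]
  · rw [h, (neg_surjective (G := ℚ)).exists]
    simp only [Odd.neg_pow (by decide : Odd 3), mul_neg, neg_inj]

lemma mem_cubeClassQuadruples {q : ℚ} {B : ℝ} (hB : 0 ≤ B) {t : ℤ × ℤ × ℤ × ℤ} :
    t ∈ cubeClassQuadruples q B ↔
      absQuadruple t ∈ Ioc 0 ⌊B⌋₊ ×ˢ cubeClassTriples q B := by
  have hgcd : univ.gcd (absQuadruple t).2 = Int.gcd (Int.gcd t.2.1 t.2.2.1) t.2.2.2 := by
    simp [Fin.univ_succ, absQuadruple, Int.gcd, Nat.gcd_assoc, gcd_eq_nat_gcd]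
  have hprod : ∏ i, ((absQuadruple t).2 i : ℚ) = |(t.2.1 : ℚ) * t.2.2.1 * t.2.2.2| := by
    simp [Fin.prod_univ_three, absQuadruple, abs_mul]
  rw [mem_product, mem_cubeClassTriples hB, hgcd, hprod, exists_abs_eq_mul_cube]
  simp only [cubeClassQuadruples, ne_eq, Set.mem_ofPred_eq, absQuadruple, mem_Ioc,
    Int.natAbs_pos, Nat.le_floor_iff hB, Nat.cast_natAbs, Int.cast_abs, Fin.forall_fin_succ,
    Fin.isValue, Matrix.cons_val_zero, Matrix.cons_val_succ, Matrix.cons_val_fin_one,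
    forall_const]
  tauto

lemma absQuadruple_natCast (f : ℕ × (Fin 3 → ℕ)) :
    absQuadruple (f.1, f.2 0, f.2 1, f.2 2) = f :=
  Prod.ext rfl (funext fun i => by fin_cases i <;> rfl)

lemma absQuadruple_preimage_singleton_subset (f : ℕ × (Fin 3 → ℕ)) :
    absQuadruple ⁻¹' {f} ⊆ (({(f.1 : ℤ), -(f.1 : ℤ)} : Finset ℤ) ×ˢ
      ({(f.2 0 : ℤ), -(f.2 0 : ℤ)} : Finset ℤ) ×ˢ ({(f.2 1 : ℤ), -(f.2 1 : ℤ)} : Finset ℤ) ×ˢ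
        ({(f.2 2 : ℤ), -(f.2 2 : ℤ)} : Finset ℤ) : Finset (ℤ × ℤ × ℤ × ℤ)) := by
  rintro t rfl
  simp only [coe_product, Set.mem_prod, mem_coe, mem_insert, mem_singleton]
  exact ⟨Int.natAbs_eq _, Int.natAbs_eq _, Int.natAbs_eq _, Int.natAbs_eq _⟩

lemma finite_absQuadruple_preimage_singleton (f : ℕ × (Fin 3 → ℕ)) :
    (absQuadruple ⁻¹' {f}).Finite :=
  (finite_toSet _).subset (absQuadruple_preimage_singleton_subset f)

lemma ncard_absQuadruple_preimage_singleton_le (f : ℕ × (Fin 3 → ℕ)) :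
    (absQuadruple ⁻¹' {f}).ncard ≤ 16 := by
  refine (Set.ncard_le_ncard (absQuadruple_preimage_singleton_subset f) (finite_toSet _)).trans ?_
  rw [Set.ncard_coe_finset, card_product, card_product, card_product]
  exact Nat.mul_le_mul card_le_two
    (Nat.mul_le_mul card_le_two (Nat.mul_le_mul card_le_two card_le_two))

lemma finite_preimage_absQuadruple (F : Finset (ℕ × (Fin 3 → ℕ))) :
    (absQuadruple ⁻¹' F).Finite :=
  F.finite_toSet.preimage' fun f _ => finite_absQuadruple_preimage_singleton f

lemma card_le_ncard_preimage_absQuadruple (F : Finset (ℕ × (Fin 3 → ℕ))) :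
    #F ≤ (absQuadruple ⁻¹' F).ncard := by
  calc #F = (absQuadruple '' (absQuadruple ⁻¹' F)).ncard := by
        rw [Set.image_preimage_eq _ fun f => ⟨_, absQuadruple_natCast f⟩, Set.ncard_coe_finset]
    _ ≤ (absQuadruple ⁻¹' F).ncard := Set.ncard_image_le (finite_preimage_absQuadruple F)

lemma ncard_preimage_absQuadruple_le (F : Finset (ℕ × (Fin 3 → ℕ))) :
    (absQuadruple ⁻¹' F).ncard ≤ 16 * #F := by
  calc (absQuadruple ⁻¹' F).ncard = (⋃ f ∈ F, absQuadruple ⁻¹' {f}).ncard := by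
        congr 1
        ext
        simp
    _ ≤ ∑ f ∈ F, (absQuadruple ⁻¹' {f}).ncard := set_ncard_biUnion_le _ _
    _ ≤ #F • 16 := sum_le_card_nsmul _ _ _ fun f _ => ncard_absQuadruple_preimage_singleton_le f
    _ = 16 * #F := by rw [smul_eq_mul, mul_comm]

lemma cubeClassQuadruples_eq_preimage {q : ℚ} {B : ℝ} (hB : 0 ≤ B) :
    cubeClassQuadruples q B =
      absQuadruple ⁻¹' (Ioc 0 ⌊B⌋₊ ×ˢ cubeClassTriples q B : Finset (ℕ × (Fin 3 → ℕ))) :=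
  Set.ext fun _ => mem_cubeClassQuadruples hB

theorem isTheta_ncard_cubeClassQuadruples {q : ℚ} (hq : q ≠ 0) :
    (fun B => ((cubeClassQuadruples q B).ncard : ℝ)) =Θ[atTop]
      fun B => B ^ 2 * Real.log B ^ 6 := by
  have hcount : (fun B => ((cubeClassQuadruples q B).ncard : ℝ)) =Θ[atTop]
      fun B => (⌊B⌋₊ : ℝ) * #(cubeClassTriples q B) := by
    have hcard (B : ℝ) : #(Ioc 0 ⌊B⌋₊ ×ˢ cubeClassTriples q B) =
        ⌊B⌋₊ * #(cubeClassTriples q B) := by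
      rw [card_product, Nat.card_Ioc, Nat.sub_zero]
    constructor
    · refine .of_bound 16 ?_
      filter_upwards [eventually_ge_atTop 0] with B hB
      rw [cubeClassQuadruples_eq_preimage hB, ← Nat.cast_mul, Real.norm_natCast,
        Real.norm_natCast, ← hcard]
      exact_mod_cast ncard_preimage_absQuadruple_le _
    · refine .of_bound 1 ?_
      filter_upwards [eventually_ge_atTop 0] with B hB
      rw [cubeClassQuadruples_eq_preimage hB, ← Nat.cast_mul, Real.norm_natCast,
        Real.norm_natCast, ← hcard, one_mul]
      exact_mod_cast card_le_ncard_preimage_absQuadruple _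
  refine hcount.trans ((isEquivalent_nat_floor.isTheta.mul
    (isTheta_card_cubeClassTriples hq)).trans_eventuallyEq (.of_eq ?_))
  ext B
  ring

end Quadruples

theorem stmt_6_general {q : ℚ} (hq : q ≠ 0) :
    ∃ c₁ c₂ B₀ : ℝ, 0 < c₁ ∧ 0 < c₂ ∧ 3 ≤ B₀ ∧ ∀ B : ℝ, B₀ ≤ B →
      c₁ * B ^ 2 * Real.log B ^ 6 ≤ ((cubeClassQuadruples q B).ncard : ℝ) ∧
      ((cubeClassQuadruples q B).ncard : ℝ) ≤ c₂ * B ^ 2 * Real.log B ^ 6 := by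
  obtain ⟨hupper, hlower⟩ := isTheta_ncard_cubeClassQuadruples hq
  obtain ⟨c₂, hc₂, hupper⟩ := hupper.exists_pos
  obtain ⟨c₁, hc₁, hlower⟩ := hlower.exists_pos
  obtain ⟨B₀, hB₀⟩ := eventually_atTop.1 (hupper.bound.and hlower.bound)
  refine ⟨c₁⁻¹, c₂, max 3 B₀, inv_pos.2 hc₁, hc₂, le_max_left _ _, fun B hB => ?_⟩
  obtain ⟨hle, hge⟩ := hB₀ B ((le_max_right _ _).trans hB)
  rw [Real.norm_natCast, Real.norm_of_nonneg (by positivity)] at hle hge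
  simp only [mul_assoc]
  exact ⟨(inv_mul_le_iff₀ hc₁).2 hge, hle⟩

/-- The number of quadruples `(a₀,a₁,a₂,a₃)` of nonzero integers with
`|aᵢ| ≤ B`, `gcd(a₁,a₂,a₃) = 1` and `a₁a₂a₃ = 2r³` for some rational `r` has exact
order of magnitude `B²·(log B)⁶`. -/
theorem stmt_6 :
    ∃ c₁ c₂ B₀ : ℝ, 0 < c₁ ∧ 0 < c₂ ∧ 3 ≤ B₀ ∧ ∀ B : ℝ, B₀ ≤ B →
      c₁ * B ^ 2 * Real.log B ^ 6 ≤
        ({t : ℤ × ℤ × ℤ × ℤ | t.1 ≠ 0 ∧ t.2.1 ≠ 0 ∧ t.2.2.1 ≠ 0 ∧ t.2.2.2 ≠ 0 ∧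
          |(t.1 : ℝ)| ≤ B ∧ |(t.2.1 : ℝ)| ≤ B ∧ |(t.2.2.1 : ℝ)| ≤ B ∧ |(t.2.2.2 : ℝ)| ≤ B ∧
          Int.gcd (Int.gcd t.2.1 t.2.2.1) t.2.2.2 = 1 ∧
          ∃ r : ℚ, ((t.2.1 : ℚ) * (t.2.2.1 : ℚ) * (t.2.2.2 : ℚ)) = 2 * r ^ 3}.ncard : ℝ) ∧
      ({t : ℤ × ℤ × ℤ × ℤ | t.1 ≠ 0 ∧ t.2.1 ≠ 0 ∧ t.2.2.1 ≠ 0 ∧ t.2.2.2 ≠ 0 ∧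
          |(t.1 : ℝ)| ≤ B ∧ |(t.2.1 : ℝ)| ≤ B ∧ |(t.2.2.1 : ℝ)| ≤ B ∧ |(t.2.2.2 : ℝ)| ≤ B ∧
          Int.gcd (Int.gcd t.2.1 t.2.2.1) t.2.2.2 = 1 ∧
          ∃ r : ℚ, ((t.2.1 : ℚ) * (t.2.2.1 : ℚ) * (t.2.2.2 : ℚ)) = 2 * r ^ 3}.ncard : ℝ) ≤
        c₂ * B ^ 2 * Real.log B ^ 6 :=
  stmt_6_general two_ne_zero
end
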